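/- arXiv:2305.04428 — 8 statements merged into one kernel-verified Lean document; each statement's English description precedes it below -/
import Mathlib

section
/- Real Grothendieck inequality with Krivine's constant: for all m, n, d ∈ ℕ, every real m×n matrix A, and all vectors u_1, …, u_m, v_1, …, v_n in the Euclidean space ℝ^d with ‖u_i‖ = 1 and ‖v_j‖ = 1 for all i, j, one has |∑_{i=1}^m ∑_{j=1}^n A i j · ⟨u_i, v_j⟩| ≤ (π / (2 · log(1 + √2))) · ‖A‖_{∞,1}; in particular the real Grothendieck constant is at most π/(2 log(1+√2)) ≈ 1.782. -/
open scoped BigOperators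
/-- The `ℓ∞ → ℓ₁` operator norm of a real `m × n` matrix:
`sup { |∑ i j, A i j * p i * q j| : |p i| ≤ 1, |q j| ≤ 1 }`. -/
noncomputable def normInftyOne {m n : ℕ} (A : Matrix (Fin m) (Fin n) ℝ) : ℝ :=
  sSup { x : ℝ | ∃ p : Fin m → ℝ, ∃ q : Fin n → ℝ,
    (∀ i, |p i| ≤ 1) ∧ (∀ j, |q j| ≤ 1) ∧ x = |∑ i, ∑ j, A i j * p i * q j| }

open MeasureTheory ProbabilityTheory Matrix in
theorem gram_psd {m n d : ℕ} (c : ℝ) (hc : 0 ≤ c) 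
    (u : Fin m → EuclideanSpace ℝ (Fin d)) (v : Fin n → EuclideanSpace ℝ (Fin d)) :
    ∃ G : Matrix (Fin m ⊕ Fin n) (Fin m ⊕ Fin n) ℝ, G.PosSemidef ∧
      (∀ i, G (.inl i) (.inl i) = Real.sinh (c * ‖u i‖ ^ 2)) ∧
      (∀ j, G (.inr j) (.inr j) = Real.sinh (c * ‖v j‖ ^ 2)) ∧
      (∀ i j, G (.inl i) (.inr j) = Real.sin (c * inner ℝ (u i) (v j))) := by
  let w : Fin m ⊕ Fin n → EuclideanSpace ℝ (Fin d) := Sum.elim u v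
  let e : Fin m ⊕ Fin n → ℝ := Sum.elim (fun _ => 1) (fun _ => -1)
  let W : Matrix (Fin m ⊕ Fin n) (Fin m ⊕ Fin n) ℝ := Matrix.of fun x y => inner ℝ (w x) (w y)
  have hW : W.PosSemidef := by
    have : W = (Matrix.of fun x k => w x k) * (Matrix.of fun x k => w x k)ᴴ := by
      ext x y
      simp [W, Matrix.mul_apply, PiLp.inner_apply, mul_comm]
    rw [this]
    exact posSemidef_self_mul_conjTranspose _
  have had : ∀ A B : Matrix (Fin m ⊕ Fin n) (Fin m ⊕ Fin n) ℝ, A.PosSemidef → B.PosSemidef →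
      (A ⊙ B).PosSemidef := fun _ _ h k => h.hadamard k
  have hpow : ∀ k : ℕ, (Matrix.of fun x y => W x y ^ k).PosSemidef := by
    intro k
    induction k with
    | zero =>
      have h1 := posSemidef_vecMulVec_self_star (R := ℝ) (fun _ : Fin m ⊕ Fin n => (1:ℝ))
      convert h1 using 1
      ext x y; simp [vecMulVec_apply]
    | succ k ih =>
      have h2 := had _ _ ih hW
      have h3 : (Matrix.of fun x y => W x y ^ (k+1)) = (Matrix.of fun x y => W x y ^ k) ⊙ W := by
        ext x y; simp [pow_succ]
      rw [h3]; exact h2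
  have hterm : ∀ k : ℕ, (Matrix.of fun x y => 
      (e x * e y) ^ k * ((c * W x y) ^ (2*k+1) / ((2*k+1).factorial : ℝ))).PosSemidef := by
    intro k
    have h1 := posSemidef_vecMulVec_self_star (R := ℝ) (fun x : Fin m ⊕ Fin n => e x ^ k)
    have h2 := (had _ _ h1 (hpow (2*k+1))).smul (show (0:ℝ) ≤ c ^ (2*k+1) / ((2*k+1).factorial : ℝ) by positivity)
    convert h2 using 1
    ext x y
    simp [vecMulVec_apply, mul_pow]
    ring
  have hsum : ∀ x y, HasSum (fun k : ℕ => (e x * e y) ^ k * ((c * W x y) ^ (2*k+1) / ((2*k+1).factorial : ℝ)))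
      (if e x * e y = 1 then Real.sinh (c * W x y) else Real.sin (c * W x y)) := by
    intro x y
    split_ifs with h
    · simpa [h] using Real.hasSum_sinh (c * W x y)
    · have h' : e x * e y = -1 := by
        rcases x with x | x <;> rcases y with y | y <;> simp [e] at h ⊢
      rw [h']
      simpa [mul_div_assoc] using Real.hasSum_sin (c * W x y)
  refine ⟨Matrix.of fun x y => if e x * e y = 1 then Real.sinh (c * W x y) else Real.sin (c * W x y), ?_, ?_, ?_, ?_⟩
  · refine PosSemidef.of_dotProduct_mulVec_nonneg ?_ ?_
    · ext x y
      have : W y x = W x y := by simp only [W, Matrix.of_apply]; exact real_inner_comm _ _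
      simp [this, mul_comm (e y)]
    · intro z
      have hs : HasSum (fun k : ℕ => ∑ x, ∑ y, z x * ((e x * e y) ^ k * ((c * W x y) ^ (2*k+1) / ((2*k+1).factorial : ℝ)) * z y))
         (∑ x, ∑ y, z x * ((if e x * e y = 1 then Real.sinh (c * W x y) else Real.sin (c * W x y)) * z y)) :=
        hasSum_sum fun x _ => hasSum_sum fun y _ => ((hsum x y).mul_right _).mul_left _
      have h0 := hs.nonneg (fun k => by
        have := (hterm k).dotProduct_mulVec_nonneg z
        simpa only [dotProduct, mulVec, Finset.mul_sum, star_trivial, Matrix.of_apply, Pi.zero_apply] using this)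
      simpa only [dotProduct, mulVec, Finset.mul_sum, star_trivial, Matrix.of_apply] using h0
  · intro i; simp [e, W, w]
  · intro i; simp [e, W, w]
  · intro i j; simp [e, W, w]; intro h; norm_num at h

section Aux
open MeasureTheory ProbabilityTheory Matrix

noncomputable def sg (x : ℝ) : ℝ := if 0 < x then 1 else -1

theorem measurable_sg : Measurable sg :=
  Measurable.ite measurableSet_Ioi measurable_const measurable_const

theorem abs_sg (x : ℝ) : |sg x| = 1 := by
  unfold sg; split_ifs <;> simp

theorem sg_mul (r x : ℝ) (hr : 0 < r) : sg (r * x) = sg x := by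
  simp [sg, hr]

theorem sg_pos {x : ℝ} (h : 0 < x) : sg x = 1 := by simp [sg, h]
theorem sg_neg {x : ℝ} (h : x < 0) : sg x = -1 := by simp [sg, h.le]

theorem const_piece (f : ℝ → ℝ) (a b k : ℝ) (hab : a ≤ b) (h : ∀ x ∈ Set.Ioo a b, f x = k) :
    IntervalIntegrable f volume a b ∧ ∫ x in a..b, f x = (b - a) * k := by
  have hc : Set.EqOn (fun _ => k) f (Set.Ioo a b) := fun x hx => (h x hx).symm
  constructor
  · rw [intervalIntegrable_iff_integrableOn_Ioo_of_le hab]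
    refine IntegrableOn.congr_fun (f := fun _ => k) ?_ hc measurableSet_Ioo
    exact integrableOn_const (by simp)
  · rw [intervalIntegral.integral_of_le hab, integral_Ioc_eq_integral_Ioo,
      ← setIntegral_congr_fun measurableSet_Ioo hc]
    simp [hab]

theorem angular (α : ℝ) (h0 : 0 ≤ α) (h1 : α ≤ Real.pi) :
    ∫ t in Set.Ioo (-Real.pi) Real.pi, sg (Real.cos t) * sg (Real.cos (t - α)) = 2 * Real.pi - 4 * α := by
  have hpi := Real.pi_pos
  set f : ℝ → ℝ := fun t => sg (Real.cos t) * sg (Real.cos (t - α)) with hf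
  have hper : Function.Periodic f (2 * Real.pi) := by
    intro t
    simp only [hf]
    rw [show t + 2 * Real.pi - α = (t - α) + 2 * Real.pi by ring]
    simp only [Real.cos_add_two_pi]
  rw [← integral_Ioc_eq_integral_Ioo, ← intervalIntegral.integral_of_le (by linarith)]
  have e1 : ∫ t in (-Real.pi)..Real.pi, f t = ∫ t in (-(Real.pi/2))..(-(Real.pi/2) + 2 * Real.pi), f t := by
    rw [← hper.intervalIntegral_add_eq (-Real.pi) (-(Real.pi/2))]
    congr 1; ring
  rw [e1]
  have cneg : ∀ x, Real.pi / 2 < x → x < Real.pi + Real.pi / 2 → Real.cos x < 0 := fun x a b =>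
    Real.cos_neg_of_pi_div_two_lt_of_lt a b
  have cneg' : ∀ x, -(Real.pi + Real.pi / 2) < x → x < -(Real.pi / 2) → Real.cos x < 0 := fun x a b => by
    rw [← Real.cos_neg]; exact cneg _ (by linarith) (by linarith)
  have cpos : ∀ x, -(Real.pi / 2) < x → x < Real.pi / 2 → 0 < Real.cos x := fun x a b =>
    Real.cos_pos_of_mem_Ioo ⟨a, b⟩
  obtain ⟨i1, j1⟩ := const_piece f (-(Real.pi/2)) (α - Real.pi/2) (-1) (by linarith) (by
    rintro x ⟨a, b⟩
    simp only [hf]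
    rw [sg_pos (cpos x a (by linarith)), sg_neg (cneg' _ (by linarith) (by linarith))]; norm_num)
  obtain ⟨i2, j2⟩ := const_piece f (α - Real.pi/2) (Real.pi/2) 1 (by linarith) (by
    rintro x ⟨a, b⟩
    simp only [hf]
    rw [sg_pos (cpos x (by linarith) (by linarith)), sg_pos (cpos _ (by linarith) (by linarith))]; norm_num)
  obtain ⟨i3, j3⟩ := const_piece f (Real.pi/2) (α + Real.pi/2) (-1) (by linarith) (by
    rintro x ⟨a, b⟩
    simp only [hf]
    rw [sg_neg (cneg x (by linarith) (by linarith)), sg_pos (cpos _ (by linarith) (by linarith))]; norm_num)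
  obtain ⟨i4, j4⟩ := const_piece f (α + Real.pi/2) (-(Real.pi/2) + 2 * Real.pi) 1 (by linarith) (by
    rintro x ⟨a, b⟩
    simp only [hf]
    rw [sg_neg (cneg x (by linarith) (by linarith)), sg_neg (cneg _ (by linarith) (by linarith))]; norm_num)
  rw [← intervalIntegral.integral_add_adjacent_intervals (i1.trans i2) (i3.trans i4),
    ← intervalIntegral.integral_add_adjacent_intervals i1 i2,
    ← intervalIntegral.integral_add_adjacent_intervals i3 i4, j1, j2, j3, j4]
  ring

theorem polar_gauss (F : ℝ × ℝ → ℝ) (h : ℝ → ℝ)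
    (hF : ∀ r > 0, ∀ t, F (r * Real.cos t, r * Real.sin t) = h t) :
    ∫ p, F p ∂((gaussianReal 0 1).prod (gaussianReal 0 1)) =
     (∫ r in Set.Ioi (0:ℝ), r * ((2 * Real.pi)⁻¹ * Real.exp (-r^2/2))) *
       ∫ t in Set.Ioo (-Real.pi) Real.pi, h t := by
  rw [gaussianReal_of_var_ne_zero 0 one_ne_zero, 
    prod_withDensity (measurable_gaussianPDF _ _) (measurable_gaussianPDF _ _),
    integral_withDensity_eq_integral_toReal_smul (by fun_prop)
      (ae_of_all _ fun _ => ENNReal.mul_lt_top gaussianPDF_lt_top gaussianPDF_lt_top),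
    ← setIntegral_prod_mul, ← Measure.volume_eq_prod, ← integral_comp_polarCoord_symm, polarCoord_target]
  refine setIntegral_congr_fun (measurableSet_Ioi.prod measurableSet_Ioo) ?_
  rintro ⟨r, t⟩ ⟨hr, -⟩
  have hr : 0 < r := hr
  simp only [polarCoord_symm_apply, hF r hr t, ENNReal.toReal_mul, toReal_gaussianPDF, smul_eq_mul, gaussianPDFReal_def]
  have h1 : Real.exp (-r^2/2) = Real.exp (-(r * Real.cos t)^2/2) * Real.exp (-(r * Real.sin t)^2/2) := by
    rw [← Real.exp_add]; congr 1
    nlinarith [Real.sin_sq_add_cos_sq t]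
  have h2 : (2 * Real.pi)⁻¹ = (√(2*Real.pi))⁻¹ * (√(2*Real.pi))⁻¹ := by
    rw [← mul_inv, Real.mul_self_sqrt (by positivity)]
  rw [h1, h2]
  simp
  ring

theorem sheppard (α : ℝ) (h0 : 0 ≤ α) (h1 : α ≤ Real.pi) :
    ∫ p, sg p.1 * sg (Real.cos α * p.1 + Real.sin α * p.2) ∂((gaussianReal 0 1).prod (gaussianReal 0 1)) = 
      1 - 2 * α / Real.pi := by
  have e1 := polar_gauss (fun _ => 1) (fun _ => 1) (fun _ _ _ => rfl)
  have e2 := polar_gauss (fun p => sg p.1 * sg (Real.cos α * p.1 + Real.sin α * p.2))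
    (fun t => sg (Real.cos t) * sg (Real.cos (t - α))) (fun r hr t => by
      simp only
      rw [show Real.cos α * (r * Real.cos t) + Real.sin α * (r * Real.sin t) = r * Real.cos (t - α) by
        rw [Real.cos_sub]; ring, sg_mul _ _ hr, sg_mul _ _ hr])
  rw [angular α h0 h1] at e2
  have hpi := Real.pi_pos
  have e3 : ∫ t in Set.Ioo (-Real.pi) Real.pi, (1:ℝ) = 2 * Real.pi := by
    simp [hpi.le]; ring
  rw [e3] at e1
  simp only [integral_const, probReal_univ, smul_eq_mul, mul_one] at e1
  rw [e2]
  have e4 := eq_div_of_mul_eq (by positivity) e1.symm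
  rw [e4]
  field_simp
  ring

theorem pair_law {ι : Type*} [Fintype ι] [DecidableEq ι] (S : Matrix ι ι ℝ) (hS : S.PosSemidef) (i j : ι)
    (hi : S i i = 1) (hj : S j j = 1) (α : ℝ) (hij : S i j = Real.cos α) :
    (multivariateGaussian 0 S).map (fun x => (x i, x j)) =
      ((gaussianReal 0 1).prod (gaussianReal 0 1)).map
        (fun p => (p.1, Real.cos α * p.1 + Real.sin α * p.2)) := by
  have m1 : Measurable (fun x : EuclideanSpace ℝ ι => (x i, x j)) := by fun_prop
  have m2 : Measurable (fun p : ℝ × ℝ => (p.1, Real.cos α * p.1 + Real.sin α * p.2)) := by fun_prop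
  have := Measure.isProbabilityMeasure_map (μ := multivariateGaussian 0 S) m1.aemeasurable
  have := Measure.isProbabilityMeasure_map (μ := (gaussianReal 0 1).prod (gaussianReal 0 1)) m2.aemeasurable
  apply Measure.ext_of_charFunDual
  ext L
  obtain ⟨a, b, hL⟩ : ∃ a b : ℝ, ∀ p : ℝ × ℝ, L p = a * p.1 + b * p.2 := by
    refine ⟨L (1, 0), L (0, 1), fun p => ?_⟩
    have : p = p.1 • (1, 0) + p.2 • (0, 1) := by ext <;> simp
    conv_lhs => rw [this, map_add, map_smul, map_smul]
    simp [mul_comm]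
  rw [charFunDual_apply, charFunDual_apply, integral_map m1.aemeasurable (by fun_prop),
    integral_map m2.aemeasurable (by fun_prop)]
  simp only [hL]
  have hji : S j i = Real.cos α := by rw [← hij]; simpa using hS.isHermitian.apply i j
  have l1 := charFun_multivariateGaussian (μ := 0) hS (a • EuclideanSpace.single i (1:ℝ) + b • EuclideanSpace.single j (1:ℝ))
  rw [charFun_apply] at l1
  have l2 := integral_prod_mul (μ := gaussianReal 0 1) (ν := gaussianReal 0 1)
    (fun x : ℝ => Complex.exp ((a + b * Real.cos α : ℝ) * x * Complex.I))
    (fun x : ℝ => Complex.exp ((b * Real.sin α : ℝ) * x * Complex.I))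
  rw [← charFun_apply_real, ← charFun_apply_real, charFun_gaussianReal, charFun_gaussianReal] at l2
  have r1 : ∀ x : EuclideanSpace ℝ ι, inner ℝ x (a • EuclideanSpace.single i (1:ℝ) + b • EuclideanSpace.single j (1:ℝ)) = a * x i + b * x j := by
    intro x; simp [inner_add_right, inner_smul_right, EuclideanSpace.inner_single_right]
  simp only [r1] at l1
  rw [l1]
  have r2 : ∀ x : ℝ × ℝ, Complex.exp (((a * x.1 + b * (Real.cos α * x.1 + Real.sin α * x.2) : ℝ) : ℂ) * Complex.I)
     = Complex.exp ((a + b * Real.cos α : ℝ) * x.1 * Complex.I) * Complex.exp ((b * Real.sin α : ℝ) * x.2 * Complex.I) := by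
    intro x; rw [← Complex.exp_add]; congr 1; push_cast; ring
  simp only [r2]
  rw [l2, ← Complex.exp_add]
  congr 1
  have r3 : (a • EuclideanSpace.single i (1:ℝ) + b • EuclideanSpace.single j (1:ℝ) : EuclideanSpace ℝ ι).ofLp ⬝ᵥ
     S *ᵥ (a • EuclideanSpace.single i (1:ℝ) + b • EuclideanSpace.single j (1:ℝ) : EuclideanSpace ℝ ι).ofLp = 
      (a + b * Real.cos α)^2 + (b * Real.sin α)^2 := by
    simp [mulVec_add, mulVec_smul, hi, hj, hij, hji]
    linear_combination (-b^2) * Real.sin_sq_add_cos_sq α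
  rw [r3]
  simp
  ring

theorem sign_corr {ι : Type*} [Fintype ι] [DecidableEq ι] (S : Matrix ι ι ℝ) (hS : S.PosSemidef) (i j : ι)
    (hi : S i i = 1) (hj : S j j = 1) (α : ℝ) (h0 : 0 ≤ α) (h1 : α ≤ Real.pi) (hij : S i j = Real.cos α) :
    ∫ x, sg (x i) * sg (x j) ∂(multivariateGaussian 0 S) = 1 - 2 * α / Real.pi := by
  rw [← sheppard α h0 h1]
  have mm : Measurable (fun p : ℝ × ℝ => sg p.1 * sg p.2) :=
    (measurable_sg.comp measurable_fst).mul (measurable_sg.comp measurable_snd)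
  have m1 : Measurable (fun x : EuclideanSpace ℝ ι => (x i, x j)) := by fun_prop
  have m2 : Measurable (fun p : ℝ × ℝ => (p.1, Real.cos α * p.1 + Real.sin α * p.2)) := by fun_prop
  have a1 := integral_map (μ := multivariateGaussian 0 S) m1.aemeasurable mm.aestronglyMeasurable
  have a2 := integral_map (μ := (gaussianReal 0 1).prod (gaussianReal 0 1)) m2.aemeasurable mm.aestronglyMeasurable
  rw [pair_law S hS i j hi hj α hij] at a1
  exact a1.symm.trans a2

end Aux

/-- Real Grothendieck inequality with Krivine's constant `π / (2 log(1 + √2))`. -/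
theorem real_grothendieck_krivine_bound
    (m n d : ℕ) (A : Matrix (Fin m) (Fin n) ℝ)
    (u : Fin m → EuclideanSpace ℝ (Fin d)) (v : Fin n → EuclideanSpace ℝ (Fin d))
    (hu : ∀ i, ‖u i‖ = 1) (hv : ∀ j, ‖v j‖ = 1) :
    |∑ i, ∑ j, A i j * (inner ℝ (u i) (v j) : ℝ)| ≤
      (Real.pi / (2 * Real.log (1 + Real.sqrt 2))) * normInftyOne A := by
  have hs2 : (0:ℝ) < Real.sqrt 2 := by positivity
  set c : ℝ := Real.log (1 + Real.sqrt 2) with hc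
  have hc' : c = Real.arsinh 1 := by
    rw [hc, Real.arsinh]; norm_num
  have hc0 : 0 < c := Real.log_pos (by linarith)
  have hsinh : Real.sinh c = 1 := by rw [hc', Real.sinh_arsinh]
  have hc1 : c ≤ 1 := by
    rw [hc', ← Real.sinh_le_sinh, Real.sinh_arsinh]
    exact Real.self_le_sinh_iff.2 zero_le_one
  have hpi := Real.pi_gt_three
  obtain ⟨G, hG, g1, g2, g3⟩ := gram_psd c hc0.le u v
  have ht : ∀ i j, |(inner ℝ (u i) (v j) : ℝ)| ≤ 1 := fun i j => by
    have := abs_real_inner_le_norm (u i) (v j)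
    rwa [hu, hv, mul_one] at this
  have key : ∀ i j, ∫ x, sg (x (.inl i)) * sg (x (.inr j))
      ∂(ProbabilityTheory.multivariateGaussian 0 G) =
        (2 * c / Real.pi) * inner ℝ (u i) (v j) := by
    intro i j
    obtain ⟨ha, hb⟩ := abs_le.1 (ht i j)
    have hlo : -1 ≤ c * inner ℝ (u i) (v j) := by nlinarith
    have hhi : c * inner ℝ (u i) (v j) ≤ 1 := by nlinarith
    rw [sign_corr G hG (.inl i) (.inr j) (by rw [g1, hu]; simpa using hsinh)
      (by rw [g2, hv]; simpa using hsinh) (Real.pi / 2 - c * inner ℝ (u i) (v j))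
      (by linarith) (by linarith) (by rw [g3, Real.cos_pi_div_two_sub])]
    field_simp
    ring
  have hint : ∀ i j, MeasureTheory.Integrable
      (fun x : EuclideanSpace ℝ (Fin m ⊕ Fin n) => sg (x (.inl i)) * sg (x (.inr j)))
      (ProbabilityTheory.multivariateGaussian 0 G) := by
    intro i j
    refine MeasureTheory.Integrable.of_bound (C := 1) ?_ (Filter.Eventually.of_forall fun x => ?_)
    · exact ((measurable_sg.comp (by fun_prop)).mul
        (measurable_sg.comp (by fun_prop))).aestronglyMeasurable
    · rw [Real.norm_eq_abs, abs_mul, abs_sg, abs_sg, mul_one]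
  have hbdd : BddAbove { x : ℝ | ∃ p : Fin m → ℝ, ∃ q : Fin n → ℝ,
      (∀ i, |p i| ≤ 1) ∧ (∀ j, |q j| ≤ 1) ∧ x = |∑ i, ∑ j, A i j * p i * q j| } := by
    refine ⟨∑ i, ∑ j, |A i j|, ?_⟩
    rintro x ⟨p, q, hp, hq, rfl⟩
    refine (Finset.abs_sum_le_sum_abs _ _).trans (Finset.sum_le_sum fun i _ => ?_)
    refine (Finset.abs_sum_le_sum_abs _ _).trans (Finset.sum_le_sum fun j _ => ?_)
    rw [abs_mul, abs_mul, mul_assoc]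
    exact mul_le_of_le_one_right (abs_nonneg _)
      (mul_le_one₀ (hp i) (abs_nonneg _) (hq j))
  have hpt : ∀ x : EuclideanSpace ℝ (Fin m ⊕ Fin n),
      ‖∑ i, ∑ j, A i j * (sg (x (.inl i)) * sg (x (.inr j)))‖ ≤ normInftyOne A := by
    intro x
    refine le_csSup hbdd ⟨fun i => sg (x (.inl i)), fun j => sg (x (.inr j)),
      fun i => (abs_sg _).le, fun j => (abs_sg _).le, ?_⟩
    simp only [Real.norm_eq_abs, mul_assoc]
  have hI : ∫ x, ∑ i, ∑ j, A i j * (sg (x (.inl i)) * sg (x (.inr j)))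
      ∂(ProbabilityTheory.multivariateGaussian 0 G) =
        (2 * c / Real.pi) * ∑ i, ∑ j, A i j * inner ℝ (u i) (v j) := by
    have hint2 : ∀ i j, MeasureTheory.Integrable
        (fun x : EuclideanSpace ℝ (Fin m ⊕ Fin n) =>
          A i j * (sg (x (.inl i)) * sg (x (.inr j))))
        (ProbabilityTheory.multivariateGaussian 0 G) := fun i j => (hint i j).const_mul _
    rw [MeasureTheory.integral_finsetSum, Finset.mul_sum]
    · refine Finset.sum_congr rfl fun i _ => ?_
      rw [MeasureTheory.integral_finsetSum, Finset.mul_sum]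
      · refine Finset.sum_congr rfl fun j _ => ?_
        rw [MeasureTheory.integral_const_mul, key]
        ring
      · exact fun j _ => hint2 i j
    · exact fun i _ => MeasureTheory.integrable_finsetSum _ fun j _ => hint2 i j
  have hfin := MeasureTheory.norm_integral_le_of_norm_le_const
    (μ := ProbabilityTheory.multivariateGaussian 0 G) (Filter.Eventually.of_forall hpt)
  rw [hI, MeasureTheory.probReal_univ, mul_one, Real.norm_eq_abs, abs_mul,
    abs_of_pos (by positivity)] at hfin
  calc |∑ i, ∑ j, A i j * (inner ℝ (u i) (v j) : ℝ)|
      = (Real.pi / (2 * c)) *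
        ((2 * c / Real.pi) * |∑ i, ∑ j, A i j * (inner ℝ (u i) (v j) : ℝ)|) := by
        field_simp
    _ ≤ _ := mul_le_mul_of_nonneg_left hfin (by positivity)
end

section
/- Little Grothendieck inequality, real case (k_G^ℝ = π/2, upper bound): for all n, d ∈ ℕ, every real positive semidefinite n×n matrix A, and all vectors u_1, …, u_n in the Euclidean space ℝ^d with ‖u_i‖ = 1 for all i, one has 0 ≤ ∑_{i=1}^n ∑_{j=1}^n A i j · ⟨u_i, u_j⟩ ≤ (π/2) · ‖A‖_{∞,1}. -/
open scoped BigOperators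

open MeasureTheory ProbabilityTheory in
lemma lg_abs_gaussian : ∫ x, |x| ∂(gaussianReal 0 1) = √(2 / Real.pi) := by
  rw [integral_gaussianReal_eq_integral_smul one_ne_zero]
  have h1 : ∀ x : ℝ, gaussianPDFReal 0 1 x • |x|
      = (fun t : ℝ => (√(2 * Real.pi))⁻¹ * (t ^ (1 : ℝ) * Real.exp (-(1/2) * t ^ (2 : ℝ)))) |x| := by
    intro x
    simp only [gaussianPDFReal, smul_eq_mul, Real.rpow_one, Real.rpow_two, sq_abs]
    have : -(x - 0) ^ 2 / (2 * ((1 : NNReal) : ℝ)) = -(1/2) * x ^ 2 := by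
      simp; ring
    rw [this]
    simp
    ring
  simp_rw [h1]
  rw [integral_comp_abs (f := fun t : ℝ =>
    (√(2 * Real.pi))⁻¹ * (t ^ (1 : ℝ) * Real.exp (-(1/2) * t ^ (2 : ℝ)))), integral_const_mul,
    integral_rpow_mul_exp_neg_mul_rpow (by norm_num) (by norm_num) (by norm_num)]
  have hp := Real.pi_pos
  have h2 : ((1 : ℝ) / 2) ^ (-((1 : ℝ) + 1) / 2) = 2 := by
    rw [show (-((1 : ℝ) + 1) / 2) = -1 by norm_num, Real.rpow_neg_one]; norm_num
  rw [h2, show ((1 : ℝ) + 1) / 2 = 1 by norm_num, Real.Gamma_one]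
  rw [Real.sqrt_mul (by norm_num), Real.sqrt_div (by norm_num)]
  have h3 : √2 * √2 = (2 : ℝ) := Real.mul_self_sqrt (by norm_num)
  have h4 : 0 < √Real.pi := Real.sqrt_pos.2 hp
  have h5 : 0 < √(2 : ℝ) := by positivity
  field_simp
  nlinarith

noncomputable def lgSgn (x : ℝ) : ℝ := if 0 ≤ x then 1 else -1

lemma lgSgn_abs (x : ℝ) : |lgSgn x| = 1 := by
  unfold lgSgn; split_ifs <;> simp

lemma lgSgn_mul (x : ℝ) : lgSgn x * x = |x| := by
  unfold lgSgn; split_ifs with h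
  · rw [abs_of_nonneg h, one_mul]
  · rw [abs_of_neg (not_le.1 h)]; ring

lemma lgSgn_meas : Measurable lgSgn :=
  Measurable.ite measurableSet_Ici measurable_const measurable_const

section
open MeasureTheory ProbabilityTheory
variable {d : ℕ}

lemma lg_memLp (v : EuclideanSpace ℝ (Fin d)) :
    MemLp (fun x => (inner ℝ v x : ℝ)) 2 (stdGaussian (EuclideanSpace ℝ (Fin d))) :=
  IsGaussian.memLp_dual _ (innerSL ℝ v) 2 (by simp)

lemma lg_memLp_sgn (v : EuclideanSpace ℝ (Fin d)) :
    MemLp (fun x => lgSgn (inner ℝ v x : ℝ)) 2 (stdGaussian (EuclideanSpace ℝ (Fin d))) := by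
  refine MemLp.of_bound (C := 1) ?_ ?_
  · exact (lgSgn_meas.comp (by fun_prop)).aestronglyMeasurable
  · exact Filter.Eventually.of_forall fun x => by
      rw [Real.norm_eq_abs, lgSgn_abs]

lemma lg_mean (v : EuclideanSpace ℝ (Fin d)) :
    ∫ x, (inner ℝ v x : ℝ) ∂(stdGaussian (EuclideanSpace ℝ (Fin d))) = 0 :=
  integral_strongDual_stdGaussian (innerSL ℝ v)

lemma lg_cov (u v : EuclideanSpace ℝ (Fin d)) :
    ∫ x, (inner ℝ u x : ℝ) * inner ℝ v x ∂(stdGaussian (EuclideanSpace ℝ (Fin d)))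
      = inner ℝ u v := by
  have h := covarianceBilin_apply_eq_cov (μ := stdGaussian (EuclideanSpace ℝ (Fin d)))
    IsGaussian.memLp_two_id u v
  rw [covarianceBilin_stdGaussian, covariance_eq_sub (lg_memLp u) (lg_memLp v), lg_mean] at h
  have h' : (innerSL ℝ u) v = (inner ℝ u v : ℝ) := rfl
  rw [← h', h]
  simp

lemma lg_law (u : EuclideanSpace ℝ (Fin d)) (hu : ‖u‖ = 1) :
    (stdGaussian (EuclideanSpace ℝ (Fin d))).map (fun x => (inner ℝ u x : ℝ))
      = gaussianReal 0 1 := by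
  have h := IsGaussian.map_eq_gaussianReal (μ := stdGaussian (EuclideanSpace ℝ (Fin d)))
    (innerSL ℝ u)
  rw [variance_dual_stdGaussian, integral_strongDual_stdGaussian, innerSL_apply_norm, hu] at h
  simpa using h

lemma lg_abs (u : EuclideanSpace ℝ (Fin d)) (hu : ‖u‖ = 1) :
    ∫ x, |(inner ℝ u x : ℝ)| ∂(stdGaussian (EuclideanSpace ℝ (Fin d))) = √(2 / Real.pi) := by
  rw [← lg_abs_gaussian, ← lg_law u hu, integral_map (by fun_prop) (by fun_prop)]

lemma lg_orth (u w : EuclideanSpace ℝ (Fin d)) (h : inner ℝ u w = (0 : ℝ)) :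
    ∫ x, lgSgn (inner ℝ u x : ℝ) * inner ℝ w x ∂(stdGaussian (EuclideanSpace ℝ (Fin d))) = 0 := by
  set K := (Submodule.span ℝ {w})ᗮ with hK
  have hm := stdGaussian_map (E := EuclideanSpace ℝ (Fin d)) K.reflection
  have hmeas : AEStronglyMeasurable (fun x => lgSgn (inner ℝ u x : ℝ) * inner ℝ w x)
      ((stdGaussian (EuclideanSpace ℝ (Fin d))).map K.reflection) :=
    ((lgSgn_meas.comp (by fun_prop)).mul (by fun_prop)).aestronglyMeasurable
  have h1 := integral_map (by fun_prop) hmeas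
  rw [hm] at h1
  have hu : K.reflection u = u := by
    rw [Submodule.reflection_eq_self_iff, hK, Submodule.mem_orthogonal_singleton_iff_inner_left]
    exact h
  have hw : K.reflection w = -w :=
    Submodule.reflection_orthogonalComplement_singleton_eq_neg w
  have e : ∀ a x, (inner ℝ a (K.reflection x) : ℝ) = inner ℝ (K.reflection a) x := by
    intro a x
    rw [← LinearIsometryEquiv.inner_map_map K.reflection a, Submodule.reflection_reflection]
  simp_rw [e, hu, hw, inner_neg_left, mul_neg, integral_neg] at h1
  linarith

lemma lg_cross (u v : EuclideanSpace ℝ (Fin d)) (hu : ‖u‖ = 1) :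
    ∫ x, lgSgn (inner ℝ u x : ℝ) * inner ℝ v x ∂(stdGaussian (EuclideanSpace ℝ (Fin d)))
      = √(2 / Real.pi) * inner ℝ u v := by
  set w := v - (inner ℝ u v : ℝ) • u with hw
  have ho : inner ℝ u w = (0 : ℝ) := by
    rw [hw, inner_sub_right, inner_smul_right, real_inner_self_eq_norm_sq, hu]; ring
  have e : ∀ x, lgSgn (inner ℝ u x : ℝ) * inner ℝ v x
      = inner ℝ u v * |(inner ℝ u x : ℝ)| + lgSgn (inner ℝ u x : ℝ) * inner ℝ w x := by
    intro x
    rw [← lgSgn_mul, hw, inner_sub_left, real_inner_smul_left]; ring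
  simp_rw [e]
  rw [integral_add, integral_const_mul, lg_abs u hu, lg_orth u w ho]
  · ring
  · exact (((lg_memLp u).integrable (by norm_num)).abs).const_mul _
  · exact (lg_memLp_sgn u).integrable_mul (lg_memLp w)

end

lemma lg_psd {n : ℕ} {A : Matrix (Fin n) (Fin n) ℝ} (hA : A.PosSemidef) (z : Fin n → ℝ) :
    0 ≤ ∑ i, ∑ j, A i j * (z i * z j) := by
  have h := hA.dotProduct_mulVec_nonneg z
  simp only [dotProduct, Matrix.mulVec, star_trivial, Finset.mul_sum] at h
  refine h.trans_eq (Finset.sum_congr rfl fun i _ => Finset.sum_congr rfl fun j _ => ?_)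
  ring

lemma lg_le_norm {n : ℕ} (A : Matrix (Fin n) (Fin n) ℝ) (z : Fin n → ℝ) (hz : ∀ i, |z i| ≤ 1) :
    ∑ i, ∑ j, A i j * (z i * z j) ≤ normInftyOne A := by
  refine le_trans (le_abs_self _) (le_csSup ⟨∑ i, ∑ j, |A i j|, ?_⟩ ⟨z, z, hz, hz, ?_⟩)
  · rintro x ⟨p, q, hp, hq, rfl⟩
    refine (Finset.abs_sum_le_sum_abs _ _).trans (Finset.sum_le_sum fun i _ => ?_)
    refine (Finset.abs_sum_le_sum_abs _ _).trans (Finset.sum_le_sum fun j _ => ?_)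
    rw [abs_mul, abs_mul, mul_assoc]
    exact mul_le_of_le_one_right (abs_nonneg _) (mul_le_one₀ (hp i) (abs_nonneg _) (hq j))
  · simp only [mul_assoc]

open MeasureTheory ProbabilityTheory in
/-- Little Grothendieck inequality, real case: for positive semidefinite `A` and unit
vectors `u i` in `ℝ^d`, `0 ≤ ∑ i j, A i j ⟪u i, u j⟫ ≤ (π/2) ‖A‖_{∞,1}`. -/
theorem little_grothendieck_real
    (n d : ℕ) (A : Matrix (Fin n) (Fin n) ℝ) (hA : A.PosSemidef)
    (u : Fin n → EuclideanSpace ℝ (Fin d)) (hu : ∀ i, ‖u i‖ = 1) :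
    0 ≤ ∑ i, ∑ j, A i j * (inner ℝ (u i) (u j) : ℝ) ∧
      ∑ i, ∑ j, A i j * (inner ℝ (u i) (u j) : ℝ) ≤ (Real.pi / 2) * normInftyOne A := by
  have key : ∀ Z : Fin n → EuclideanSpace ℝ (Fin d) → ℝ,
      (∀ i, MemLp (Z i) 2 (stdGaussian (EuclideanSpace ℝ (Fin d)))) →
      (Integrable (fun x => ∑ i, ∑ j, A i j * (Z i x * Z j x))
        (stdGaussian (EuclideanSpace ℝ (Fin d)))) ∧
      ∫ x, ∑ i, ∑ j, A i j * (Z i x * Z j x) ∂(stdGaussian (EuclideanSpace ℝ (Fin d)))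
      = ∑ i, ∑ j, A i j * ∫ x, Z i x * Z j x ∂(stdGaussian (EuclideanSpace ℝ (Fin d))) := by
    intro Z hZ
    have hI : ∀ i j, Integrable (fun x => A i j * (Z i x * Z j x))
        (stdGaussian (EuclideanSpace ℝ (Fin d))) :=
      fun i j => ((hZ i).integrable_mul (hZ j)).const_mul _
    have hI2 : ∀ i, Integrable (fun x => ∑ j, A i j * (Z i x * Z j x))
        (stdGaussian (EuclideanSpace ℝ (Fin d))) :=
      fun i => integrable_finsetSum _ fun j _ => hI i j
    refine ⟨integrable_finsetSum _ fun i _ => hI2 i, ?_⟩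
    rw [integral_finsetSum _ fun i _ => hI2 i]
    refine Finset.sum_congr rfl fun i _ => ?_
    rw [integral_finsetSum _ fun j _ => hI i j]
    exact Finset.sum_congr rfl fun j _ => integral_const_mul _ _
  set c := √(2 / Real.pi) with hc
  have hp := Real.pi_pos
  have hc2 : c * c = 2 / Real.pi := Real.mul_self_sqrt (by positivity)
  constructor
  · have h := (key (fun i x => inner ℝ (u i) x) (fun i => lg_memLp _)).2
    simp_rw [lg_cov] at h
    rw [← h]
    exact integral_nonneg fun x => lg_psd hA _
  · obtain ⟨hXi, hX⟩ := key (fun i x => lgSgn (inner ℝ (u i) x)) (fun i => lg_memLp_sgn _)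
    have hZ := (key (fun i x => lgSgn (inner ℝ (u i) x) - c * inner ℝ (u i) x)
      (fun i => (lg_memLp_sgn _).sub ((lg_memLp _).const_mul c))).2
    have h0 : 0 ≤ ∫ x, ∑ i, ∑ j, A i j * ((lgSgn (inner ℝ (u i) x) - c * inner ℝ (u i) x) *
        (lgSgn (inner ℝ (u j) x) - c * inner ℝ (u j) x))
          ∂(stdGaussian (EuclideanSpace ℝ (Fin d))) := integral_nonneg fun x =>
      lg_psd hA (fun i => lgSgn (inner ℝ (u i) x) - c * inner ℝ (u i) x)
    have h1 : ∫ x, ∑ i, ∑ j, A i j * (lgSgn (inner ℝ (u i) x) * lgSgn (inner ℝ (u j) x))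
        ∂(stdGaussian (EuclideanSpace ℝ (Fin d))) ≤ normInftyOne A := by
      have := integral_mono hXi (integrable_const (normInftyOne A))
        (fun x => lg_le_norm A (fun i => lgSgn (inner ℝ (u i) x)) fun i => (lgSgn_abs _).le)
      simpa using this
    have hij : ∀ i j, ∫ x, (lgSgn (inner ℝ (u i) x) - c * inner ℝ (u i) x) *
        (lgSgn (inner ℝ (u j) x) - c * inner ℝ (u j) x)
          ∂(stdGaussian (EuclideanSpace ℝ (Fin d)))
        = ∫ x, lgSgn (inner ℝ (u i) x) * lgSgn (inner ℝ (u j) x)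
          ∂(stdGaussian (EuclideanSpace ℝ (Fin d))) - 2 / Real.pi * inner ℝ (u i) (u j) := by
      intro i j
      have e : ∀ x : EuclideanSpace ℝ (Fin d),
          (lgSgn (inner ℝ (u i) x) - c * inner ℝ (u i) x) *
          (lgSgn (inner ℝ (u j) x) - c * inner ℝ (u j) x)
          = ((lgSgn (inner ℝ (u i) x) * lgSgn (inner ℝ (u j) x)
            - c * (lgSgn (inner ℝ (u i) x) * inner ℝ (u j) x))
            - c * (lgSgn (inner ℝ (u j) x) * inner ℝ (u i) x))
            + c * c * (inner ℝ (u i) x * inner ℝ (u j) x) := fun x => by ring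
      have i1 := (lg_memLp_sgn (u i)).integrable_mul (lg_memLp_sgn (u j))
      have i2 := ((lg_memLp_sgn (u i)).integrable_mul (lg_memLp (u j))).const_mul c
      have i3 := ((lg_memLp_sgn (u j)).integrable_mul (lg_memLp (u i))).const_mul c
      have i4 := ((lg_memLp (u i)).integrable_mul (lg_memLp (u j))).const_mul (c * c)
      simp_rw [e]
      rw [integral_add (by exact (i1.sub i2).sub i3) (by exact i4),
        integral_sub (by exact i1.sub i2) (by exact i3), integral_sub (by exact i1) (by exact i2),
        integral_const_mul, integral_const_mul, integral_const_mul, lg_cov, lg_cross _ _ (hu i),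
        lg_cross _ _ (hu j), real_inner_comm (u i) (u j), ← hc, ← hc2]
      ring
    rw [hZ] at h0
    simp_rw [hij, mul_sub, Finset.sum_sub_distrib] at h0
    rw [hX] at h1
    have h2 : ∑ i, ∑ j, A i j * (2 / Real.pi * (inner ℝ (u i) (u j) : ℝ))
        = 2 / Real.pi * ∑ i, ∑ j, A i j * (inner ℝ (u i) (u j) : ℝ) := by
      simp_rw [Finset.mul_sum]
      exact Finset.sum_congr rfl fun i _ => Finset.sum_congr rfl fun j _ => by ring
    rw [h2] at h0
    have h3 : 2 / Real.pi * ∑ i, ∑ j, A i j * (inner ℝ (u i) (u j) : ℝ) ≤ normInftyOne A := by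
      linarith
    calc _ = Real.pi / 2 * (2 / Real.pi * ∑ i, ∑ j, A i j * (inner ℝ (u i) (u j) : ℝ)) := by
          field_simp
      _ ≤ _ := mul_le_mul_of_nonneg_left h3 (by positivity)
end

section
/- Krivine's theorem on the 2-dimensional real Grothendieck constant: let K_G^ℝ(2) := sInf { K ∈ ℝ : K ≥ 0 and for all m, n ∈ ℕ, every real m×n matrix A, and all vectors u_1, …, u_m, v_1, …, v_n in the Euclidean space ℝ² with ‖u_i‖ = 1 and ‖v_j‖ = 1, one has |∑_{i,j} A i j · ⟨u_i, v_j⟩| ≤ K · ‖A‖_{∞,1} }. Then K_G^ℝ(2) = √2. -/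
open scoped BigOperators

namespace Kriv
open Real

theorem norm_bdd {m n : ℕ} (A : Matrix (Fin m) (Fin n) ℝ) :
    BddAbove { x : ℝ | ∃ p : Fin m → ℝ, ∃ q : Fin n → ℝ,
    (∀ i, |p i| ≤ 1) ∧ (∀ j, |q j| ≤ 1) ∧ x = |∑ i, ∑ j, A i j * p i * q j| } := by
  refine ⟨∑ i, ∑ j, |A i j|, ?_⟩
  rintro x ⟨p, q, hp, hq, rfl⟩
  refine (Finset.abs_sum_le_sum_abs _ _).trans (Finset.sum_le_sum fun i _ => ?_)
  refine (Finset.abs_sum_le_sum_abs _ _).trans (Finset.sum_le_sum fun j _ => ?_)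
  rw [abs_mul, abs_mul]
  calc |A i j| * |p i| * |q j| ≤ |A i j| * 1 * 1 := by
        gcongr
        · exact hp i
        · exact hq j
    _ = _ := by ring

theorem le_norm {m n : ℕ} (A : Matrix (Fin m) (Fin n) ℝ) (p : Fin m → ℝ) (q : Fin n → ℝ)
    (hp : ∀ i, |p i| ≤ 1) (hq : ∀ j, |q j| ≤ 1) :
    |∑ i, ∑ j, A i j * p i * q j| ≤ normInftyOne A :=
  le_csSup (norm_bdd A) ⟨p, q, hp, hq, rfl⟩

theorem lower (K : ℝ) (hK : 0 ≤ K) (h : ∀ (m n : ℕ) (A : Matrix (Fin m) (Fin n) ℝ)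
      (u : Fin m → EuclideanSpace ℝ (Fin 2)) (v : Fin n → EuclideanSpace ℝ (Fin 2)),
      (∀ i, ‖u i‖ = 1) → (∀ j, ‖v j‖ = 1) →
      |∑ i, ∑ j, A i j * (inner ℝ (u i) (v j) : ℝ)| ≤ K * normInftyOne A) : √2 ≤ K := by
  have h2 : (√2)^2 = 2 := Real.sq_sqrt (by norm_num)
  have h3 : 0 < √2 := by positivity
  have hA : normInftyOne !![(1:ℝ), 1; 1, -1] ≤ 2 := by
    refine csSup_le ⟨_, 0, 0, by simp, by simp, rfl⟩ ?_
    rintro x ⟨p, q, hp, hq, rfl⟩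
    simp only [Fin.sum_univ_two]
    have := hp 0
    have := hp 1
    have e : (!![(1:ℝ), 1; 1, -1] 0 0 * p 0 * q 0 + !![(1:ℝ), 1; 1, -1] 0 1 * p 0 * q 1
      + (!![(1:ℝ), 1; 1, -1] 1 0 * p 1 * q 0 + !![(1:ℝ), 1; 1, -1] 1 1 * p 1 * q 1))
      = p 0 * (q 0 + q 1) + p 1 * (q 0 - q 1) := by simp; ring
    rw [e]
    have h0 := abs_le.1 (hq 0)
    have h1 := abs_le.1 (hq 1)
    calc _ ≤ |p 0| * |q 0 + q 1| + |p 1| * |q 0 - q 1| := by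
          rw [← abs_mul, ← abs_mul]; exact abs_add_le _ _
      _ ≤ 1 * |q 0 + q 1| + 1 * |q 0 - q 1| := by gcongr
      _ ≤ 2 := by
        rcases abs_cases (q 0 + q 1) with h | h <;> rcases abs_cases (q 0 - q 1) with h' | h' <;>
          linarith
  have := h 2 2 !![(1:ℝ), 1; 1, -1] ![!₂[1, 0], !₂[0, 1]]
    ![!₂[√2/2, √2/2], !₂[√2/2, -(√2/2)]]
    (by intro i; fin_cases i <;> simp [EuclideanSpace.norm_eq])
    (by intro i; fin_cases i <;> simp [EuclideanSpace.norm_eq, div_pow, h2] <;> norm_num)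
  simp [Fin.sum_univ_two, PiLp.inner_apply] at this
  have h5 := (le_abs_self _).trans this
  nlinarith

theorem exists_angle (u : EuclideanSpace ℝ (Fin 2)) (hu : ‖u‖ = 1) :
    ∃ θ : ℝ, u 0 = cos θ ∧ u 1 = sin θ := by
  have h : u 0 ^ 2 + u 1 ^ 2 = 1 := by
    have := EuclideanSpace.norm_sq_eq u
    rw [hu] at this
    simp [Fin.sum_univ_two] at this
    linarith
  have hz : ‖(⟨u 0, u 1⟩ : ℂ)‖ = 1 := by
    rw [Complex.norm_def, Complex.normSq_mk, Real.sqrt_eq_one]; linarith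
  refine ⟨Complex.arg ⟨u 0, u 1⟩, ?_, ?_⟩
  · have := Complex.norm_mul_cos_arg ⟨u 0, u 1⟩
    rw [hz] at this; simpa using this.symm
  · have := Complex.norm_mul_sin_arg ⟨u 0, u 1⟩
    rw [hz] at this; simpa using this.symm

theorem abstract_bound (γ : ℤ → ℝ) (G : ℝ → ℝ)
    (hs : ∀ x, HasSum (fun n : ℤ => γ n * cos (n * x)) (G x))
    (h1 : 0 < γ 1) (h1' : γ (-1) = γ 1)
    (hγ : ∀ n : ℤ, n ≠ 1 → n ≠ -1 → |γ n| = - (√2 * (γ n * cos (n * (π / 4)))))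
    (hG : G (π / 4) = 1 / 2) {m n : ℕ} (A : Matrix (Fin m) (Fin n) ℝ)
    (hA : ∀ (a : Fin m → ℝ) (b : Fin n → ℝ), |∑ i, ∑ j, A i j * G (a i - b j)| ≤ normInftyOne A)
    (a : Fin m → ℝ) (b : Fin n → ℝ) :
    |∑ i, ∑ j, A i j * cos (a i - b j)| ≤ √2 * normInftyOne A := by
  have h2 : (√2)^2 = 2 := Real.sq_sqrt (by norm_num)
  have h3 : 0 < √2 := by positivity
  let Φ : (Fin m → ℝ) → (Fin n → ℝ) → ℝ := fun a b => ∑ i, ∑ j, A i j * cos (a i - b j)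
  let S : Set ℝ := Set.range (fun p : (Fin m → ℝ) × (Fin n → ℝ) => |Φ p.1 p.2|)
  have hbdd : BddAbove S := by
    refine ⟨∑ i, ∑ j, |A i j|, ?_⟩
    rintro _ ⟨⟨a, b⟩, rfl⟩
    refine (Finset.abs_sum_le_sum_abs _ _).trans (Finset.sum_le_sum fun i _ => ?_)
    refine (Finset.abs_sum_le_sum_abs _ _).trans (Finset.sum_le_sum fun j _ => ?_)
    rw [abs_mul]
    exact mul_le_of_le_one_right (abs_nonneg _) (abs_cos_le_one _)
  set M := sSup S with hM
  have hΦM : ∀ a b, |Φ a b| ≤ M := fun a b => le_csSup hbdd ⟨(a, b), rfl⟩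
  have key : ∀ a b, ∀ s : ℝ, (s = 1 ∨ s = -1) →
      s * Φ a b ≤ (normInftyOne A - M * (√2 / 2)) / (2 * γ 1) + M := by
    intro a b s hss
    have H1 : HasSum (fun k : ℤ => s * (γ k * Φ (fun i => k * a i) (fun j => k * b j)))
        (s * ∑ i, ∑ j, A i j * G (a i - b j)) := by
      apply HasSum.mul_left
      have : HasSum (fun k : ℤ => ∑ i, ∑ j, A i j * (γ k * cos (k * (a i - b j))))
          (∑ i, ∑ j, A i j * G (a i - b j)) :=
        hasSum_sum fun i _ => hasSum_sum fun j _ => (hs _).mul_left _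
      convert! this using 1
      funext k
      simp only [Φ, Finset.mul_sum]
      refine Finset.sum_congr rfl fun i _ => Finset.sum_congr rfl fun j _ => ?_
      rw [mul_sub]; ring
    have H2 : HasSum (fun k : ℤ => √2 * M * (γ k * cos (k * (π / 4)))
        + ((if k = 1 then γ 1 * (s * Φ a b - M) else 0)
          + (if k = -1 then γ 1 * (s * Φ a b - M) else 0)))
        (√2 * M * (1 / 2) + (γ 1 * (s * Φ a b - M) + γ 1 * (s * Φ a b - M))) := by
      rw [← hG]
      exact ((hs _).mul_left _).add ((hasSum_ite_eq _ _).add (hasSum_ite_eq _ _))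
    have H3 := hasSum_le (fun k => ?_) H2 H1
    · have H4 : s * ∑ i, ∑ j, A i j * G (a i - b j) ≤ normInftyOne A := by
        refine le_trans ?_ (hA a b)
        rcases hss with rfl | rfl
        · simpa using le_abs_self _
        · simpa using neg_le_abs _
      rw [div_add' _ _ _ (by positivity), le_div_iff₀ (by positivity)]
      nlinarith
    · by_cases k1 : k = 1
      · subst k1
        have e1 : √2 * M * (γ 1 * (√2 / 2)) = γ 1 * M := by linear_combination (M * γ 1 / 2) * h2
        simp [e1]
        change _ ≤ s * (γ 1 * Φ a b)
        linarith
      by_cases k2 : k = -1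
      · subst k2
        have e : Φ (fun i => ((-1:ℤ):ℝ) * a i) (fun j => ((-1:ℤ):ℝ) * b j) = Φ a b := by
          simp only [Φ]
          refine Finset.sum_congr rfl fun i _ => Finset.sum_congr rfl fun j _ => ?_
          rw [← cos_neg]; congr 2; push_cast; ring
        rw [e, h1']
        have e1 : √2 * M * (γ 1 * (√2 / 2)) = γ 1 * M := by linear_combination (M * γ 1 / 2) * h2
        simp [e1]
        linarith
      · simp only [k1, k2, if_false, add_zero]
        have := hγ k k1 k2
        have h5 := hΦM (fun i => k * a i) (fun j => k * b j)
        have h6 : |s * (γ k * Φ (fun i => k * a i) (fun j => k * b j))| ≤ |γ k| * M := by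
          rw [abs_mul, abs_mul]
          have : |s| = 1 := by rcases hss with rfl | rfl <;> simp
          rw [this, one_mul]
          gcongr
        have h9 := (abs_le.1 h6).1
        rw [this] at h9
        linarith
  have hfin : M ≤ (normInftyOne A - M * (√2 / 2)) / (2 * γ 1) + M := by
    refine csSup_le ⟨_, (a, b), rfl⟩ ?_
    rintro _ ⟨⟨a, b⟩, rfl⟩
    refine abs_le'.2 ⟨?_, ?_⟩
    · simpa using key a b 1 (Or.inl rfl)
    · simpa using key a b (-1) (Or.inr rfl)
  have h7 : 0 ≤ (normInftyOne A - M * (√2 / 2)) / (2 * γ 1) := by linarith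
  have h8 : 0 ≤ normInftyOne A - M * (√2 / 2) := by
    have := mul_nonneg h7 (show 0 ≤ 2 * γ 1 by positivity)
    rwa [div_mul_cancel₀ _ (by positivity)] at this
  refine (hΦM a b).trans ?_
  have h9 := mul_nonneg h3.le h8
  have e2 : √2 * (M * (√2 / 2)) = M := by linear_combination (M / 2) * h2
  linarith

noncomputable def Kf (c : ℝ) : ℝ :=
  2 * max (-(√2/2)) (min (√2/2) c) * √(1 - (max (-(√2/2)) (min (√2/2) c))^2)

theorem Kf_cont : Continuous Kf := by unfold Kf; fun_prop

theorem Kf_neg (c : ℝ) : Kf (-c) = - Kf c := by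
  have h : max (-(√2/2)) (min (√2/2) (-c)) = - max (-(√2/2)) (min (√2/2) c) := by
    have : 0 < √2 := by positivity
    rcases le_total c (√2/2) with h1 | h1 <;> rcases le_total (-(√2/2)) c with h2 | h2
    · rw [min_eq_right h1, max_eq_right h2, min_eq_right (by linarith), max_eq_right (by linarith)]
    · rw [min_eq_right h1, max_eq_left h2, min_eq_left (by linarith), max_eq_right (by linarith)]
      ring
    · rw [min_eq_left h1, min_eq_right (by linarith : -c ≤ √2/2),
        max_eq_left (by linarith : -c ≤ -(√2/2)),
        max_eq_right (by linarith : -(√2/2) ≤ √2/2)]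
    · linarith
  unfold Kf
  rw [h]
  simp

theorem Kf_abs (c : ℝ) : |Kf c| ≤ 1 := by
  have h2 : (√2)^2 = 2 := Real.sq_sqrt (by norm_num)
  have h3 : 0 < √2 := by positivity
  unfold Kf
  set y := max (-(√2/2)) (min (√2/2) c) with hy
  have hy1 : -(√2/2) ≤ y := le_max_left _ _
  have hy2 : y ≤ √2/2 := max_le (by linarith) (min_le_left _ _)
  have hs : √(1 - y^2)^2 = 1 - y^2 := Real.sq_sqrt (by nlinarith)
  rw [abs_le]
  constructor <;> nlinarith [sq_nonneg (y - √(1 - y^2)), sq_nonneg (y + √(1 - y^2))]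

noncomputable def C (x : ℝ) : ℝ := Kf (cos x)

theorem C_cont : Continuous C := Kf_cont.comp continuous_cos
theorem C_abs (x : ℝ) : |C x| ≤ 1 := Kf_abs _
theorem C_add_pi (x : ℝ) : C (x + π) = - C x := by simp [C, cos_add_pi, Kf_neg]
theorem C_per : Function.Periodic C (2 * π) := by intro x; simp [C]

theorem C_one {x : ℝ} (h1 : -(π/4) ≤ x) (h2 : x ≤ π/4) : C x = 1 := by
  have hp := pi_pos
  have h : √2/2 ≤ cos x := by
    rw [← cos_pi_div_four, ← cos_abs x]
    exact cos_le_cos_of_nonneg_of_le_pi (abs_nonneg _) (by linarith) (abs_le.2 ⟨h1, h2⟩)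
  have h3 : 0 < √2 := by positivity
  have h4 : (√2)^2 = 2 := Real.sq_sqrt (by norm_num)
  unfold C Kf
  rw [min_eq_left h, max_eq_right (by linarith)]
  have : 1 - (√2/2)^2 = (√2/2)^2 := by linear_combination (-1/2) * h4
  rw [this, Real.sqrt_sq (by positivity)]
  linear_combination (1/2) * h4

theorem C_sin {x : ℝ} (h1 : π/4 ≤ x) (h2 : x ≤ 3*π/4) : C x = sin (2 * x) := by
  have hp := pi_pos
  have ha : cos x ≤ √2/2 := by
    rw [← cos_pi_div_four]
    exact cos_le_cos_of_nonneg_of_le_pi (by linarith) (by linarith) h1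
  have hb : -(√2/2) ≤ cos x := by
    rw [← cos_pi_div_four, ← cos_pi_sub]
    exact cos_le_cos_of_nonneg_of_le_pi (by linarith) (by linarith) (by linarith)
  unfold C Kf
  rw [min_eq_right ha, max_eq_right hb, ← Real.sin_sq,
    Real.sqrt_sq (sin_nonneg_of_nonneg_of_le_pi (by linarith) (by linarith)), sin_two_mul]
  ring

noncomputable def G (x : ℝ) : ℝ := (1 / π) * ∫ t in (-(π/2))..(π/2), C (x + t)

theorem C_ii (a b : ℝ) : IntervalIntegrable C MeasureTheory.volume a b :=
  C_cont.intervalIntegrable _ _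

theorem G_pi4 : G (π/4) = 1/2 := by
  unfold G
  rw [intervalIntegral.integral_comp_add_left C (π/4),
    show π/4 + -(π/2) = -(π/4) by ring, show π/4 + π/2 = 3*π/4 by ring,
    ← intervalIntegral.integral_add_adjacent_intervals (C_ii _ (π/4)) (C_ii _ _)]
  have hp := pi_pos
  have e1 : ∫ x in (-(π/4))..(π/4), C x = ∫ x in (-(π/4))..(π/4), (1:ℝ) := by
    apply intervalIntegral.integral_congr
    intro x hx
    rw [Set.uIcc_of_le (by linarith)] at hx
    exact C_one hx.1 hx.2
  have e2 : ∫ x in (π/4)..(3*π/4), C x = ∫ x in (π/4)..(3*π/4), sin (2 * x) := by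
    apply intervalIntegral.integral_congr
    intro x hx
    rw [Set.uIcc_of_le (by linarith)] at hx
    exact C_sin hx.1 hx.2
  rw [e1, e2, intervalIntegral.integral_comp_mul_left (fun x => sin x) (by norm_num)]
  have e3 : cos (2 * (3 * π/4)) = 0 := by
    rw [show 2 * (3*π/4) = π/2 + π by ring, cos_add_pi]; simp
  have e4 : cos (2 * (π/4)) = 0 := by
    rw [show 2 * (π/4) = π/2 by ring]; simp
  simp [e3, e4]
  field_simp
  norm_num

noncomputable def f (t : ℝ) : ℝ := if 0 ≤ cos t then 1 else -1

theorem f_abs (t : ℝ) : |f t| ≤ 1 := by unfold f; split_ifs <;> simp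
theorem f_meas : Measurable f :=
  Measurable.ite (measurableSet_le measurable_const continuous_cos.measurable)
    measurable_const measurable_const

theorem fC_ii (a b x y : ℝ) :
    IntervalIntegrable (fun t => f (t - a) * C (t - b)) MeasureTheory.volume x y := by
  have h : IntervalIntegrable (fun t => C (t - b)) MeasureTheory.volume x y :=
    (C_cont.comp (continuous_id.sub continuous_const)).intervalIntegrable _ _
  have hm : Measurable (fun t => f (t - a)) := f_meas.comp (measurable_id.sub_const a)
  rw [intervalIntegrable_iff] at h ⊢
  refine h.bdd_mul (c := 1) hm.aestronglyMeasurable ?_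
  exact Filter.Eventually.of_forall fun t => f_abs _

theorem conv (a b : ℝ) : ∫ t in (0:ℝ)..(2*π), f (t - a) * C (t - b) = 2 * π * G (a - b) := by
  have hp := pi_pos
  have e1 : ∀ t, f (t - a) * C (t - b) = (fun s => f s * C (s + (a - b))) (t - a) := by
    intro t; simp
  have hper : Function.Periodic (fun s => f s * C (s + (a - b))) (2*π) := by
    intro s
    have : f (s + 2*π) = f s := by simp [f]
    simp only
    rw [this, show s + 2*π + (a-b) = s + (a-b) + 2*π by ring, C_per]
  have hii : ∀ x y, IntervalIntegrable (fun s => f s * C (s + (a - b))) MeasureTheory.volume x y := by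
    intro x y
    have := fC_ii 0 (-(a-b)) x y
    simp only [sub_zero, sub_neg_eq_add] at this
    exact this
  simp_rw [e1]
  rw [intervalIntegral.integral_comp_sub_right (fun s => f s * C (s + (a - b))),
    show 2*π - a = (0 - a) + 2*π by ring, hper.intervalIntegral_add_eq (0-a) (-(π/2)),
    ← intervalIntegral.integral_add_adjacent_intervals (hii _ (π/2)) (hii _ _)]
  have i1 : ∫ s in (-(π/2))..(π/2), f s * C (s + (a-b)) = ∫ s in (-(π/2))..(π/2), C ((a-b) + s) := by
    apply intervalIntegral.integral_congr
    intro x hx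
    rw [Set.uIcc_of_le (by linarith)] at hx
    have : f x = 1 := by
      unfold f; rw [if_pos (cos_nonneg_of_neg_pi_div_two_le_of_le hx.1 hx.2)]
    simp only [this, one_mul, add_comm]
  have i2 : ∫ s in (π/2)..(-(π/2) + 2*π), f s * C (s + (a-b))
      = ∫ s in (-(π/2))..(π/2), C ((a-b) + s) := by
    have j1 : ∫ s in (π/2)..(-(π/2) + 2*π), f s * C (s + (a-b))
      = ∫ s in (π/2)..(-(π/2) + 2*π), C ((a-b) - π + s) := by
      apply intervalIntegral.integral_congr_Ioo_of_le (by linarith)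
      intro x hx
      have : f x = -1 := by
        unfold f
        rw [if_neg]
        exact not_le.2 (cos_neg_of_pi_div_two_lt_of_lt hx.1 (by linarith [hx.2]))
      simp only [this]
      rw [show x + (a-b) = (a - b - π + x) + π by ring, C_add_pi]; ring
    rw [j1, intervalIntegral.integral_comp_add_left C, intervalIntegral.integral_comp_add_left C]
    congr 1 <;> ring
  rw [i1, i2]
  unfold G
  field_simp
  ring

theorem G_bound {m n : ℕ} (A : Matrix (Fin m) (Fin n) ℝ) (a : Fin m → ℝ) (b : Fin n → ℝ) :
    |∑ i, ∑ j, A i j * G (a i - b j)| ≤ normInftyOne A := by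
  have hp := pi_pos
  have e : ∫ t in (0:ℝ)..(2*π), ∑ i, ∑ j, A i j * f (t - a i) * C (t - b j)
      = 2 * π * ∑ i, ∑ j, A i j * G (a i - b j) := by
    have hi : ∀ i j, IntervalIntegrable (fun t => A i j * f (t - a i) * C (t - b j))
        MeasureTheory.volume 0 (2*π) := by
      intro i j
      simp_rw [mul_assoc]
      exact (fC_ii _ _ _ _).const_mul _
    rw [intervalIntegral.integral_finsetSum
      (fun i _ => by
        have := IntervalIntegrable.sum Finset.univ (fun j _ => hi i j)
        simpa [Finset.sum_fn] using this), Finset.mul_sum]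
    refine Finset.sum_congr rfl fun i _ => ?_
    rw [intervalIntegral.integral_finsetSum (fun j _ => hi i j), Finset.mul_sum]
    refine Finset.sum_congr rfl fun j _ => ?_
    simp_rw [mul_assoc]
    rw [intervalIntegral.integral_const_mul, conv]
    ring
  have h := intervalIntegral.norm_integral_le_of_norm_le_const (a := 0) (b := 2*π)
    (C := normInftyOne A) (f := fun t => ∑ i, ∑ j, A i j * f (t - a i) * C (t - b j))
    (fun t _ => le_norm A _ _ (fun i => f_abs _) (fun j => C_abs _))
  rw [e, Real.norm_eq_abs, abs_mul, sub_zero, abs_of_pos (by positivity : 0 < 2*π), mul_comm] at h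
  exact le_of_mul_le_mul_right h (by positivity)

local instance two_pi_fact : Fact (0 < 2 * π) := ⟨two_pi_pos⟩

noncomputable def fc : C(AddCircle (2 * π), ℂ) where
  toFun x := ((Kf (Real.Angle.cos x) : ℝ) : ℂ)
  continuous_toFun :=
    Complex.continuous_ofReal.comp (Kf_cont.comp Real.Angle.continuous_cos)

theorem fc_coe (x : ℝ) : fc (x : AddCircle (2 * π)) = (C x : ℂ) := by
  change ((Kf (Real.Angle.cos (x : Real.Angle)) : ℝ) : ℂ) = _
  rw [Real.Angle.cos_coe]; rfl

noncomputable def ch (n : ℤ) : ℝ :=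
  if Even n then 0 else 8 * sin (n * (π/4)) / (π * n * (4 - n^2))

theorem trig {n : ℤ} (hn : ¬ Even n) :
    cos (n * (π/4))^2 = 1/2 ∧ sin (n * (π/4))^2 = 1/2 := by
  have h : cos (2 * (n * (π/4))) = 0 := by
    rw [cos_eq_zero_iff]
    obtain ⟨k, rfl⟩ := Int.not_even_iff_odd.1 hn
    refine ⟨k, ?_⟩
    push_cast; ring
  rw [cos_two_mul] at h
  have := sin_sq_add_cos_sq (n * (π/4))
  constructor <;> linarith

theorem four_sub_ne {n : ℤ} (hn : ¬ Even n) : (4:ℝ) - n^2 ≠ 0 := by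
  intro h
  have : n^2 = 4 := by
    have : (n:ℝ)^2 = 4 := by linarith
    exact_mod_cast this
  apply hn
  have h2 : Even (n^2) := by rw [this]; decide
  rwa [Int.even_pow' (by norm_num)] at h2

theorem n_ne {n : ℤ} (hn : ¬ Even n) : (n:ℝ) ≠ 0 := by
  intro h
  apply hn
  have : n = 0 := by exact_mod_cast h
  simp [this]

theorem exp_pi4 (n : ℤ) : Complex.exp (-(Complex.I * n * ((π/4 : ℝ) : ℂ)))
    = (cos (n * (π/4)) : ℝ) - (sin (n * (π/4)) : ℝ) * Complex.I := by
  rw [show -(Complex.I * n * ((π/4 : ℝ) : ℂ)) = ((-(n * (π/4)) : ℝ) : ℂ) * Complex.I by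
    push_cast; ring, Complex.exp_mul_I, ← Complex.ofReal_cos, ← Complex.ofReal_sin, cos_neg, sin_neg]
  push_cast; ring

theorem half_int {n : ℤ} (hn : ¬ Even n) :
    ∫ x in (-(π/4))..(3*π/4), Complex.exp (-(Complex.I * n * x)) * (C x : ℂ)
      = ((8 * sin (n * (π/4)) / (n * (4 - n^2)) : ℝ) : ℂ) := by
  have hp := pi_pos
  have hI : ∀ a b, IntervalIntegrable (fun x : ℝ => Complex.exp (-(Complex.I * n * x)) * (C x : ℂ))
      MeasureTheory.volume a b := by
    intro a b
    apply Continuous.intervalIntegrable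
    have := C_cont
    fun_prop
  have hnc : (n : ℂ) ≠ 0 := by exact_mod_cast n_ne hn
  have h4c : (4:ℂ) - n^2 ≠ 0 := by exact_mod_cast four_sub_ne hn
  rw [← intervalIntegral.integral_add_adjacent_intervals (hI _ (π/4)) (hI _ _)]
  have e1 : ∫ x in (-(π/4))..(π/4), Complex.exp (-(Complex.I * n * x)) * (C x : ℂ)
      = ∫ x in (-(π/4))..(π/4), Complex.exp (-(Complex.I * n * x)) := by
    apply intervalIntegral.integral_congr
    intro x hx
    rw [Set.uIcc_of_le (by linarith)] at hx
    simp [C_one hx.1 hx.2]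
  have e2 : ∫ x in (π/4)..(3*π/4), Complex.exp (-(Complex.I * n * x)) * (C x : ℂ)
      = ∫ x in (π/4)..(3*π/4), Complex.exp (-(Complex.I * n * x)) * Complex.sin (2 * x) := by
    apply intervalIntegral.integral_congr
    intro x hx
    rw [Set.uIcc_of_le (by linarith)] at hx
    simp [C_sin hx.1 hx.2]
  have dexp : ∀ x : ℝ, HasDerivAt (fun x : ℝ => Complex.exp (-(Complex.I * n * x)))
      (Complex.exp (-(Complex.I * n * x)) * (-(Complex.I * n))) x := by
    intro x
    have h0 : HasDerivAt (fun z : ℂ => -(Complex.I * n * z)) (-(Complex.I * n)) (x:ℂ) := by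
      simpa using ((hasDerivAt_id (x:ℂ)).const_mul (Complex.I * n)).fun_neg
    exact h0.cexp.comp_ofReal
  have f1 : ∫ x in (-(π/4))..(π/4), Complex.exp (-(Complex.I * n * x))
      = Complex.exp (-(Complex.I * n * ((π/4 : ℝ) : ℂ))) * (Complex.I / n)
        - Complex.exp (-(Complex.I * n * ((-(π/4) : ℝ) : ℂ))) * (Complex.I / n) := by
    apply intervalIntegral.integral_eq_sub_of_hasDerivAt
      (f := fun x : ℝ => Complex.exp (-(Complex.I * n * x)) * (Complex.I / n))
    · intro x _
      have := (dexp x).mul_const (Complex.I / n)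
      convert! this using 1
      field_simp
      simp
    · apply Continuous.intervalIntegrable
      fun_prop
  have dsin : ∀ x : ℝ, HasDerivAt (fun x : ℝ => Complex.sin (2 * x)) (Complex.cos (2 * x) * 2) x := by
    intro x
    have h0 : HasDerivAt (fun z : ℂ => 2 * z) 2 (x:ℂ) := by
      simpa using ((hasDerivAt_id (x:ℂ)).const_mul (2:ℂ))
    exact h0.csin.comp_ofReal
  have dcos : ∀ x : ℝ, HasDerivAt (fun x : ℝ => Complex.cos (2 * x)) (-Complex.sin (2 * x) * 2) x := by
    intro x
    have h0 : HasDerivAt (fun z : ℂ => 2 * z) 2 (x:ℂ) := by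
      simpa using ((hasDerivAt_id (x:ℂ)).const_mul (2:ℂ))
    exact h0.ccos.comp_ofReal
  have f2 : ∫ x in (π/4)..(3*π/4), Complex.exp (-(Complex.I * n * x)) * Complex.sin (2 * x)
      = (fun x : ℝ => Complex.exp (-(Complex.I * n * x)) * (Complex.cos (2 * x) * (-2 / (4 - n^2))
        + Complex.sin (2 * x) * (-(Complex.I * n) / (4 - n^2)))) (3*π/4)
        - (fun x : ℝ => Complex.exp (-(Complex.I * n * x)) * (Complex.cos (2 * x) * (-2 / (4 - n^2))
        + Complex.sin (2 * x) * (-(Complex.I * n) / (4 - n^2)))) (π/4) := by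
    apply intervalIntegral.integral_eq_sub_of_hasDerivAt
      (f := fun x : ℝ => Complex.exp (-(Complex.I * n * x)) * (Complex.cos (2 * x) * (-2 / (4 - n^2))
        + Complex.sin (2 * x) * (-(Complex.I * n) / (4 - n^2))))
    · intro x _
      have := (dexp x).mul (((dcos x).mul_const (-2 / (4 - (n:ℂ)^2))).add
        ((dsin x).mul_const (-(Complex.I * n) / (4 - (n:ℂ)^2))))
      convert! this using 1
      simp only [Pi.add_apply]
      generalize Complex.sin (2 * (x:ℂ)) = S
      generalize Complex.cos (2 * (x:ℂ)) = D
      field_simp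
      linear_combination (-(n:ℂ)^2 * S) * Complex.I_sq
    · apply Continuous.intervalIntegrable
      fun_prop
  have c1 : Complex.cos (2 * ((3*π/4 : ℝ) : ℂ)) = 0 := by
    have : cos (2 * (3 * π/4)) = 0 := by
      rw [show 2 * (3*π/4) = π/2 + π by ring, cos_add_pi]; simp
    rw [← Complex.ofReal_ofNat, ← Complex.ofReal_mul, ← Complex.ofReal_cos, this]; simp
  have c2 : Complex.sin (2 * ((3*π/4 : ℝ) : ℂ)) = -1 := by
    have : sin (2 * (3 * π/4)) = -1 := by
      rw [show 2 * (3*π/4) = π/2 + π by ring, sin_add_pi]; simp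
    rw [← Complex.ofReal_ofNat, ← Complex.ofReal_mul, ← Complex.ofReal_sin, this]; simp
  have c3 : Complex.cos (2 * ((π/4 : ℝ) : ℂ)) = 0 := by
    have : cos (2 * (π/4)) = 0 := by
      rw [show 2 * (π/4) = π/2 by ring]; simp
    rw [← Complex.ofReal_ofNat, ← Complex.ofReal_mul, ← Complex.ofReal_cos, this]; simp
  have c4 : Complex.sin (2 * ((π/4 : ℝ) : ℂ)) = 1 := by
    have : sin (2 * (π/4)) = 1 := by
      rw [show 2 * (π/4) = π/2 by ring]; simp
    rw [← Complex.ofReal_ofNat, ← Complex.ofReal_mul, ← Complex.ofReal_sin, this]; simp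
  have x1 := exp_pi4 n
  have x2 : Complex.exp (-(Complex.I * n * ((-(π/4) : ℝ) : ℂ)))
      = (cos (n * (π/4)) : ℝ) + (sin (n * (π/4)) : ℝ) * Complex.I := by
    have := exp_pi4 (-n)
    rw [show -(Complex.I * n * ((-(π/4) : ℝ) : ℂ))
      = -(Complex.I * ((-n : ℤ) : ℂ) * ((π/4 : ℝ) : ℂ)) by push_cast; ring, this]
    simp
  have x3 : Complex.exp (-(Complex.I * n * ((3*π/4 : ℝ) : ℂ)))
      = ((cos (n * (π/4)) : ℝ) - (sin (n * (π/4)) : ℝ) * Complex.I)^3 := by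
    rw [← x1, ← Complex.exp_nat_mul]
    congr 1; push_cast; ring
  rw [e1, e2, f1, f2]
  simp only [c1, c2, c3, c4, x1, x2, x3]
  obtain ⟨t1, t2⟩ := trig hn
  set c := cos (n * (π/4))
  set s := sin (n * (π/4))
  have t1' : (c:ℂ)^2 = 1/2 := by rw [← Complex.ofReal_pow, t1]; simp
  have t2' : (s:ℂ)^2 = 1/2 := by rw [← Complex.ofReal_pow, t2]; simp
  have hz : ((c:ℂ) - s * Complex.I)^3 = - c - s * Complex.I := by
    linear_combination (c - 3 * s * Complex.I) * t1' + (3 * c * Complex.I^2 - s * Complex.I^3) * t2'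
      + (3/2 * c - 1/2 * s * Complex.I) * Complex.I_sq
  rw [hz]
  push_cast
  field_simp
  ring_nf
  simp

theorem ch_coeff (n : ℤ) : fourierCoeff fc n = (ch n : ℂ) := by
  have hp := pi_pos
  have hI : ∀ a b, IntervalIntegrable (fun x : ℝ => Complex.exp (-(Complex.I * n * x)) * (C x : ℂ))
      MeasureTheory.volume a b := by
    intro a b
    apply Continuous.intervalIntegrable
    have := C_cont
    fun_prop
  rw [fourierCoeff_eq_intervalIntegral _ _ (-(π/4))]
  have e : ∀ x : ℝ, (fourier (-n) (x : AddCircle (2*π))) • fc (x : AddCircle (2*π))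
      = Complex.exp (-(Complex.I * n * x)) * (C x : ℂ) := by
    intro x
    rw [fc_coe, fourier_coe_apply, smul_eq_mul]
    congr 2
    have : (π:ℂ) ≠ 0 := by exact_mod_cast hp.ne'
    push_cast
    field_simp
  simp_rw [e]
  rw [← intervalIntegral.integral_add_adjacent_intervals (hI _ (3*π/4)) (hI _ _)]
  have e2 : ∫ x in (3*π/4)..(-(π/4) + 2*π), Complex.exp (-(Complex.I * n * x)) * (C x : ℂ)
    = -Complex.exp (-(Complex.I * n * π)) *
      ∫ x in (-(π/4))..(3*π/4), Complex.exp (-(Complex.I * n * x)) * (C x : ℂ) := by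
    rw [← intervalIntegral.integral_const_mul]
    have := intervalIntegral.integral_comp_add_right (a := -(π/4)) (b := 3*π/4)
      (fun x : ℝ => Complex.exp (-(Complex.I * n * x)) * (C x : ℂ)) π
    rw [show -(π/4) + 2*π = 3*π/4 + π by ring]
    rw [show -(π/4) + π = 3*π/4 by ring] at this
    rw [← this]
    congr 1
    funext x
    rw [C_add_pi]
    push_cast
    rw [show -(Complex.I * n * ((x:ℂ) + π)) = -(Complex.I * n * π) + -(Complex.I * n * x) by ring,
      Complex.exp_add]
    ring
  rw [e2]
  have e3 : Complex.exp (-(Complex.I * n * π)) = (-1)^n := by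
    rw [show -(Complex.I * n * π) = n * (-(π * Complex.I)) by ring, Complex.exp_int_mul,
      Complex.exp_neg, Complex.exp_pi_mul_I]
    norm_num
  rw [e3]
  by_cases hn : Even n
  · rw [hn.neg_one_zpow]
    simp [ch, hn]
  · rw [(Int.not_even_iff_odd.1 hn).neg_one_zpow, half_int hn]
    have := n_ne hn
    have := four_sub_ne hn
    simp only [ch, hn, if_false]
    have hpc : (π:ℂ) ≠ 0 := by exact_mod_cast hp.ne'
    have hnc : (n : ℂ) ≠ 0 := by exact_mod_cast n_ne hn
    have h4c : (4:ℂ) - n^2 ≠ 0 := by exact_mod_cast four_sub_ne hn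
    simp only [Complex.real_smul]
    push_cast
    field_simp
    ring

theorem ch_summable : Summable (fun n => |ch n|) := by
  have h := (Real.summable_one_div_int_pow (p := 2)).2 (by norm_num)
  refine Summable.of_nonneg_of_le (fun n => abs_nonneg _) (fun n => ?_) (h.mul_left (8 / π))
  have hp := pi_pos
  unfold ch
  split_ifs with hn
  · simp; positivity
  · have h1 := n_ne hn
    have h2 := four_sub_ne hn
    have h3 : |(n:ℝ)| ≤ |4 - (n:ℝ)^2| := by
      apply sq_le_sq.1
      have : (0:ℤ) ≤ (4 - n^2)^2 - n^2 := by
        have hh : n^2 = 1 ∨ 9 ≤ n^2 := by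
          obtain ⟨k, rfl⟩ := Int.not_even_iff_odd.1 hn
          rcases lt_trichotomy k 0 with hk | hk | hk
          · rcases eq_or_ne k (-1) with rfl | hk'
            · left; norm_num
            · right
              have : k ≤ -2 := by omega
              nlinarith
          · left; simp [hk]
          · right; nlinarith
        rcases hh with hh | hh
        · rw [hh]; norm_num
        · nlinarith
      have : (0:ℝ) ≤ (4 - n^2)^2 - n^2 := by exact_mod_cast this
      linarith
    rw [abs_div, abs_mul, abs_mul, abs_mul, abs_of_pos hp, ← sq_abs (n:ℝ)]
    have h4 := abs_sin_le_one (n * (π/4))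
    have h5 : 0 < |(n:ℝ)| := abs_pos.2 h1
    rw [sq_abs]
    calc |(8:ℝ)| * |sin (n * (π/4))| / (π * |(n:ℝ)| * |4 - (n:ℝ)^2|)
        ≤ 8 * 1 / (π * |(n:ℝ)| * |(n:ℝ)|) := by
          rw [abs_of_pos (by norm_num : (0:ℝ) < 8)]
          gcongr
      _ = 8 / π * (1 / (n:ℝ)^2) := by
          rw [mul_assoc, ← sq, sq_abs]; field_simp

theorem C_hasSum (x : ℝ) : HasSum (fun n : ℤ => ch n * cos (n * x)) (C x) := by
  have hs : Summable (fourierCoeff fc) := by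
    have : fourierCoeff fc = fun n => (ch n : ℂ) := funext ch_coeff
    rw [this]
    refine Summable.of_norm ?_
    simpa using ch_summable
  have h := has_pointwise_sum_fourier_series_of_summable hs (x : AddCircle (2*π))
  have h2 := Complex.hasSum_re h
  rw [fc_coe, Complex.ofReal_re] at h2
  convert h2 using 1
  funext n
  rw [ch_coeff, fourier_coe_apply, smul_eq_mul, Complex.re_ofReal_mul]
  congr 1
  have : (π:ℂ) ≠ 0 := by exact_mod_cast pi_ne_zero
  rw [show 2 * (π:ℂ) * Complex.I * n * x / ((2 * π : ℝ) : ℂ) = ((n * x : ℝ) : ℂ) * Complex.I by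
    push_cast; field_simp, Complex.exp_ofReal_mul_I_re]

noncomputable def gam (n : ℤ) : ℝ :=
  if Even n then 0 else 16 * cos (n * (π/4)) / (π^2 * n^2 * (4 - n^2))

theorem G_hasSum (x : ℝ) : HasSum (fun n : ℤ => gam n * cos (n * x)) (G x) := by
  have hp := pi_pos
  have h : HasSum (fun n : ℤ => ∫ t in (-(π/2))..(π/2), ch n * cos (n * (x + t)))
      (∫ t in (-(π/2))..(π/2), C (x + t)) := by
    apply intervalIntegral.hasSum_integral_of_dominated_convergence (fun n _ => |ch n|)
    · intro n
      apply Continuous.aestronglyMeasurable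
      fun_prop
    · intro n
      refine Filter.Eventually.of_forall fun t _ => ?_
      rw [Real.norm_eq_abs, abs_mul]
      exact mul_le_of_le_one_right (abs_nonneg _) (abs_cos_le_one _)
    · exact Filter.Eventually.of_forall fun t _ => ch_summable
    · exact intervalIntegrable_const
    · exact Filter.Eventually.of_forall fun t _ => C_hasSum _
  have h2 := h.mul_left (1/π)
  change HasSum _ (G x) at h2
  convert h2 using 1
  funext n
  unfold ch gam
  split_ifs with hn
  · simp
  have h1 := n_ne hn
  have h4 := four_sub_ne hn
  obtain ⟨t1, t2⟩ := trig hn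
  have hI : ∫ t in (-(π/2))..(π/2), cos (n * (x + t))
      = 2 * cos (n * x) * sin (n * (π/2)) / n := by
    have e1 : ∀ t : ℝ, cos (n * (x + t)) = cos (n * t + n * x) := by intro t; ring_nf
    simp_rw [e1]
    rw [intervalIntegral.integral_comp_mul_add (fun y => cos y) h1, integral_cos, sin_add, sin_add]
    rw [show (n:ℝ) * -(π/2) = -(n * (π/2)) by ring, sin_neg, cos_neg, smul_eq_mul]
    field_simp
    ring
  rw [intervalIntegral.integral_const_mul, hI,
    show (n:ℝ) * (π/2) = 2 * (n * (π/4)) by ring, sin_two_mul]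
  generalize cos (n * (π/4)) = c at *
  generalize sin (n * (π/4)) = s at *
  field_simp
  linear_combination (-32) * c * cos (n * x) * t2

theorem gam_sign (n : ℤ) (k1 : n ≠ 1) (k2 : n ≠ -1) :
    |gam n| = - (√2 * (gam n * cos (n * (π / 4)))) := by
  unfold gam
  split_ifs with hn
  · simp
  have hp := pi_pos
  obtain ⟨t1, -⟩ := trig hn
  set c := cos (n * (π/4))
  have hc : |c| = √2/2 := by
    rw [← Real.sqrt_sq_eq_abs, t1, Real.sqrt_eq_iff_mul_self_eq (by norm_num) (by positivity)]
    have : (√2)^2 = 2 := Real.sq_sqrt (by norm_num)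
    linear_combination (-1/4) * this
  have h9 : (9:ℝ) ≤ (n:ℝ)^2 := by
    have : (9:ℤ) ≤ n^2 := by
      obtain ⟨k, rfl⟩ := Int.not_even_iff_odd.1 hn
      have : 1 ≤ k ∨ k ≤ -2 := by omega
      rcases this with h | h <;> nlinarith
    exact_mod_cast this
  have hd : π^2 * n^2 * (4 - (n:ℝ)^2) < 0 := by
    apply mul_neg_of_pos_of_neg
    · positivity
    · linarith
  rw [abs_div, abs_mul, hc, abs_of_neg hd, abs_of_pos (by norm_num : (0:ℝ) < 16)]
  have hd' := hd.ne
  rw [show -(√2 * (16 * c / (π^2 * n^2 * (4 - (n:ℝ)^2)) * c))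
    = (16 * √2 * c^2) / -(π^2 * n^2 * (4 - (n:ℝ)^2)) by rw [div_neg]; ring, t1]
  ring

theorem gam_one : 0 < gam 1 := by
  have hp := pi_pos
  have : ¬ Even (1:ℤ) := by decide
  simp [gam, this]
  positivity

theorem gam_neg_one : gam (-1) = gam 1 := by
  have : ¬ Even (1:ℤ) := by decide
  simp [gam, this]

theorem upper {m n : ℕ} (A : Matrix (Fin m) (Fin n) ℝ)
    (u : Fin m → EuclideanSpace ℝ (Fin 2)) (v : Fin n → EuclideanSpace ℝ (Fin 2))
    (hu : ∀ i, ‖u i‖ = 1) (hv : ∀ j, ‖v j‖ = 1) :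
    |∑ i, ∑ j, A i j * (inner ℝ (u i) (v j) : ℝ)| ≤ √2 * normInftyOne A := by
  choose a ha using fun i => exists_angle (u i) (hu i)
  choose b hb using fun j => exists_angle (v j) (hv j)
  have e : ∀ i j, (inner ℝ (u i) (v j) : ℝ) = cos (a i - b j) := by
    intro i j
    simp [PiLp.inner_apply, Fin.sum_univ_two, cos_sub, (ha i).1, (ha i).2, (hb j).1, (hb j).2]
    ring
  simp_rw [e]
  exact abstract_bound gam G G_hasSum gam_one gam_neg_one gam_sign G_pi4 A (G_bound A) a b

end Kriv
/-- Krivine's theorem: the 2-dimensional real Grothendieck constant equals `√2`. -/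
theorem krivine_KG_two :
    sInf { K : ℝ | 0 ≤ K ∧ ∀ (m n : ℕ) (A : Matrix (Fin m) (Fin n) ℝ)
      (u : Fin m → EuclideanSpace ℝ (Fin 2)) (v : Fin n → EuclideanSpace ℝ (Fin 2)),
      (∀ i, ‖u i‖ = 1) → (∀ j, ‖v j‖ = 1) →
      |∑ i, ∑ j, A i j * (inner ℝ (u i) (v j) : ℝ)| ≤ K * normInftyOne A }
    = Real.sqrt 2 := by

  refine IsLeast.csInf_eq ⟨⟨Real.sqrt_nonneg 2, fun m n A u v hu hv => Kriv.upper A u v hu hv⟩, ?_⟩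
  rintro K ⟨hK, h⟩
  exact Kriv.lower K hK h
end

section
/- Generalised Krivine estimate for bounded kernels: let k, m, n, d ∈ ℕ, let f, g : ℝ^k → ℝ be measurable with |f(x)| ≤ M_f and |g(x)| ≤ M_g for all x. Then for every real m×n matrix A and all vectors u_1, …, u_m, v_1, …, v_n in the Euclidean space ℝ^d with ‖u_i‖ = 1 and ‖v_j‖ = 1, one has |∑_{i=1}^m ∑_{j=1}^n A i j · h_{f,g}(⟨u_i, v_j⟩)| ≤ M_f · M_g · ‖A‖_{∞,1}. -/
open scoped BigOperators
open MeasureTheory ProbabilityTheory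

/-- The standard Gaussian product measure `γ_k` on `ℝ^k`. -/
noncomputable def gaussK (k : ℕ) : Measure (Fin k → ℝ) :=
  Measure.pi fun _ => gaussianReal 0 1

/-- `h_{f,g}(ρ) = ∫∫ f(x) g(ρ x + √(1-ρ²) y) dγ_k(x) dγ_k(y)`. -/
noncomputable def hfg {k : ℕ} (f g : (Fin k → ℝ) → ℝ) (ρ : ℝ) : ℝ :=
  ∫ x, ∫ y, f x * g (fun i => ρ * x i + Real.sqrt (1 - ρ ^ 2) * y i)
    ∂(gaussK k) ∂(gaussK k)


lemma gk_char (c : ℝ) : ∫ x, Complex.exp ((c * x : ℝ) * Complex.I) ∂(gaussianReal 0 1)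
    = Complex.exp (-(c ^ 2 / 2 : ℝ)) := by
  have h := charFun_gaussianReal (μ := 0) (v := 1) c
  rw [charFun_apply_real] at h
  simp only [Complex.ofReal_mul]
  rw [h]
  congr 1
  push_cast
  ring

lemma gk_char_pi (d : ℕ) (w : Fin d → ℝ) :
    ∫ x, Complex.exp ((∑ a, w a * x a : ℝ) * Complex.I)
      ∂(Measure.pi fun _ : Fin d => gaussianReal 0 1)
    = Complex.exp (-((∑ a, w a ^ 2) / 2 : ℝ)) := by
  have h := integral_fintype_prod_eq_prod (𝕜 := ℂ) (ι := Fin d) (E := fun _ => ℝ)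
    (fun a x => Complex.exp ((w a * x : ℝ) * Complex.I)) (μ := fun _ => gaussianReal 0 1)
  simp only [gk_char, ← Complex.exp_sum] at h
  rw [show ∑ i, (-((w i ^ 2 / 2 : ℝ) : ℂ)) = (-((∑ a, w a ^ 2) / 2 : ℝ)) by
    push_cast; rw [Finset.sum_neg_distrib, Finset.sum_div]] at h
  rw [← h]
  congr 1; ext x
  rw [← Finset.sum_mul, Complex.ofReal_sum]

lemma gk_char_prod (s t : ℝ) :
    ∫ p, Complex.exp ((s * p.1 + t * p.2 : ℝ) * Complex.I)
      ∂((gaussianReal 0 1).prod (gaussianReal 0 1))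
    = Complex.exp (-((s ^ 2 + t ^ 2) / 2 : ℝ)) := by
  have h := integral_prod_mul (μ := gaussianReal 0 1) (ν := gaussianReal 0 1)
    (fun x : ℝ => Complex.exp ((s * x : ℝ) * Complex.I))
    (fun x : ℝ => Complex.exp ((t * x : ℝ) * Complex.I))
  simp only [gk_char, ← Complex.exp_add] at h
  have e : Complex.exp (-((s ^ 2 + t ^ 2) / 2 : ℝ))
      = Complex.exp (-(s ^ 2 / 2 : ℝ) + -(t ^ 2 / 2 : ℝ)) := by
    congr 1; push_cast; ring
  rw [e, ← h]
  refine integral_congr_ae (ae_of_all _ fun x => ?_)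
  dsimp only
  congr 1; push_cast; ring

lemma gk_law (d : ℕ) (u v : Fin d → ℝ) (ρ : ℝ) (hu : ∑ a, u a ^ 2 = 1) (hv : ∑ a, v a ^ 2 = 1)
    (hρ : ∑ a, u a * v a = ρ) :
    (Measure.pi fun _ : Fin d => gaussianReal 0 1).map
      (fun x => (∑ a, u a * x a, ∑ a, v a * x a)) =
    ((gaussianReal 0 1).prod (gaussianReal 0 1)).map
      (fun p : ℝ × ℝ => (p.1, ρ * p.1 + Real.sqrt (1 - ρ ^ 2) * p.2)) := by
  have hle : ρ ^ 2 ≤ 1 := by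
    have := Finset.sum_mul_sq_le_sq_mul_sq Finset.univ u v
    rw [hu, hv, hρ] at this; simpa using this
  have hm1 : Measurable (fun x : Fin d → ℝ => (∑ a, u a * x a, ∑ a, v a * x a)) := by fun_prop
  have hm2 : Measurable (fun p : ℝ × ℝ => (p.1, ρ * p.1 + Real.sqrt (1 - ρ ^ 2) * p.2)) := by
    fun_prop
  have := Measure.isProbabilityMeasure_map
    (μ := (Measure.pi fun _ : Fin d => gaussianReal 0 1)) hm1.aemeasurable
  have := Measure.isProbabilityMeasure_map
    (μ := ((gaussianReal 0 1).prod (gaussianReal 0 1))) hm2.aemeasurable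
  apply Measure.ext_of_charFunDual
  ext L
  have hL : ∀ p : ℝ × ℝ, L p = L (1, 0) * p.1 + L (0, 1) * p.2 := by
    intro p
    have : p = p.1 • ((1, 0) : ℝ × ℝ) + p.2 • ((0, 1) : ℝ × ℝ) := by ext <;> simp
    conv_lhs => rw [this]
    rw [map_add, map_smul, map_smul, smul_eq_mul, smul_eq_mul]; ring
  generalize L (1, 0) = s at hL
  generalize L (0, 1) = t at hL
  rw [charFunDual_apply, charFunDual_apply,
    integral_map hm1.aemeasurable (by fun_prop), integral_map hm2.aemeasurable (by fun_prop)]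
  simp only [hL]
  have e1 : ∀ x : Fin d → ℝ, s * ∑ a, u a * x a + t * ∑ a, v a * x a
      = ∑ a, (s * u a + t * v a) * x a := by
    intro x
    rw [Finset.mul_sum, Finset.mul_sum, ← Finset.sum_add_distrib]
    exact Finset.sum_congr rfl fun a _ => by ring
  have e2 : ∀ p : ℝ × ℝ, s * p.1 + t * (ρ * p.1 + Real.sqrt (1 - ρ ^ 2) * p.2)
      = (s + t * ρ) * p.1 + (t * Real.sqrt (1 - ρ ^ 2)) * p.2 := by intro p; ring
  simp only [e1, e2]
  rw [gk_char_pi, gk_char_prod]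
  congr 4
  have : ∑ a, (s * u a + t * v a) ^ 2
      = s ^ 2 * ∑ a, u a ^ 2 + 2 * s * t * ∑ a, u a * v a + t ^ 2 * ∑ a, v a ^ 2 := by
    simp only [Finset.mul_sum, ← Finset.sum_add_distrib]
    exact Finset.sum_congr rfl fun a _ => by ring
  rw [this, hu, hv, hρ, mul_pow t, Real.sq_sqrt (by linarith)]
  ring

lemma gk_integrable {α : Type*} [MeasurableSpace α] (μ : Measure α) [IsProbabilityMeasure μ]
    (F G : α → ℝ) (hF : Measurable F) (hG : Measurable G) (a b : ℝ)
    (hFb : ∀ x, |F x| ≤ a) (hGb : ∀ x, |G x| ≤ b) : Integrable (fun x => F x * G x) μ := by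
  refine Integrable.of_bound (hF.mul hG).aestronglyMeasurable (a * b) (ae_of_all _ fun x => ?_)
  rw [Real.norm_eq_abs, abs_mul]
  exact mul_le_mul (hFb x) (hGb x) (abs_nonneg _) ((abs_nonneg _).trans (hFb x))

lemma gk_hfg (k d : ℕ) (f g : (Fin k → ℝ) → ℝ) (Mf Mg : ℝ)
    (hf : Measurable f) (hg : Measurable g)
    (hfb : ∀ x, |f x| ≤ Mf) (hgb : ∀ x, |g x| ≤ Mg)
    (u v : Fin d → ℝ) (ρ : ℝ) (hu : ∑ a, u a ^ 2 = 1) (hv : ∑ a, v a ^ 2 = 1)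
    (hρ : ∑ a, u a * v a = ρ) :
    hfg f g ρ = ∫ ω, f (fun l => ∑ a, u a * ω l a) * g (fun l => ∑ a, v a * ω l a)
      ∂(Measure.pi fun _ : Fin k => Measure.pi fun _ : Fin d => gaussianReal 0 1) := by
  have hm1 : Measurable (fun x : Fin d → ℝ => (∑ a, u a * x a, ∑ a, v a * x a)) := by fun_prop
  have hm2 : Measurable (fun p : ℝ × ℝ => (p.1, ρ * p.1 + Real.sqrt (1 - ρ ^ 2) * p.2)) := by
    fun_prop
  have law := gk_law d u v ρ hu hv hρ
  have hmH : Measurable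
      (fun z : Fin k → ℝ × ℝ => f (fun l => (z l).1) * g (fun l => (z l).2)) :=
    (hf.comp (by fun_prop)).mul (hg.comp (by fun_prop))
  have i1 := Measure.isProbabilityMeasure_map
    (μ := (Measure.pi fun _ : Fin d => gaussianReal 0 1)) hm1.aemeasurable
  have i2 := Measure.isProbabilityMeasure_map
    (μ := ((gaussianReal 0 1).prod (gaussianReal 0 1))) hm2.aemeasurable
  have p1 := measurePreserving_pi (ι := Fin k) (fun _ => Measure.pi fun _ : Fin d => gaussianReal 0 1)
    _ (fun _ => hm1.measurePreserving _)
  have p2 := measurePreserving_pi (ι := Fin k) (fun _ => (gaussianReal 0 1).prod (gaussianReal 0 1))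
    _ (fun _ => hm2.measurePreserving _)
  have p3 := measurePreserving_arrowProdEquivProdArrow ℝ ℝ (Fin k)
    (fun _ => gaussianReal 0 1) (fun _ => gaussianReal 0 1)
  have q1 := integral_map (μ := Measure.pi fun _ : Fin k => Measure.pi fun _ : Fin d => gaussianReal 0 1) p1.measurable.aemeasurable (hmH.aestronglyMeasurable)
  have q2 := integral_map (μ := Measure.pi fun _ : Fin k => (gaussianReal 0 1).prod (gaussianReal 0 1)) p2.measurable.aemeasurable (hmH.aestronglyMeasurable)
  rw [p1.map_eq] at q1
  rw [p2.map_eq] at q2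
  rw [law] at q1
  rw [← q1, q2]
  unfold hfg gaussK
  rw [integral_integral (f := fun (x y : Fin k → ℝ) => f x * g (fun i => ρ * x i + Real.sqrt (1 - ρ ^ 2) * y i))]
  · rw [← p3.integral_comp']
    rfl
  · exact gk_integrable _ (fun z : (Fin k → ℝ) × (Fin k → ℝ) => f z.1)
      (fun z => g (fun i => ρ * z.1 i + Real.sqrt (1 - ρ ^ 2) * z.2 i))
      (hf.comp measurable_fst) (hg.comp (by fun_prop)) Mf Mg (fun _ => hfb _) (fun _ => hgb _)

lemma gk_norm {m n : ℕ} (A : Matrix (Fin m) (Fin n) ℝ) (a b : ℝ) (ha : 0 ≤ a) (hb : 0 ≤ b)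
    (p : Fin m → ℝ) (q : Fin n → ℝ) (hp : ∀ i, |p i| ≤ a) (hq : ∀ j, |q j| ≤ b) :
    |∑ i, ∑ j, A i j * (p i * q j)| ≤ a * b * normInftyOne A := by
  have hbdd : BddAbove { x : ℝ | ∃ p : Fin m → ℝ, ∃ q : Fin n → ℝ,
      (∀ i, |p i| ≤ 1) ∧ (∀ j, |q j| ≤ 1) ∧ x = |∑ i, ∑ j, A i j * p i * q j| } := by
    refine ⟨∑ i, ∑ j, |A i j|, ?_⟩
    rintro x ⟨p, q, hp, hq, rfl⟩
    refine (Finset.abs_sum_le_sum_abs _ _).trans (Finset.sum_le_sum fun i _ => ?_)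
    refine (Finset.abs_sum_le_sum_abs _ _).trans (Finset.sum_le_sum fun j _ => ?_)
    rw [abs_mul, abs_mul, mul_assoc]
    exact mul_le_of_le_one_right (abs_nonneg _) (mul_le_one₀ (hp i) (abs_nonneg _) (hq j))
  have key : ∀ (c x : ℝ), 0 ≤ c → |x| ≤ c → |x / c| ≤ 1 ∧ x = c * (x / c) := by
    intro c x hc hx
    rcases hc.eq_or_lt with rfl | hc'
    · have : x = 0 := abs_nonpos_iff.mp hx
      simp [this]
    · refine ⟨?_, by field_simp⟩
      rw [abs_div, abs_of_pos hc']
      exact (div_le_one hc').2 hx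
  have h := le_csSup hbdd ⟨fun i => p i / a, fun j => q j / b,
    fun i => (key a _ ha (hp i)).1, fun j => (key b _ hb (hq j)).1, rfl⟩
  have e : ∑ i, ∑ j, A i j * (p i * q j)
      = a * b * ∑ i, ∑ j, A i j * (p i / a) * (q j / b) := by
    simp only [Finset.mul_sum]
    refine Finset.sum_congr rfl fun i _ => Finset.sum_congr rfl fun j _ => ?_
    conv_lhs => rw [(key a _ ha (hp i)).2, (key b _ hb (hq j)).2]
    ring
  rw [e, abs_mul, abs_of_nonneg (mul_nonneg ha hb)]
  exact mul_le_mul_of_nonneg_left h (mul_nonneg ha hb)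

/-- Generalised Krivine estimate for bounded kernels. -/
theorem generalized_krivine_bound
    (k m n d : ℕ) (f g : (Fin k → ℝ) → ℝ) (Mf Mg : ℝ)
    (hfmeas : Measurable f) (hgmeas : Measurable g)
    (hfb : ∀ x, |f x| ≤ Mf) (hgb : ∀ x, |g x| ≤ Mg)
    (A : Matrix (Fin m) (Fin n) ℝ)
    (u : Fin m → EuclideanSpace ℝ (Fin d)) (v : Fin n → EuclideanSpace ℝ (Fin d))
    (hu : ∀ i, ‖u i‖ = 1) (hv : ∀ j, ‖v j‖ = 1) :
    |∑ i, ∑ j, A i j * hfg f g (inner ℝ (u i) (v j) : ℝ)| ≤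
      Mf * Mg * normInftyOne A := by
  have ha : 0 ≤ Mf := (abs_nonneg _).trans (hfb 0)
  have hb : 0 ≤ Mg := (abs_nonneg _).trans (hgb 0)
  have sq : ∀ w : EuclideanSpace ℝ (Fin d), ‖w‖ = 1 → ∑ a, w a ^ 2 = 1 := by
    intro w hw
    have := EuclideanSpace.real_norm_sq_eq w
    rw [hw] at this
    simpa using this.symm
  have hh : ∀ i j, hfg f g (inner ℝ (u i) (v j) : ℝ) = _ := fun i j =>
    gk_hfg k d f g Mf Mg hfmeas hgmeas hfb hgb (u i) (v j) _ (sq _ (hu i)) (sq _ (hv j))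
      (by simp [PiLp.inner_apply, mul_comm])
  simp only [hh]
  have hint : ∀ i j, Integrable (fun ω : Fin k → Fin d → ℝ =>
      f (fun l => ∑ a, u i a * ω l a) * g (fun l => ∑ a, v j a * ω l a))
      (Measure.pi fun _ : Fin k => Measure.pi fun _ : Fin d => gaussianReal 0 1) := fun i j =>
    gk_integrable _ _ _ (hfmeas.comp (by fun_prop)) (hgmeas.comp (by fun_prop)) Mf Mg
      (fun _ => hfb _) (fun _ => hgb _)
  have e : ∑ i, ∑ j, A i j * (∫ ω : Fin k → Fin d → ℝ,
      f (fun l => ∑ a, u i a * ω l a) * g (fun l => ∑ a, v j a * ω l a)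
      ∂(Measure.pi fun _ : Fin k => Measure.pi fun _ : Fin d => gaussianReal 0 1))
      = ∫ ω : Fin k → Fin d → ℝ, ∑ i, ∑ j, A i j *
      (f (fun l => ∑ a, u i a * ω l a) * g (fun l => ∑ a, v j a * ω l a))
      ∂(Measure.pi fun _ : Fin k => Measure.pi fun _ : Fin d => gaussianReal 0 1) := by
    rw [integral_finsetSum _ (fun i _ => integrable_finsetSum _
      (fun j _ => (hint i j).const_mul (A i j)))]
    refine Finset.sum_congr rfl fun i _ => ?_
    rw [integral_finsetSum _ (fun j _ => (hint i j).const_mul (A i j))]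
    exact Finset.sum_congr rfl fun j _ => (integral_const_mul _ _).symm
  rw [e]
  rw [← Real.norm_eq_abs]
  refine (norm_integral_le_of_norm_le_const (C := Mf * Mg * normInftyOne A)
    (ae_of_all _ fun ω => ?_)).trans (by simp)
  rw [Real.norm_eq_abs]
  exact gk_norm A Mf Mg ha hb (fun i => f (fun l => ∑ a, u i a * ω l a))
    (fun j => g (fun l => ∑ a, v j a * ω l a)) (fun _ => hfb _) (fun _ => hgb _)
end

section
/- A Nesterov-type bound on first Gaussian Fourier coefficients via the little Grothendieck inequality: let k ∈ ℕ, M ≥ 0, and let f : ℝ^k → ℝ be a measurable odd function (f(−x) = −f(x) for all x) with |f(x)| ≤ M for all x. Then ∑_{i=1}^k ( ∫_{ℝ^k} f(x) · x_i dγ_k(x) )² ≤ (2/π) · M². (Equality holds for k = 1 and f = sign.) -/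
open scoped BigOperators
open MeasureTheory ProbabilityTheory

lemma abs_moment_std : ∫ x, |x| ∂(gaussianReal 0 1) = Real.sqrt (2 / Real.pi) := by
  rw [integral_gaussianReal_eq_integral_smul one_ne_zero]
  have h1 : ∀ x : ℝ, gaussianPDFReal 0 1 x • |x|
      = (fun y : ℝ => (Real.sqrt (2 * Real.pi))⁻¹ * (y ^ (1:ℝ) * Real.exp (-(1/2) * y ^ (2:ℝ)))) |x| := by
    intro x
    simp [gaussianPDFReal]
    ring_nf
  simp_rw [h1]
  rw [integral_comp_abs (f := fun y : ℝ => (Real.sqrt (2 * Real.pi))⁻¹ * (y ^ (1:ℝ) * Real.exp (-(1/2) * y ^ (2:ℝ)))),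
    integral_const_mul, integral_rpow_mul_exp_neg_mul_rpow (by norm_num) (by norm_num) (by norm_num)]
  have hp := Real.pi_pos
  norm_num [Real.rpow_neg_one]
  field_simp
  norm_num

lemma abs_moment (s : ℝ) (v : NNReal) (hv : (v : ℝ) = s ^ 2) (hs : 0 ≤ s) :
    ∫ x, |x| ∂(gaussianReal 0 v) = s * Real.sqrt (2 / Real.pi) := by
  have h := gaussianReal_map_const_mul (μ := 0) (v := 1) s
  have hv' : NNReal.mk (s ^ 2) (sq_nonneg s) * 1 = v := by
    ext; simp [hv]
  have h' : (gaussianReal 0 1).map (s * ·) = gaussianReal 0 v := by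
    rw [h, mul_zero]; congr 1
  rw [← h', integral_map (by fun_prop) (by fun_prop)]
  simp_rw [abs_mul, abs_of_nonneg hs]
  rw [integral_const_mul, abs_moment_std]

lemma lin_moment (k : ℕ) (a : Fin k → ℝ) :
    ∫ x, |∑ i, a i * x i| ∂(gaussK k) = Real.sqrt (∑ i, a i ^ 2) * Real.sqrt (2 / Real.pi) := by
  have hS : 0 ≤ ∑ i, a i ^ 2 := Finset.sum_nonneg fun i _ => sq_nonneg _
  have hlaw : (gaussK k).map (fun x => ∑ i, a i * x i)
      = gaussianReal 0 (∑ i, a i ^ 2).toNNReal := by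
    have hind : iIndepFun (fun i (x : Fin k → ℝ) => a i * x i) (gaussK k) :=
      iIndepFun_pi (X := fun i (y : ℝ) => a i * y) (fun i => by fun_prop)
    have hG : ∀ i, HasGaussianLaw (fun (x : Fin k → ℝ) => a i * x i) (gaussK k) := by
      intro i
      have : (gaussK k).map (fun x => x i) = gaussianReal 0 1 :=
        (measurePreserving_eval (fun _ : Fin k => gaussianReal 0 1) i).map_eq
      constructor
      have h2 : (gaussK k).map (fun x => a i * x i) = (gaussianReal 0 1).map (a i * ·) := by
        rw [← this, Measure.map_map (by fun_prop) (by fun_prop)]; rfl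
      rw [h2, gaussianReal_map_const_mul]
      infer_instance
    rw [(hind.hasGaussianLaw_fun_sum hG).map_eq_gaussianReal]
    congr 1
    · rw [integral_finsetSum _ fun i _ => (hG i).integrable]
      refine Finset.sum_eq_zero fun i _ => ?_
      rw [integral_const_mul]
      have := integral_comp_eval (μ := fun _ : Fin k => gaussianReal 0 1) (i := i)
        (f := fun y : ℝ => y) (by fun_prop)
      rw [gaussK, this]; simp
    · congr 1
      have h := variance_sum_pi (μ := fun _ : Fin k => gaussianReal 0 1)
        (X := fun i (y : ℝ) => a i * y)
        (fun i => (memLp_id_gaussianReal 2).const_mul (a i))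
      have h3 : (fun x : Fin k → ℝ => ∑ i, a i * x i)
        = ∑ i, fun x : Fin k → ℝ => a i * x i := by ext; simp
      rw [h3, gaussK, h]
      refine Finset.sum_congr rfl fun i _ => ?_
      rw [variance_const_mul, variance_fun_id_gaussianReal]; simp
  rw [← abs_moment (Real.sqrt (∑ i, a i ^ 2)) _ (by
    rw [Real.sq_sqrt hS, Real.coe_toNNReal _ hS]) (Real.sqrt_nonneg _), ← hlaw,
    integral_map (Measurable.aemeasurable (by fun_prop)) (by fun_prop)]

/-- Nesterov-type bound on the first Gaussian Fourier coefficients of a bounded odd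
function: `∑ i (∫ f(x) xᵢ dγ_k(x))² ≤ (2/π) M²`. -/
theorem nesterov_first_fourier_bound
    (k : ℕ) (M : ℝ) (hM : 0 ≤ M) (f : (Fin k → ℝ) → ℝ)
    (hmeas : Measurable f) (hodd : ∀ x, f (-x) = - f x) (hb : ∀ x, |f x| ≤ M) :
    ∑ i : Fin k, (∫ x, f x * x i ∂(gaussK k)) ^ 2 ≤ (2 / Real.pi) * M ^ 2 := by
  have hx : ∀ i, Integrable (fun x : Fin k → ℝ => x i) (gaussK k) := fun i =>
    ((measurePreserving_eval (fun _ : Fin k => gaussianReal 0 1) i).integrable_comp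
      (by fun_prop)).2 ((memLp_id_gaussianReal 1).integrable (by simp))
  have hfx : ∀ i, Integrable (fun x : Fin k → ℝ => f x * x i) (gaussK k) := fun i =>
    (hx i).bdd_mul hmeas.aestronglyMeasurable (c := M) (by simpa using ae_of_all _ hb)
  set a : Fin k → ℝ := fun i => ∫ x, f x * x i ∂(gaussK k) with ha
  change ∑ i, a i ^ 2 ≤ _
  set S := ∑ i, a i ^ 2 with hS'
  have hS : 0 ≤ S := Finset.sum_nonneg fun i _ => sq_nonneg _
  have hlin : Integrable (fun x : Fin k → ℝ => ∑ i, a i * x i) (gaussK k) :=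
    integrable_finsetSum _ fun i _ => (hx i).const_mul _
  have key : S ≤ M * (Real.sqrt S * Real.sqrt (2 / Real.pi)) := by
    have e : S = ∫ x, f x * ∑ i, a i * x i ∂(gaussK k) := by
      have : ∀ x : Fin k → ℝ, f x * ∑ i, a i * x i = ∑ i, a i * (f x * x i) := by
        intro x; rw [Finset.mul_sum]; exact Finset.sum_congr rfl fun i _ => by ring
      simp_rw [this]
      rw [integral_finsetSum _ fun i _ => (hfx i).const_mul _]
      simp_rw [integral_const_mul]
      exact Finset.sum_congr rfl fun i _ => by rw [sq]
    rw [← lin_moment, ← integral_const_mul]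
    conv_lhs => rw [e]
    refine integral_mono (hlin.bdd_mul hmeas.aestronglyMeasurable (c := M) (by simpa using ae_of_all _ hb)) (hlin.abs.const_mul M) fun x => ?_
    calc _ ≤ |f x * ∑ i, a i * x i| := le_abs_self _
      _ = |f x| * |∑ i, a i * x i| := abs_mul _ _
      _ ≤ _ := by gcongr; exact hb x
  have hs := Real.sq_sqrt hS
  have hq := Real.sq_sqrt (show 0 ≤ 2 / Real.pi by positivity)
  have hs0 := Real.sqrt_nonneg S
  have hq0 := Real.sqrt_nonneg (2 / Real.pi)
  rw [← hq]
  set t := Real.sqrt S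
  set q := Real.sqrt (2 / Real.pi)
  rw [← hs] at key ⊢
  rcases hs0.eq_or_lt with h | h
  · rw [← h, zero_pow two_ne_zero]; positivity
  · have : t ≤ q * M := by nlinarith
    nlinarith
end

section
/- Representation theorem for odd continuous CCP functions: let k ≥ 1 and let ψ : [-1,1] → ℝ be continuous and odd. Then ψ is completely correlation preserving if and only if there exists a measurable odd function f : ℝ^k → ℝ with ∫_{ℝ^k} f(x)² dγ_k(x) = 1 such that ψ(ρ) = h_{f,f}(ρ) for every ρ ∈ [-1,1]. -/
open scoped BigOperators
open MeasureTheory ProbabilityTheory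

/-- A real square matrix is a correlation matrix if it is positive semidefinite
(symmetric with nonnegative quadratic form) and has unit diagonal. -/
def IsCorrMat {n : ℕ} (S : Matrix (Fin n) (Fin n) ℝ) : Prop :=
  S.PosSemidef ∧ ∀ i, S i i = 1

/-- A function is completely correlation preserving if its entrywise application maps
correlation matrices of every size to correlation matrices. (Entries of a correlation
matrix always lie in `[-1,1]`, so only the restriction of `h` to `[-1,1]` matters.) -/
def IsCCP (h : ℝ → ℝ) : Prop :=
  ∀ (n : ℕ) (S : Matrix (Fin n) (Fin n) ℝ), IsCorrMat S →
    IsCorrMat (Matrix.of fun i j => h (S i j))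

instance gaussK_prob (k : ℕ) : IsProbabilityMeasure (gaussK k) := by
  unfold gaussK; infer_instance

noncomputable def mixL (k : ℕ) (ρ : ℝ) : ((Fin k → ℝ) × (Fin k → ℝ)) →L[ℝ] (Fin k → ℝ) :=
  ρ • ContinuousLinearMap.fst ℝ _ _ + Real.sqrt (1 - ρ ^ 2) • ContinuousLinearMap.snd ℝ _ _

lemma mixL_apply (k : ℕ) (ρ : ℝ) (x y : Fin k → ℝ) :
    mixL k ρ (x, y) = fun i => ρ * x i + Real.sqrt (1 - ρ ^ 2) * y i := by
  ext i; simp [mixL]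

noncomputable def combL (k n : ℕ) (u : Fin n → ℝ) : (Fin n → Fin k → ℝ) →L[ℝ] (Fin k → ℝ) :=
  ∑ m, u m • ContinuousLinearMap.proj m

lemma combL_single (k n : ℕ) (u : Fin n → ℝ) (m : Fin n) (x : Fin k → ℝ) :
    combL k n u (Pi.single m x) = u m • x := by
  simp only [combL, sum_apply, smul_apply,
    ContinuousLinearMap.proj_apply]
  rw [Finset.sum_eq_single m]
  · simp
  · intro b _ hb; simp [hb]
  · simp

lemma charFunDual_gaussK (k : ℕ) (L : StrongDual ℝ (Fin k → ℝ)) :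
    charFunDual (gaussK k) L
      = Complex.exp (((-(∑ l, (L (Pi.single l 1)) ^ 2) / 2 : ℝ)) : ℂ) := by
  unfold gaussK
  rw [charFunDual_pi]
  have : ∀ i : Fin k, charFunDual (gaussianReal 0 1)
      (L.comp (ContinuousLinearMap.single ℝ (fun _ => ℝ) i))
      = Complex.exp (((-((L (Pi.single i 1)) ^ 2) / 2 : ℝ)) : ℂ) := by
    intro i
    rw [charFunDual_apply]
    have h := charFun_gaussianReal (μ := 0) (v := 1) (L (Pi.single i 1))
    rw [charFun_apply_real] at h
    convert h using 1
    · congr 1; ext v; congr 2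
      have : (Pi.single i v : Fin k → ℝ) = v • Pi.single i (1:ℝ) := by
        rw [← Pi.single_smul]; simp
      simp only [ContinuousLinearMap.comp_apply, ContinuousLinearMap.single_apply]
      rw [this, map_smul]; push_cast [smul_eq_mul]; ring
    · congr 1; push_cast; simp; ring
  rw [Finset.prod_congr rfl fun i _ => this i, ← Complex.exp_sum]
  congr 1
  rw [← Complex.ofReal_sum]
  congr 1
  rw [← Finset.sum_div, Finset.sum_neg_distrib]

lemma joint_law (k n : ℕ) (u v : Fin n → ℝ) (ρ : ℝ) (hu : ∑ m, u m ^ 2 = 1)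
    (hv : ∑ m, v m ^ 2 = 1) (huv : ∑ m, u m * v m = ρ) (hρ : ρ ∈ Set.Icc (-1 : ℝ) 1) :
    (Measure.pi fun _ : Fin n => gaussK k).map ((combL k n u).prod (combL k n v))
     = ((gaussK k).prod (gaussK k)).map ((ContinuousLinearMap.fst ℝ _ _).prod (mixL k ρ)) := by
  have : IsProbabilityMeasure ((Measure.pi fun _ : Fin n => gaussK k).map
    ((combL k n u).prod (combL k n v))) :=
    Measure.isProbabilityMeasure_map (by fun_prop)
  have : IsProbabilityMeasure (((gaussK k).prod (gaussK k)).map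
    ((ContinuousLinearMap.fst ℝ _ _).prod (mixL k ρ))) :=
    Measure.isProbabilityMeasure_map (by fun_prop)
  apply Measure.ext_of_charFunDual
  ext L
  rw [charFunDual_map, charFunDual_map, charFunDual_pi, charFunDual_prod]
  simp only [charFunDual_gaussK]
  rw [← Complex.exp_sum, ← Complex.exp_add, ← Complex.ofReal_sum, ← Complex.ofReal_add]
  congr 2
  have key : ∀ p q : Fin k → ℝ, L (p, q) = L (p, 0) + L (0, q) := by
    intro p q; rw [← map_add]; simp
  have hs : Real.sqrt (1 - ρ ^ 2) ^ 2 = 1 - ρ ^ 2 := by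
    apply Real.sq_sqrt; nlinarith [hρ.1, hρ.2]
  set a : Fin k → ℝ := fun l => L (Pi.single l 1, 0) with ha
  set b : Fin k → ℝ := fun l => L (0, Pi.single l 1) with hb
  have h1 : ∀ (m : Fin n) (l : Fin k), (L.comp ((combL k n u).prod (combL k n v))).comp
      (ContinuousLinearMap.single ℝ (fun _ => Fin k → ℝ) m) (Pi.single l 1)
      = u m * a l + v m * b l := by
    intro m l
    simp only [ContinuousLinearMap.comp_apply, ContinuousLinearMap.single_apply,
      ContinuousLinearMap.prod_apply, combL_single]
    rw [key]
    have e1 : ((u m • Pi.single l 1, 0) : (Fin k → ℝ) × (Fin k → ℝ))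
      = u m • (Pi.single l 1, 0) := by simp
    have e2 : ((0, v m • Pi.single l 1) : (Fin k → ℝ) × (Fin k → ℝ))
      = v m • (0, Pi.single l 1) := by simp
    rw [e1, e2, map_smul, map_smul]; simp [ha, hb]
  have h2 : ∀ (l : Fin k), (L.comp ((ContinuousLinearMap.fst ℝ _ _).prod (mixL k ρ))).comp
      (ContinuousLinearMap.inl ℝ _ _) (Pi.single l 1) = a l + ρ * b l := by
    intro l
    simp only [ContinuousLinearMap.comp_apply, ContinuousLinearMap.inl_apply,
      ContinuousLinearMap.prod_apply, ContinuousLinearMap.coe_fst']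
    rw [key]
    have e2 : ((0, mixL k ρ (Pi.single l 1, 0)) : (Fin k → ℝ) × (Fin k → ℝ))
      = ρ • (0, Pi.single l 1) := by simp [mixL]
    rw [e2, map_smul]; simp [ha, hb]
  have h3 : ∀ (l : Fin k), (L.comp ((ContinuousLinearMap.fst ℝ _ _).prod (mixL k ρ))).comp
      (ContinuousLinearMap.inr ℝ _ _) (Pi.single l 1) = Real.sqrt (1 - ρ ^ 2) * b l := by
    intro l
    simp only [ContinuousLinearMap.comp_apply, ContinuousLinearMap.inr_apply,
      ContinuousLinearMap.prod_apply, ContinuousLinearMap.coe_fst']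
    have e2 : ((0, mixL k ρ (0, Pi.single l 1)) : (Fin k → ℝ) × (Fin k → ℝ))
      = Real.sqrt (1 - ρ ^ 2) • (0, Pi.single l 1) := by simp [mixL]
    rw [e2, map_smul]; simp [hb]
  simp only [h1, h2, h3]
  rw [← Finset.sum_div, Finset.sum_neg_distrib, Finset.sum_comm, ← add_div, ← neg_add,
    ← Finset.sum_add_distrib]
  congr 2
  apply Finset.sum_congr rfl
  intro l _
  have : ∀ m, (u m * a l + v m * b l) ^ 2
    = a l ^ 2 * u m ^ 2 + b l ^ 2 * v m ^ 2 + 2 * a l * b l * (u m * v m) := by intro m; ring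
  simp only [this, Finset.sum_add_distrib, ← Finset.mul_sum, hu, hv, huv]
  rw [mul_pow, hs]; ring

lemma corr_mem {n : ℕ} (u v : Fin n → ℝ) (hu : ∑ m, u m ^ 2 = 1)
    (hv : ∑ m, v m ^ 2 = 1) : ∑ m, u m * v m ∈ Set.Icc (-1 : ℝ) 1 := by
  have := Finset.sum_mul_sq_le_sq_mul_sq Finset.univ u v
  rw [hu, hv] at this
  constructor <;> nlinarith

lemma comb_mp (k n : ℕ) (u : Fin n → ℝ) (hu : ∑ m, u m ^ 2 = 1) :
    MeasurePreserving (combL k n u) (Measure.pi fun _ : Fin n => gaussK k) (gaussK k) := by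
  refine ⟨by fun_prop, ?_⟩
  have h := joint_law k n u u _ hu hu rfl (corr_mem u u hu hu)
  have h2 := congrArg (Measure.map Prod.fst) h
  rw [Measure.map_map (by fun_prop) (by fun_prop), Measure.map_map (by fun_prop) (by fun_prop)]
    at h2
  have e : (Prod.fst ∘ ((ContinuousLinearMap.fst ℝ (Fin k → ℝ) (Fin k → ℝ)).prod
    (mixL k (∑ m, u m * u m)))) = Prod.fst := by ext; simp
  rw [e] at h2
  have e' : (Prod.fst ∘ ((combL k n u).prod (combL k n u))) = combL k n u := by
    ext; simp
  rw [e'] at h2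
  rw [h2]
  exact measurePreserving_fst.map_eq

lemma mix_mp (k : ℕ) (ρ : ℝ) (hρ : ρ ∈ Set.Icc (-1 : ℝ) 1) :
    MeasurePreserving (mixL k ρ) ((gaussK k).prod (gaussK k)) (gaussK k) := by
  refine ⟨by fun_prop, ?_⟩
  have hs : Real.sqrt (1 - ρ ^ 2) ^ 2 = 1 - ρ ^ 2 := by
    apply Real.sq_sqrt; nlinarith [hρ.1, hρ.2]
  have hv : ∑ m, (![ρ, Real.sqrt (1 - ρ ^ 2)] : Fin 2 → ℝ) m ^ 2 = 1 := by
    simp [Fin.sum_univ_two, hs]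
  have h := joint_law k 2 ![1, 0] ![ρ, Real.sqrt (1 - ρ ^ 2)] ρ
    (by simp [Fin.sum_univ_two]) hv (by simp [Fin.sum_univ_two]) hρ
  have h2 := congrArg (Measure.map Prod.snd) h
  rw [Measure.map_map (by fun_prop) (by fun_prop), Measure.map_map (by fun_prop) (by fun_prop)]
    at h2
  have e : (Prod.snd ∘ ((ContinuousLinearMap.fst ℝ (Fin k → ℝ) (Fin k → ℝ)).prod
    (mixL k ρ))) = mixL k ρ := by ext; simp
  rw [e] at h2
  rw [← h2]
  exact (comb_mp k 2 _ hv).map_eq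

lemma hfg_eq_prod (k : ℕ) (f g : (Fin k → ℝ) → ℝ) (ρ : ℝ) (hρ : ρ ∈ Set.Icc (-1 : ℝ) 1)
    (hf : MemLp f 2 (gaussK k)) (hg : MemLp g 2 (gaussK k)) :
    hfg f g ρ = ∫ z, f z.1 * g (mixL k ρ z) ∂((gaussK k).prod (gaussK k)) := by
  have h1 : MemLp (fun z : (Fin k → ℝ) × (Fin k → ℝ) => f z.1) 2
    ((gaussK k).prod (gaussK k)) := hf.comp_measurePreserving measurePreserving_fst
  have h2 : MemLp (fun z : (Fin k → ℝ) × (Fin k → ℝ) => g (mixL k ρ z)) 2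
    ((gaussK k).prod (gaussK k)) := hg.comp_measurePreserving (mix_mp k ρ hρ)
  rw [integral_prod (fun z => f z.1 * g (mixL k ρ z)) (h1.integrable_mul h2)]
  simp only [hfg, mixL_apply]

lemma memLp_of_int_sq {k : ℕ} {f : (Fin k → ℝ) → ℝ} (hf : Measurable f)
    (h : (∫ x, (f x) ^ 2 ∂(gaussK k)) = 1) : MemLp f 2 (gaussK k) := by
  rw [memLp_two_iff_integrable_sq hf.aestronglyMeasurable]
  by_contra hn
  rw [integral_undef hn] at h
  norm_num at h

open scoped MatrixOrder in
lemma psd_factor {n : ℕ} (S : Matrix (Fin n) (Fin n) ℝ) (h : S.PosSemidef) :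
    ∃ B : Matrix (Fin n) (Fin n) ℝ, S = B.conjTranspose * B := by
  obtain ⟨B, hB⟩ := CStarAlgebra.nonneg_iff_eq_star_mul_self.mp h.nonneg
  exact ⟨B, hB⟩

theorem ccp_of_rep (k : ℕ) (ψ : ℝ → ℝ) (f : (Fin k → ℝ) → ℝ) (hf : Measurable f)
    (h1 : (∫ x, (f x) ^ 2 ∂(gaussK k)) = 1)
    (hψ : ∀ ρ ∈ Set.Icc (-1 : ℝ) 1, ψ ρ = hfg f f ρ) : IsCCP ψ := by
  intro n S hS
  have hfL := memLp_of_int_sq hf h1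
  obtain ⟨B, hB⟩ := psd_factor S hS.1
  set u : Fin n → Fin n → ℝ := fun i m => B m i with hu
  have hS' : ∀ i j, S i j = ∑ m, u i m * u j m := by
    intro i j; rw [hB]; simp [Matrix.mul_apply, hu]
  have hun : ∀ i, ∑ m, u i m ^ 2 = 1 := by
    intro i; rw [← hS.2 i, hS']; simp [sq]
  have hmem : ∀ i j, S i j ∈ Set.Icc (-1 : ℝ) 1 := by
    intro i j; rw [hS']; exact corr_mem _ _ (hun i) (hun j)
  set P : Measure (Fin n → Fin k → ℝ) := Measure.pi fun _ => gaussK k with hP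
  have hL : ∀ i, MemLp (fun ω => f (combL k n (u i) ω)) 2 P := fun i =>
    hfL.comp_measurePreserving (comb_mp k n (u i) (hun i))
  have hent : ∀ i j, ψ (S i j) = ∫ ω, f (combL k n (u i) ω) * f (combL k n (u j) ω) ∂P := by
    intro i j
    rw [hψ _ (hmem i j), hfg_eq_prod k f f _ (hmem i j) hfL hfL]
    have hl := joint_law k n (u i) (u j) (S i j) (hun i) (hun j) (hS' i j).symm (hmem i j)
    have hm : Measurable (fun z : (Fin k → ℝ) × (Fin k → ℝ) => f z.1 * f z.2) := by fun_prop
    have e1 := integral_map (μ := P)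
      (φ := ((combL k n (u i)).prod (combL k n (u j)))) (by fun_prop)
      hm.aestronglyMeasurable
    have e2 := integral_map (μ := (gaussK k).prod (gaussK k))
      (φ := ((ContinuousLinearMap.fst ℝ (Fin k → ℝ) (Fin k → ℝ)).prod (mixL k (S i j))))
      (by fun_prop) hm.aestronglyMeasurable
    rw [hl] at e1
    rw [e1] at e2
    simpa using e2.symm
  refine ⟨?_, ?_⟩
  · refine Matrix.PosSemidef.of_dotProduct_mulVec_nonneg ?_ ?_
    · ext i j
      simp only [Matrix.conjTranspose_apply, Matrix.of_apply, star_trivial, hent]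
      simp only [mul_comm]
    · intro c
      have : star c ⬝ᵥ (Matrix.of fun i j => ψ (S i j)).mulVec c
        = ∫ ω, (∑ i, c i * f (combL k n (u i) ω)) ^ 2 ∂P := by
        have : ∀ ω, (∑ i, c i * f (combL k n (u i) ω)) ^ 2 = ∑ i, ∑ j, c i * c j *
          (f (combL k n (u i) ω) * f (combL k n (u j) ω)) := by
          intro ω; rw [sq, Finset.sum_mul_sum]
          refine Finset.sum_congr rfl fun i _ => Finset.sum_congr rfl fun j _ => by ring
        simp only [this]
        have hI : ∀ i j, Integrable (fun ω => c i * c j *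
          (f (combL k n (u i) ω) * f (combL k n (u j) ω))) P := fun i j =>
          ((hL i).integrable_mul (hL j)).const_mul _
        rw [integral_finsetSum _ fun i _ => integrable_finsetSum _ fun j _ => hI i j]
        simp only [dotProduct, Matrix.mulVec, Matrix.of_apply, Finset.mul_sum]
        refine Finset.sum_congr rfl fun i _ => ?_
        rw [integral_finsetSum _ fun j _ => hI i j]
        refine Finset.sum_congr rfl fun j _ => ?_
        rw [integral_const_mul, hent]; simp; ring
      rw [this]
      exact integral_nonneg fun ω => sq_nonneg _
  · intro i
    simp only [Matrix.of_apply, hent, ← h1]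
    rw [← (comb_mp k n (u i) (hun i)).map_eq, integral_map (by fun_prop)
      (by fun_prop)]
    simp [sq, hP]

noncomputable def chiA {d : ℕ} (A : Finset (Fin d)) (z : Fin d → ℤˣ) : ℝ := ∏ i ∈ A, ((z i : ℤ) : ℝ)

noncomputable def meanZ {d : ℕ} (z : Fin d → ℤˣ) : ℝ := (∑ i, ((z i : ℤ) : ℝ)) / d

lemma chiA_mul {d : ℕ} (A : Finset (Fin d)) (z w : Fin d → ℤˣ) :
    chiA A (z * w) = chiA A z * chiA A w := by
  simp [chiA, Finset.prod_mul_distrib]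

lemma unit_sq_real (e : ℤˣ) : ((e : ℤ) : ℝ) * ((e : ℤ) : ℝ) = 1 := by
  rcases Int.units_eq_one_or e with h | h <;> simp [h]

lemma coef_nonneg (ψ : ℝ → ℝ) (h : IsCCP ψ) {d : ℕ} (hd : 0 < d) (A : Finset (Fin d)) :
    0 ≤ ∑ z : Fin d → ℤˣ, ψ (meanZ z) * chiA A z := by
  have hd' : (d : ℝ) ≠ 0 := by positivity
  let e := Fintype.equivFin (Fin d → ℤˣ)
  let N := Fintype.card (Fin d → ℤˣ)
  let V : Matrix (Fin d) (Fin N) ℝ := Matrix.of fun i a => (((e.symm a) i : ℤ) : ℝ)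
  let S : Matrix (Fin N) (Fin N) ℝ := Matrix.of fun a b => meanZ (e.symm a * e.symm b)
  have hSV : S = (1 / (d : ℝ)) • (V.conjTranspose * V) := by
    ext a b
    simp [S, V, meanZ, Matrix.mul_apply, div_eq_inv_mul]
  have hS : IsCorrMat S := by
    constructor
    · rw [hSV]
      exact (Matrix.posSemidef_conjTranspose_mul_self V).smul (by positivity)
    · intro a
      simp only [S, Matrix.of_apply, meanZ, Pi.mul_apply, Units.val_mul, Int.cast_mul, unit_sq_real]
      simp [hd']
  have hP := (h N S hS).1.dotProduct_mulVec_nonneg (fun a => chiA A (e.symm a))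
  have : (star fun a => chiA A (e.symm a)) ⬝ᵥ
      (Matrix.of fun i j => ψ (S i j)).mulVec (fun a => chiA A (e.symm a))
      = (Fintype.card (Fin d → ℤˣ) : ℝ) * ∑ z : Fin d → ℤˣ, ψ (meanZ z) * chiA A z := by
    simp only [dotProduct, Matrix.mulVec, Matrix.of_apply, S, Pi.star_apply, star_trivial]
    rw [e.symm.sum_comp (fun z => chiA A z *
      ∑ b, ψ (meanZ (z * e.symm b)) * chiA A (e.symm b))]
    trans ∑ _x : Fin d → ℤˣ, ∑ z : Fin d → ℤˣ, ψ (meanZ z) * chiA A z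
    swap
    · rw [Finset.sum_const, nsmul_eq_mul, Finset.card_univ]
    refine Finset.sum_congr rfl fun z _ => ?_
    rw [e.symm.sum_comp (fun w => ψ (meanZ (z * w)) * chiA A w), Finset.mul_sum]
    rw [← Equiv.sum_comp (Equiv.mulLeft z) (fun w => ψ (meanZ w) * chiA A w)]
    refine Finset.sum_congr rfl fun w _ => ?_
    simp only [Equiv.coe_mulLeft, chiA_mul]; ring
  rw [this] at hP
  have hN : (0 : ℝ) < Fintype.card (Fin d → ℤˣ) := by exact_mod_cast Fintype.card_pos
  exact nonneg_of_mul_nonneg_right hP hN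

/-- coefficients of the Bernstein polynomial -/
noncomputable def bcoef (ψ : ℝ → ℝ) (d j : ℕ) : ℝ :=
  ∑ A ∈ (Finset.univ : Finset (Finset (Fin d))) with A.card = j,
    (∑ z : Fin d → ℤˣ, ψ (meanZ z) * chiA A z) / 2 ^ d

noncomputable def bpoly (ψ : ℝ → ℝ) (d : ℕ) (t : ℝ) : ℝ :=
  ∑ z : Fin d → ℤˣ, ψ (meanZ z) * ∏ i, ((1 + t * ((z i : ℤ) : ℝ)) / 2)

lemma bcoef_nonneg (ψ : ℝ → ℝ) (h : IsCCP ψ) {d : ℕ} (hd : 0 < d) (j : ℕ) :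
    0 ≤ bcoef ψ d j :=
  Finset.sum_nonneg fun A _ => div_nonneg (coef_nonneg ψ h hd A) (by positivity)

lemma bcoef_zero (ψ : ℝ → ℝ) {d j : ℕ} (hj : d < j) : bcoef ψ d j = 0 := by
  unfold bcoef
  apply Finset.sum_eq_zero
  intro A hA
  have h1 := (Finset.mem_filter.mp hA).2
  have h2 := Finset.card_le_univ A
  simp at h2
  omega

lemma bpoly_eq (ψ : ℝ → ℝ) (d : ℕ) (t : ℝ) :
    bpoly ψ d t = ∑ j ∈ Finset.range (d + 1), bcoef ψ d j * t ^ j := by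
  have h1 : ∀ z : Fin d → ℤˣ, ∏ i, ((1 + t * ((z i : ℤ) : ℝ)) / 2)
      = ∑ A : Finset (Fin d), t ^ A.card * chiA A z / 2 ^ d := by
    intro z
    rw [Finset.prod_div_distrib, Finset.prod_one_add, Finset.powerset_univ, Finset.sum_div]
    refine Finset.sum_congr rfl fun A _ => ?_
    simp [chiA, Finset.prod_mul_distrib]
  unfold bpoly bcoef
  simp only [h1]
  have h2 : ∀ A ∈ (Finset.univ : Finset (Finset (Fin d))), A.card ∈ Finset.range (d + 1) := by
    intro A _
    have h2 := Finset.card_le_univ A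
    simp at h2
    simp; omega
  simp only [Finset.mul_sum]
  rw [Finset.sum_comm, ← Finset.sum_fiberwise_of_maps_to h2]
  refine Finset.sum_congr rfl fun j _ => ?_
  rw [Finset.sum_mul]
  refine Finset.sum_congr rfl fun A hA => ?_
  rw [(Finset.mem_filter.mp hA).2, Finset.sum_div, Finset.sum_mul]
  refine Finset.sum_congr rfl fun z _ => ?_
  ring

noncomputable def signEquiv (d : ℕ) : Finset (Fin d) ≃ (Fin d → ℤˣ) where
  toFun s i := if i ∈ s then 1 else -1
  invFun z := Finset.univ.filter fun i => z i = 1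
  left_inv s := by
    ext i
    by_cases h : i ∈ s <;> simp [h]
  right_inv z := by
    ext i
    rcases Int.units_eq_one_or (z i) with h | h <;> simp [h]

lemma bpoly_eq_bernstein (ψ : ℝ → ℝ) {d : ℕ} (hd : 0 < d) (t : ℝ) :
    bpoly ψ d t = ∑ m ∈ Finset.range (d + 1), (d.choose m : ℝ) *
      (((1 + t) / 2) ^ m * ((1 - t) / 2) ^ (d - m) * ψ (2 * (m / d) - 1)) := by
  have hd' : (d : ℝ) ≠ 0 := by positivity
  unfold bpoly
  rw [← (signEquiv d).sum_comp]
  have := Finset.sum_powerset_apply_card (α := ℝ) (fun m =>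
      (((1 + t) / 2) ^ m * ((1 - t) / 2) ^ (d - m) * ψ (2 * (m / d) - 1)))
      (x := (Finset.univ : Finset (Fin d)))
  simp only [Finset.powerset_univ, Finset.card_univ, Fintype.card_fin, nsmul_eq_mul] at this
  rw [← this]
  refine Finset.sum_congr rfl fun s _ => ?_
  have e1 : ∏ i, ((1 + t * (((signEquiv d s) i : ℤ) : ℝ)) / 2)
      = ((1 + t) / 2) ^ s.card * ((1 - t) / 2) ^ (d - s.card) := by
    have : ∀ i, ((1 + t * (((signEquiv d s) i : ℤ) : ℝ)) / 2)
        = if i ∈ s then (1 + t) / 2 else (1 - t) / 2 := by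
      intro i
      by_cases h : i ∈ s <;> simp [signEquiv, h, sub_eq_add_neg]
    simp only [this]
    rw [Finset.prod_ite]
    simp [Finset.filter_not, Finset.card_sdiff, div_pow]
  have e2 : meanZ (signEquiv d s) = 2 * (s.card / d) - 1 := by
    unfold meanZ
    have : ∀ i, ((((signEquiv d s) i : ℤ) : ℝ)) = 2 * (if i ∈ s then 1 else 0) - 1 := by
      intro i
      by_cases h : i ∈ s <;> simp [signEquiv, h]
      norm_num
    simp only [this]
    rw [Finset.sum_sub_distrib, ← Finset.mul_sum]
    simp
    field_simp
  rw [e1, e2]; ring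

lemma bpoly_tendsto (ψ : ℝ → ℝ) (hcont : ContinuousOn ψ (Set.Icc (-1) 1)) (t : ℝ)
    (ht : t ∈ Set.Icc (-1 : ℝ) 1) :
    Filter.Tendsto (fun d => bpoly ψ d t) Filter.atTop (nhds (ψ t)) := by
  let F : C(unitInterval, ℝ) := ⟨fun x => ψ (2 * (x : ℝ) - 1), by
    apply hcont.comp_continuous (by fun_prop)
    intro x
    constructor <;> linarith [x.2.1, x.2.2]⟩
  let x : unitInterval := ⟨(1 + t) / 2, by constructor <;> linarith [ht.1, ht.2]⟩
  have h := bernsteinApproximation_uniform F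
  have h2 := ((continuous_eval_const (F := C(unitInterval, ℝ)) x).tendsto F).comp h
  have h3 : F x = ψ t := by
    simp only [F, x, ContinuousMap.coe_mk]; congr 1; ring
  rw [h3] at h2
  refine h2.congr' ?_
  filter_upwards [Filter.eventually_gt_atTop 0] with d hd
  simp only [Function.comp_apply]
  rw [bpoly_eq_bernstein ψ hd, bernsteinApproximation.apply]
  rw [← Fin.sum_univ_eq_sum_range (fun m => (d.choose m : ℝ) *
      (((1 + t) / 2) ^ m * ((1 - t) / 2) ^ (d - m) * ψ (2 * (m / d) - 1)))]
  refine Finset.sum_congr rfl fun m _ => ?_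
  rw [bernstein_apply]
  have : (1 : ℝ) - (1 + t) / 2 = (1 - t) / 2 := by ring
  simp only [F, x, ContinuousMap.coe_mk, bernstein.z, smul_eq_mul, this]
  ring

theorem schoenberg (ψ : ℝ → ℝ) (hcont : ContinuousOn ψ (Set.Icc (-1) 1)) (h : IsCCP ψ) :
    ∃ a : ℕ → ℝ, (∀ n, 0 ≤ a n) ∧ Summable a ∧
      ∀ t ∈ Set.Icc (-1 : ℝ) 1, HasSum (fun n => a n * t ^ n) (ψ t) := by
  have h1 : ψ 1 = 1 := by
    have := (h 1 1 ⟨Matrix.PosSemidef.one, by simp⟩).2 0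
    simpa using this
  -- sum of the coefficients
  have hsum : ∀ d, ∑ j ∈ Finset.range (d + 2), bcoef ψ (d + 1) j = 1 := by
    intro d
    have e := bpoly_eq ψ (d + 1) 1
    simp only [one_pow, mul_one] at e
    rw [← e, bpoly_eq_bernstein ψ (Nat.succ_pos d), Finset.sum_range_succ, Finset.sum_eq_zero]
    · have : ((d + 1 : ℕ) : ℝ) ≠ 0 := by positivity
      simp only [Nat.choose_self, div_self this]
      norm_num [h1]
    · intro m hm
      have : d + 1 - m ≠ 0 := by have := Finset.mem_range.mp hm; omega
      simp [this]
  have hpart : ∀ d N, ∑ j ∈ Finset.range N, bcoef ψ (d + 1) j ≤ 1 := by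
    intro d N
    have hnn := fun j => bcoef_nonneg ψ h (Nat.succ_pos d) j
    rcases le_total N (d + 2) with hN | hN
    · rw [← hsum d]
      exact Finset.sum_le_sum_of_subset_of_nonneg (Finset.range_mono hN) fun j _ _ => hnn j
    · rw [← hsum d]
      apply le_of_eq
      symm
      apply Finset.sum_subset (Finset.range_mono hN)
      intro j _ hj
      exact bcoef_zero ψ (by simp at hj; omega)
  have hle : ∀ d j, bcoef ψ (d + 1) j ∈ Set.Icc (0 : ℝ) 1 := by
    intro d j
    refine ⟨bcoef_nonneg ψ h (Nat.succ_pos d) j, le_trans ?_ (hpart d (j + 1))⟩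
    exact Finset.single_le_sum (f := fun j => bcoef ψ (d + 1) j)
      (fun i _ => bcoef_nonneg ψ h (Nat.succ_pos d) i) (by simp)
  have hK : IsCompact (Set.univ.pi fun _ : ℕ => Set.Icc (0 : ℝ) 1) :=
    isCompact_univ_pi fun _ => isCompact_Icc
  obtain ⟨a, haK, φ, hφ, hlim⟩ := hK.tendsto_subseq (x := fun d j => bcoef ψ (d + 1) j)
    (fun d => fun j _ => hle d j)
  have ha0 : ∀ n, 0 ≤ a n := fun n => (haK n trivial).1
  rw [tendsto_pi_nhds] at hlim
  have haS : Summable a := by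
    apply summable_of_sum_range_le (c := 1) ha0
    intro N
    refine le_of_tendsto (tendsto_finsetSum (Finset.range N) fun j _ => hlim j) ?_
    exact Filter.Eventually.of_forall fun d => hpart _ N
  have hin : Set.EqOn (fun t => ∑' n, a n * t ^ n) ψ (Set.Ioo (-1) 1) := by
    intro t ht
    have hta : |t| < 1 := abs_lt.mpr ht
    have l1 : Filter.Tendsto (fun d => ∑' j, bcoef ψ (φ d + 1) j * t ^ j) Filter.atTop
        (nhds (∑' n, a n * t ^ n)) := by
      apply tendsto_tsum_of_dominated_convergence (bound := fun j => |t| ^ j)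
        (summable_geometric_of_lt_one (abs_nonneg t) hta)
      · intro j
        exact (hlim j).mul_const _
      · refine Filter.Eventually.of_forall fun d j => ?_
        rw [norm_mul, norm_pow, Real.norm_eq_abs, Real.norm_eq_abs,
          abs_of_nonneg (hle (φ d) j).1]
        exact mul_le_of_le_one_left (by positivity) (hle (φ d) j).2
    have l2 : Filter.Tendsto (fun d => bpoly ψ (φ d + 1) t) Filter.atTop (nhds (ψ t)) :=
      (bpoly_tendsto ψ hcont t ⟨ht.1.le, ht.2.le⟩).comp
        ((Filter.tendsto_add_atTop_nat 1).comp hφ.tendsto_atTop)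
    refine tendsto_nhds_unique l1 (l2.congr fun d => ?_)
    rw [bpoly_eq, tsum_eq_sum]
    intro j hj
    rw [bcoef_zero ψ (by simp at hj; omega), zero_mul]
  have hbd : ∀ n, ∀ t ∈ Set.Icc (-1 : ℝ) 1, ‖a n * t ^ n‖ ≤ a n := by
    intro n t ht
    rw [norm_mul, norm_pow, Real.norm_eq_abs, Real.norm_eq_abs, abs_of_nonneg (ha0 n)]
    exact mul_le_of_le_one_right (ha0 n) (pow_le_one₀ (abs_nonneg t) (abs_le.mpr ht))
  have hct : ContinuousOn (fun t => ∑' n, a n * t ^ n) (Set.Icc (-1) 1) :=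
    continuousOn_tsum (fun n => by fun_prop) haS hbd
  have hall : Set.EqOn (fun t => ∑' n, a n * t ^ n) ψ (Set.Icc (-1) 1) := by
    apply hin.of_subset_closure hct hcont Set.Ioo_subset_Icc_self
    rw [closure_Ioo (by norm_num)]
  refine ⟨a, ha0, haS, fun t ht => ?_⟩
  rw [← hall ht]
  exact (Summable.of_norm_bounded haS fun n => hbd n t ht).hasSum

open Polynomial in
noncomputable def He : ℕ → Polynomial ℝ
  | 0 => 1
  | n + 1 => X * He n - derivative (He n)

open Polynomial in
lemma He_derivative (n : ℕ) : derivative (He (n + 1)) = C ((n : ℝ) + 1) * He n := by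
  induction n with
  | zero => simp [He]
  | succ n ih =>
    have : He (n + 2) = X * He (n + 1) - C ((n : ℝ) + 1) * He n := by
      rw [← ih]; rfl
    rw [this]
    simp only [derivative_sub, derivative_mul, derivative_X, derivative_C, ih]
    have h2 : He (n + 1) = X * He n - derivative (He n) := rfl
    push_cast
    rw [map_add (C : ℝ →+* ℝ[X]) ((n : ℝ) + 1) 1, map_one]
    rw [h2]
    ring

open Polynomial in
lemma He_rec (n : ℕ) : He (n + 2) = X * He (n + 1) - C ((n : ℝ) + 1) * He n := by
  rw [← He_derivative]; rfl

lemma He_neg (n : ℕ) (x : ℝ) : (He n).eval (-x) = (-1) ^ n * (He n).eval x := by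
  induction n using Nat.twoStepInduction with
  | zero => simp [He]
  | one => simp [He]
  | more n h1 h2 =>
    rw [He_rec]; simp only [Polynomial.eval_sub, Polynomial.eval_mul, Polynomial.eval_X,
      Polynomial.eval_C, h1, h2]; ring

lemma poly_integrable (p : Polynomial ℝ) :
    Integrable (fun x => p.eval x) (gaussianReal 0 1) := by
  induction p using Polynomial.induction_on' with
  | add p q hp hq => simp only [Polynomial.eval_add]; exact hp.add hq
  | monomial n a =>
    simp only [Polynomial.eval_monomial]
    apply Integrable.const_mul
    have h := (memLp_id_gaussianReal (μ := 0) (v := 1) (n : NNReal)).integrable_norm_pow'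
    have : Integrable (fun x : ℝ => ‖x ^ n‖) (gaussianReal 0 1) := by
      simpa [norm_pow] using h
    exact (integrable_norm_iff (by fun_prop)).mp this

lemma poly_integrable_vol (p : Polynomial ℝ) :
    Integrable (fun x => gaussianPDFReal 0 1 x * p.eval x) := by
  have h := poly_integrable p
  rw [gaussianReal_of_var_ne_zero _ one_ne_zero,
    integrable_withDensity_iff_integrable_smul' (measurable_gaussianPDF _ _)
    (ae_of_all _ fun _ => gaussianPDF_lt_top)] at h
  simpa using h

lemma gauss_ibp (p : Polynomial ℝ) :
    ∫ x, x * p.eval x ∂(gaussianReal 0 1) = ∫ x, p.derivative.eval x ∂(gaussianReal 0 1) := by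
  have hd : ∀ x : ℝ, HasDerivAt (fun x => gaussianPDFReal 0 1 x * p.eval x)
      (gaussianPDFReal 0 1 x * (p.derivative - Polynomial.X * p).eval x) x := by
    intro x
    have h1 : HasDerivAt (fun x => gaussianPDFReal 0 1 x) (gaussianPDFReal 0 1 x * (-x)) x := by
      simp only [gaussianPDFReal_def]
      have h0 : HasDerivAt (fun x : ℝ => -(x - 0) ^ 2 / (2 * ((1 : NNReal) : ℝ))) (-x) x := by
        have := (((hasDerivAt_id x).sub_const 0).pow 2).neg.div_const (2 * ((1 : NNReal) : ℝ))
        exact HasDerivAt.congr_deriv this (by simp; ring)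
      exact HasDerivAt.congr_deriv (h0.exp.const_mul _) (by ring)
    exact HasDerivAt.congr_deriv (h1.mul (p.hasDerivAt x)) (by simp; ring)
  have h := integral_eq_zero_of_hasDerivAt_of_integrable hd (poly_integrable_vol _)
    (poly_integrable_vol _)
  have e := integral_gaussianReal_eq_integral_smul (μ := 0) (v := 1)
    (f := fun x => (p.derivative - Polynomial.X * p).eval x) one_ne_zero
  simp only [smul_eq_mul] at e
  rw [h] at e
  simp only [Polynomial.eval_sub] at e
  rw [integral_sub (poly_integrable _) (poly_integrable _)] at e
  simp only [Polynomial.eval_mul, Polynomial.eval_X] at e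
  linarith

lemma He_step (n : ℕ) (p : Polynomial ℝ) :
    ∫ x, (He (n + 1)).eval x * p.eval x ∂(gaussianReal 0 1)
      = ∫ x, (He n).eval x * p.derivative.eval x ∂(gaussianReal 0 1) := by
  have h := gauss_ibp (He n * p)
  have e : ∀ x : ℝ, (He (n + 1)).eval x * p.eval x
      = (Polynomial.X * (He n * p)).eval x - ((He n).derivative * p).eval x := by
    intro x; simp [He]; ring
  simp only [e]
  rw [integral_sub (poly_integrable _) (poly_integrable _)]
  have e2 : ∀ x : ℝ, (Polynomial.derivative (He n * p)).eval x
      = ((He n).derivative * p).eval x + (He n * p.derivative).eval x := by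
    intro x; simp
  simp only [e2] at h
  rw [integral_add (poly_integrable _) (poly_integrable _)] at h
  simp only [Polynomial.eval_mul, Polynomial.eval_X] at h ⊢
  linarith

lemma He_orth (n m : ℕ) : ∫ x, (He n).eval x * (He m).eval x ∂(gaussianReal 0 1)
    = if n = m then (n.factorial : ℝ) else 0 := by
  induction n generalizing m with
  | zero =>
    cases m with
    | zero => simp [He]
    | succ m =>
      have h := He_step m 1
      simp at h
      have h0 : He 0 = 1 := rfl
      simp [h0, h]
  | succ n ih =>
    rw [He_step]
    cases m with
    | zero => simp [He]
    | succ m =>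
      rw [He_derivative]
      have : ∀ x : ℝ, (He n).eval x * (Polynomial.C ((m : ℝ) + 1) * He m).eval x
        = ((m : ℝ) + 1) * ((He n).eval x * (He m).eval x) := by intro x; simp; ring
      simp only [this]
      rw [integral_const_mul, ih]
      by_cases h : n = m
      · subst h; simp [Nat.factorial_succ]
      · simp [h]

lemma He_OU (ρ σ : ℝ) (hσ : σ ^ 2 = 1 - ρ ^ 2) (x : ℝ) (n : ℕ) :
    ∫ y, (He n).eval (ρ * x + σ * y) ∂(gaussianReal 0 1) = ρ ^ n * (He n).eval x := by
  let q : Polynomial ℝ := Polynomial.C (ρ * x) + Polynomial.C σ * Polynomial.X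
  have hq : ∀ (p : Polynomial ℝ) (y : ℝ), p.eval (ρ * x + σ * y) = (p.comp q).eval y := by
    intro p y; simp [q]
  induction n using Nat.twoStepInduction with
  | zero => simp [He]
  | one =>
    simp only [He, Polynomial.derivative_one, sub_zero, mul_one, Polynomial.eval_X, pow_one]
    rw [integral_add (by fun_prop) ?_]
    · have h0 : ∫ a : ℝ, σ * a ∂(gaussianReal 0 1) = 0 := by
        rw [MeasureTheory.integral_const_mul, integral_id_gaussianReal, mul_zero]
      simp [h0]
    · exact ((poly_integrable Polynomial.X).const_mul σ).congr (by simp)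
  | more n h1 h2 =>
    have hd : ((He (n + 1)).comp q).derivative
        = Polynomial.C (((n : ℝ) + 1) * σ) * (He n).comp q := by
      rw [Polynomial.derivative_comp, He_derivative]
      simp [q]; ring
    have hi := gauss_ibp ((He (n + 1)).comp q)
    rw [hd] at hi
    have e : ∀ y : ℝ, (He (n + 2)).eval (ρ * x + σ * y)
        = (Polynomial.C (ρ * x) * (He (n + 1)).comp q).eval y
          + (Polynomial.C σ * (Polynomial.X * (He (n + 1)).comp q)).eval y
          - (Polynomial.C ((n : ℝ) + 1) * (He n).comp q).eval y := by
      intro y; rw [He_rec]; simp [q]; ring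
    simp only [e]
    rw [integral_sub (by simp only [← Polynomial.eval_add]; exact poly_integrable _)
      (poly_integrable _), integral_add (poly_integrable _) (poly_integrable _)]
    simp only [hq] at h1 h2
    simp only [Polynomial.eval_mul, Polynomial.eval_C, Polynomial.eval_X, integral_const_mul,
      h1, h2] at hi ⊢
    rw [hi, He_rec]
    simp only [Polynomial.eval_sub, Polynomial.eval_mul, Polynomial.eval_C, Polynomial.eval_X]
    linear_combination ((n : ℝ) + 1) * ρ ^ n * (He n).eval x * hσ

noncomputable def heK {k : ℕ} (i0 : Fin k) (n : ℕ) (x : Fin k → ℝ) : ℝ :=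
  (He n).eval (x i0) / Real.sqrt n.factorial

lemma eval_mp {k : ℕ} (i0 : Fin k) :
    MeasurePreserving (Function.eval i0) (gaussK k) (gaussianReal 0 1) :=
  measurePreserving_eval (fun _ => gaussianReal 0 1) i0

lemma integral_eval {k : ℕ} (i0 : Fin k) (g : ℝ → ℝ) (hg : Continuous g) :
    ∫ x, g (x i0) ∂(gaussK k) = ∫ x, g x ∂(gaussianReal 0 1) := by
  rw [← (eval_mp i0).map_eq, integral_map (eval_mp i0).measurable.aemeasurable
    hg.aestronglyMeasurable]

lemma heK_memLp {k : ℕ} (i0 : Fin k) (n : ℕ) : MemLp (heK i0 n) 2 (gaussK k) := by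
  have h : MemLp (fun x => (He n).eval x / Real.sqrt n.factorial) 2 (gaussianReal 0 1) := by
    rw [memLp_two_iff_integrable_sq (by fun_prop)]
    have := poly_integrable ((He n * Polynomial.C (Real.sqrt n.factorial)⁻¹) ^ 2)
    simpa [div_eq_mul_inv] using this
  exact h.comp_measurePreserving (eval_mp i0)

lemma sqrt_fac (n : ℕ) : Real.sqrt n.factorial * Real.sqrt n.factorial = n.factorial :=
  Real.mul_self_sqrt (by positivity)

lemma heK_orth {k : ℕ} (i0 : Fin k) (n m : ℕ) :
    ∫ x, heK i0 n x * heK i0 m x ∂(gaussK k) = if n = m then 1 else 0 := by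
  unfold heK
  rw [integral_eval i0 (fun t => (He n).eval t / Real.sqrt n.factorial *
    ((He m).eval t / Real.sqrt m.factorial)) (by fun_prop)]
  simp only [div_mul_div_comm]
  rw [integral_div, He_orth]
  split_ifs with h
  · subst h
    rw [sqrt_fac, div_self (by positivity)]
  · simp

lemma heK_hfg {k : ℕ} (i0 : Fin k) (n m : ℕ) (ρ : ℝ) (hρ : ρ ∈ Set.Icc (-1 : ℝ) 1) :
    hfg (heK i0 n) (heK i0 m) ρ = if n = m then ρ ^ n else 0 := by
  have hs : Real.sqrt (1 - ρ ^ 2) ^ 2 = 1 - ρ ^ 2 := by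
    apply Real.sq_sqrt; nlinarith [hρ.1, hρ.2]
  have hin : ∀ x : Fin k → ℝ, ∫ y, heK i0 n x * heK i0 m
      (fun i => ρ * x i + Real.sqrt (1 - ρ ^ 2) * y i) ∂(gaussK k)
      = ρ ^ m * (heK i0 n x * heK i0 m x) := by
    intro x
    rw [integral_const_mul]
    unfold heK
    rw [integral_eval i0 (fun t => (He m).eval (ρ * x i0 + Real.sqrt (1 - ρ ^ 2) * t) /
      Real.sqrt m.factorial) (by fun_prop), integral_div, He_OU ρ _ hs]
    ring
  unfold hfg
  simp only [hin]
  rw [integral_const_mul, heK_orth]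
  split_ifs with h
  · rw [h, mul_one]
  · simp

noncomputable def opA (k : ℕ) : Lp ℝ 2 (gaussK k) →ₗᵢ[ℝ] Lp ℝ 2 ((gaussK k).prod (gaussK k)) :=
  Lp.compMeasurePreservingₗᵢ ℝ Prod.fst measurePreserving_fst

noncomputable def opB (k : ℕ) (ρ : ℝ) (hρ : ρ ∈ Set.Icc (-1 : ℝ) 1) :
    Lp ℝ 2 (gaussK k) →ₗᵢ[ℝ] Lp ℝ 2 ((gaussK k).prod (gaussK k)) :=
  Lp.compMeasurePreservingₗᵢ ℝ (mixL k ρ) (mix_mp k ρ hρ)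

lemma inner_toLp {α : Type*} [MeasurableSpace α] {μ : Measure α} {f g : α → ℝ} {F G : Lp ℝ 2 μ}
    (hf : F =ᵐ[μ] f) (hg : G =ᵐ[μ] g) : inner ℝ F G = ∫ x, f x * g x ∂μ := by
  rw [L2.inner_def]
  apply integral_congr_ae
  filter_upwards [hf, hg] with x h1 h2
  simp [h1, h2, mul_comm]

lemma hfg_eq_inner {k : ℕ} {f g : (Fin k → ℝ) → ℝ} (hf : MemLp f 2 (gaussK k))
    (hg : MemLp g 2 (gaussK k)) (ρ : ℝ) (hρ : ρ ∈ Set.Icc (-1 : ℝ) 1) :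
    hfg f g ρ = inner ℝ (opA k hf.toLp) (opB k ρ hρ hg.toLp) := by
  rw [hfg_eq_prod k f g ρ hρ hf hg]
  symm
  refine inner_toLp (f := fun z => f z.1) (g := fun z => g (mixL k ρ z)) ?_ ?_
  · have h1 := Lp.coeFn_compMeasurePreserving (hf.toLp f)
      (measurePreserving_fst (μ := gaussK k) (ν := gaussK k))
    have h2 := (measurePreserving_fst (μ := gaussK k) (ν := gaussK k)).quasiMeasurePreserving.ae_eq_comp
      hf.coeFn_toLp
    exact h1.trans h2
  · have h1 := Lp.coeFn_compMeasurePreserving (hg.toLp g) (mix_mp k ρ hρ)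
    have h2 := (mix_mp k ρ hρ).quasiMeasurePreserving.ae_eq_comp hg.coeFn_toLp
    exact h1.trans h2

lemma neg_mp (k : ℕ) :
    MeasurePreserving (fun x : Fin k → ℝ => -x) (gaussK k) (gaussK k) := by
  refine ⟨by fun_prop, ?_⟩
  have h := (mix_mp k (-1) (by norm_num)).map_eq
  have e : (mixL k (-1) : (Fin k → ℝ) × (Fin k → ℝ) → (Fin k → ℝ))
      = (fun x => -x) ∘ Prod.fst := by
    ext ⟨x, y⟩ i
    simp [mixL_apply]
  rw [e, ← Measure.map_map (by fun_prop) (by fun_prop), measurePreserving_fst.map_eq] at h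
  exact h

lemma hfg_one {k : ℕ} (f : (Fin k → ℝ) → ℝ) : hfg f f 1 = ∫ x, (f x) ^ 2 ∂(gaussK k) := by
  simp [hfg, sq]

theorem rep_of_series (k : ℕ) (hk : 1 ≤ k) (a : ℕ → ℝ) (ha : ∀ n, 0 ≤ a n) (hs : Summable a)
    (hev : ∀ n, Even n → a n = 0) :
    ∃ f : (Fin k → ℝ) → ℝ, Measurable f ∧ (∀ x, f (-x) = - f x) ∧
      ∀ ρ ∈ Set.Icc (-1 : ℝ) 1, HasSum (fun n => a n * ρ ^ n) (hfg f f ρ) := by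
  let i0 : Fin k := ⟨0, hk⟩
  let E : ℕ → Lp ℝ 2 (gaussK k) := fun n => (heK_memLp i0 n).toLp
  have hE : Orthonormal ℝ E := by
    rw [orthonormal_iff_ite]
    intro n m
    rw [inner_toLp (heK_memLp i0 n).coeFn_toLp (heK_memLp i0 m).coeFn_toLp, heK_orth]
  have hsum : Summable fun n => Real.sqrt (a n) • E n := by
    have := (hE.orthogonalFamily.summable_iff_norm_sq_summable (fun n => Real.sqrt (a n))).mpr
      (by simpa [Real.sq_sqrt (ha _)] using hs)
    simpa using this
  obtain ⟨F, hF⟩ := hsum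
  -- oddness
  let Cn := Lp.compMeasurePreservingₗᵢ (E := ℝ) (p := 2) ℝ (fun x : Fin k → ℝ => -x) (neg_mp k)
  have hCE : ∀ n, Odd n → Cn (E n) = - E n := by
    intro n hn
    apply Lp.ext
    have h1 := Lp.coeFn_compMeasurePreserving (E n) (neg_mp k)
    have h2 := (neg_mp k).quasiMeasurePreserving.ae_eq_comp (heK_memLp i0 n).coeFn_toLp
    have h3 := (heK_memLp i0 n).coeFn_toLp
    refine (h1.trans h2).trans ?_
    refine Filter.EventuallyEq.trans ?_ (Lp.coeFn_neg (E n)).symm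
    filter_upwards [h3] with x hx
    simp only [Function.comp_apply, Pi.neg_apply]
    rw [show (E n : (Fin k → ℝ) → ℝ) x = heK i0 n x from hx]
    simp [heK, He_neg, hn.neg_one_pow, neg_div]
  have hCF : Cn F = -F := by
    have h1 : HasSum (fun n => Cn (Real.sqrt (a n) • E n)) (Cn F) :=
      hF.mapL Cn.toContinuousLinearMap
    refine h1.unique (hF.neg.congr_fun ?_)
    intro n
    rcases Nat.even_or_odd n with h | h
    · simp [hev n h]
    · rw [map_smul, hCE n h, smul_neg]
  let F0 : (Fin k → ℝ) → ℝ := (Lp.aestronglyMeasurable F).mk F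
  have hF0m : Measurable F0 := (Lp.aestronglyMeasurable F).stronglyMeasurable_mk.measurable
  have hF0 : F =ᵐ[gaussK k] F0 := (Lp.aestronglyMeasurable F).ae_eq_mk
  let f : (Fin k → ℝ) → ℝ := fun x => (F0 x - F0 (-x)) / 2
  have hfF : f =ᵐ[gaussK k] F := by
    have h1 := Lp.coeFn_compMeasurePreserving F (neg_mp k)
    have h2 := (neg_mp k).quasiMeasurePreserving.ae_eq_comp hF0
    have h3 : (Cn F : (Fin k → ℝ) → ℝ) =ᵐ[gaussK k] -F := by
      rw [hCF]; exact Lp.coeFn_neg F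
    have h4 := (h1.symm.trans h3)
    filter_upwards [h2, h4, hF0] with x a1 a2 a3
    simp only [Function.comp_apply, Pi.neg_apply] at a1 a2
    simp only [f]
    rw [← a3, ← a1, a2]; ring
  have hfL : MemLp f 2 (gaussK k) := (memLp_congr_ae hfF).mpr (Lp.memLp F)
  have hfT : hfL.toLp = F := by
    apply Lp.ext
    exact hfL.coeFn_toLp.trans hfF
  refine ⟨f, ?_, ?_, ?_⟩
  · exact (hF0m.sub (hF0m.comp measurable_neg)).div_const 2
  · intro x; simp only [f, neg_neg]; ring
  · intro ρ hρ
    rw [hfg_eq_inner hfL hfL ρ hρ, hfT]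
    have hAB : ∀ n m, inner ℝ (opA k (E n)) (opB k ρ hρ (E m)) = if n = m then ρ ^ n else 0 := by
      intro n m
      rw [← heK_hfg i0 n m ρ hρ, hfg_eq_inner (heK_memLp i0 n) (heK_memLp i0 m) ρ hρ]
    have hA : HasSum (fun n => opA k (Real.sqrt (a n) • E n)) (opA k F) :=
      hF.mapL (opA k).toContinuousLinearMap
    have hB : HasSum (fun n => opB k ρ hρ (Real.sqrt (a n) • E n)) (opB k ρ hρ F) :=
      hF.mapL (opB k ρ hρ).toContinuousLinearMap
    have hn : ∀ n, inner ℝ (opA k (Real.sqrt (a n) • E n)) (opB k ρ hρ F) = a n * ρ ^ n := by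
      intro n
      have h1 := hB.mapL (innerSL ℝ (opA k (Real.sqrt (a n) • E n)))
      refine h1.unique ?_
      have := hasSum_ite_eq n (a n * ρ ^ n)
      refine this.congr_fun ?_
      intro m
      rw [innerSL_apply_apply, map_smul (opA k), map_smul (opB k ρ hρ), real_inner_smul_left,
        real_inner_smul_right, hAB]
      by_cases h : n = m
      · subst h
        simp only [if_true]
        rw [← mul_assoc, Real.mul_self_sqrt (ha n)]
      · have h' : ¬ m = n := fun e => h e.symm
        simp [h, h']
    have h2 := hA.mapL ((innerSL ℝ) (opB k ρ hρ F))
    simp only [innerSL_apply_apply] at h2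
    rw [real_inner_comm] at h2
    refine h2.congr_fun fun n => ?_
    rw [real_inner_comm, hn]

theorem odd_ccp_representation (k : ℕ) (hk : 1 ≤ k) (ψ : ℝ → ℝ)
    (hcont : ContinuousOn ψ (Set.Icc (-1) 1))
    (hodd : ∀ ρ ∈ Set.Icc (-1 : ℝ) 1, ψ (-ρ) = - ψ ρ) :
    IsCCP ψ ↔ ∃ f : (Fin k → ℝ) → ℝ, Measurable f ∧ (∀ x, f (-x) = - f x) ∧
      (∫ x, (f x) ^ 2 ∂(gaussK k)) = 1 ∧
      ∀ ρ ∈ Set.Icc (-1 : ℝ) 1, ψ ρ = hfg f f ρ := by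
  constructor
  · intro h
    have h1 : ψ 1 = 1 := by
      have := (h 1 1 ⟨Matrix.PosSemidef.one, by simp⟩).2 0
      simpa using this
    obtain ⟨a, ha, hs, hψ⟩ := schoenberg ψ hcont h
    let b : ℕ → ℝ := fun n => if Even n then 0 else a n
    have hb : ∀ n, 0 ≤ b n := by
      intro n; simp only [b]; split_ifs; exacts [le_rfl, ha n]
    have hbs : Summable b := by
      refine Summable.of_nonneg_of_le hb (fun n => ?_) hs
      simp only [b]; split_ifs; exacts [ha n, le_rfl]
    obtain ⟨f, hfm, hfo, hf⟩ := rep_of_series k hk b hb hbs (by intro n hn; simp [b, hn])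
    have hrep : ∀ ρ ∈ Set.Icc (-1 : ℝ) 1, ψ ρ = hfg f f ρ := by
      intro ρ hρ
      have hρ' : -ρ ∈ Set.Icc (-1 : ℝ) 1 := ⟨by linarith [hρ.2], by linarith [hρ.1]⟩
      have e1 := ((hψ ρ hρ).sub (hψ (-ρ) hρ')).div_const 2
      rw [hodd ρ hρ] at e1
      have e2 : (ψ ρ - -ψ ρ) / 2 = ψ ρ := by ring
      rw [e2] at e1
      refine e1.unique ((hf ρ hρ).congr_fun ?_)
      intro n
      rcases Nat.even_or_odd n with hn | hn
      · simp [b, hn, hn.neg_pow]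
      · have : ¬ Even n := Nat.not_even_iff_odd.mpr hn
        simp only [b, this, if_false, hn.neg_pow]; ring
    refine ⟨f, hfm, hfo, ?_, hrep⟩
    rw [← hfg_one, ← hrep 1 (by norm_num), h1]
  · rintro ⟨f, hfm, _, hf1, hf⟩
    exact ccp_of_rep k ψ f hfm hf1 hf
end

section
/- Schoenberg-type characterisation of continuous CCP functions: a continuous function h : [-1,1] → ℝ is completely correlation preserving if and only if there exists a sequence (a_n)_{n≥0} of nonnegative reals with ∑_{n=0}^∞ a_n = 1 such that h(x) = ∑_{n=0}^∞ a_n x^n for every x ∈ [-1,1] (equivalently, h is the probability generating function ρ ↦ E[ρ^X] of an ℕ-valued random variable X). -/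
open scoped BigOperators

open Filter Topology

lemma ccp_quad {h : ℝ → ℝ} (hc : IsCCP h) {ι : Type} [Fintype ι]
    (S : Matrix ι ι ℝ) (hS : S.PosSemidef) (h1 : ∀ i, S i i = 1) (v : ι → ℝ) :
    0 ≤ ∑ i, ∑ j, v i * v j * h (S i j) := by
  classical
  let e := Fintype.equivFin ι
  have := hc (Fintype.card ι) (S.submatrix e.symm e.symm) ⟨hS.submatrix _, fun i => h1 _⟩
  have h2 := this.1.submatrix e
  have h3 := h2.dotProduct_mulVec_nonneg v
  refine h3.trans_eq ?_
  simp only [dotProduct, Matrix.mulVec, Finset.mul_sum]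
  refine Finset.sum_congr rfl fun i _ => Finset.sum_congr rfl fun j _ => ?_
  simp
  ring

/-- sign vectors of the hypercube -/
noncomputable def sgv {n : ℕ} (T : Finset (Fin n)) (i : Fin n) : ℝ := if i ∈ T then -1 else 1

lemma sgv_mul {n : ℕ} (T U : Finset (Fin n)) (i : Fin n) :
    sgv T i * sgv U i = sgv (symmDiff T U) i := by
  unfold sgv
  by_cases h1 : i ∈ T <;> by_cases h2 : i ∈ U <;> simp [Finset.mem_symmDiff, h1, h2]

lemma sgv_sq {n : ℕ} (T : Finset (Fin n)) (i : Fin n) :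
    sgv T i * sgv T i = 1 := by
  unfold sgv
  by_cases h1 : i ∈ T <;> simp [h1]

lemma sgv_sum {n : ℕ} (T : Finset (Fin n)) : ∑ i, sgv T i = n - 2 * T.card := by
  have : ∀ i, sgv T i = 1 - 2 * (if i ∈ T then (1:ℝ) else 0) := by
    intro i; unfold sgv; split_ifs <;> norm_num
  simp [this, Finset.sum_sub_distrib]
  ring

lemma coeff_nonneg {h : ℝ → ℝ} (hc : IsCCP h) {n : ℕ} (hn : n ≠ 0) (S : Finset (Fin n)) :
    0 ≤ ∑ V : Finset (Fin n), (∏ i ∈ S, sgv V i) * h ((∑ i, sgv V i) / n) := by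
  have hn' : (n : ℝ) ≠ 0 := by exact_mod_cast hn
  let A : Matrix (Finset (Fin n)) (Fin n) ℝ := Matrix.of fun T i => sgv T i
  let M : Matrix (Finset (Fin n)) (Finset (Fin n)) ℝ := (n : ℝ)⁻¹ • (A * A.conjTranspose)
  have hM : M.PosSemidef :=
    (Matrix.posSemidef_self_mul_conjTranspose A).smul (by positivity)
  have hMa : ∀ T U, M T U = (∑ i, sgv (symmDiff T U) i) / n := by
    intro T U
    simp [M, A, Matrix.mul_apply, sgv_mul]
    ring
  have hM1 : ∀ T, M T T = 1 := by
    intro T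
    rw [hMa, sgv_sum]; simp [hn']
  have key := ccp_quad hc M hM hM1 (fun T => ∏ i ∈ S, sgv T i)
  have : ∀ T, ∑ U, (∏ i ∈ S, sgv T i) * (∏ i ∈ S, sgv U i) * h (M T U)
      = ∑ V : Finset (Fin n), (∏ i ∈ S, sgv V i) * h ((∑ i, sgv V i) / n) := by
    intro T
    let e : Equiv.Perm (Finset (Fin n)) :=
      Function.Involutive.toPerm (fun U => symmDiff T U) (fun U => symmDiff_symmDiff_cancel_left T U)
    rw [← Equiv.sum_comp e]
    refine Finset.sum_congr rfl fun U _ => ?_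
    have : e U = symmDiff T U := rfl
    rw [this, ← Finset.prod_mul_distrib, hMa]
    simp only [sgv_mul, symmDiff_symmDiff_cancel_left]
  simp only [this] at key
  rw [Finset.sum_const, nsmul_eq_mul] at key
  refine nonneg_of_mul_nonneg_right key ?_
  simp

lemma weight_eq {n : ℕ} (T : Finset (Fin n)) (ρ : ℝ) :
    ((1 - ρ) / 2) ^ T.card * (1 - (1 - ρ) / 2) ^ (n - T.card)
      = ((1:ℝ) / 2) ^ n * ∑ S : Finset (Fin n), ρ ^ S.card * ∏ i ∈ S, sgv T i := by
  have h1 : ∏ i, (1 + ρ * sgv T i) = ∑ S : Finset (Fin n), ρ ^ S.card * ∏ i ∈ S, sgv T i := by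
    rw [Finset.prod_one_add, Finset.powerset_univ]
    refine Finset.sum_congr rfl fun S _ => ?_
    rw [Finset.prod_mul_distrib, Finset.prod_const]
  rw [← h1]
  have h2 : ((1:ℝ) / 2) ^ n = ∏ i : Fin n, (1 / 2 : ℝ) := by simp
  rw [h2, ← Finset.prod_mul_distrib]
  have h3 : ∀ i, (1 / 2 : ℝ) * (1 + ρ * sgv T i)
      = if i ∈ T then (1 - ρ) / 2 else (1 - (1 - ρ) / 2) := by
    intro i; unfold sgv; split_ifs <;> ring
  simp only [h3]
  rw [Finset.prod_ite]
  simp only [Finset.prod_const]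
  congr 2
  · congr 1; ext; simp
  · have : (Finset.univ.filter fun i => i ∉ T) = Tᶜ := by ext; simp
    rw [this, Finset.card_compl, Fintype.card_fin]

lemma bern_expand {h : ℝ → ℝ} (hc : IsCCP h) {n : ℕ} (hn : n ≠ 0) :
    ∃ b : ℕ → ℝ, (∀ k, 0 ≤ b k) ∧ ∀ ρ : ℝ, HasSum (fun k => b k * ρ ^ k)
      (∑ k : Fin (n + 1), ((n.choose k : ℝ) * ((1 - ρ) / 2) ^ (k : ℕ)
        * (1 - (1 - ρ) / 2) ^ (n - (k : ℕ))) * h (1 - 2 * ((k : ℝ) / n))) := by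
  have hn' : (n : ℝ) ≠ 0 := by exact_mod_cast hn
  let c : Finset (Fin n) → ℝ := fun S => ((1:ℝ) / 2) ^ n *
    ∑ V : Finset (Fin n), (∏ i ∈ S, sgv V i) * h ((∑ i, sgv V i) / n)
  have hc0 : ∀ S, 0 ≤ c S := fun S => mul_nonneg (by positivity) (coeff_nonneg hc hn S)
  refine ⟨fun k => ∑ S, if k = S.card then c S else 0, fun k => ?_, fun ρ => ?_⟩
  · refine Finset.sum_nonneg fun S _ => ?_
    split_ifs
    · exact hc0 S
    · exact le_rfl
  · have e1 : (∑ k : Fin (n + 1), ((n.choose k : ℝ) * ((1 - ρ) / 2) ^ (k : ℕ)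
        * (1 - (1 - ρ) / 2) ^ (n - (k : ℕ))) * h (1 - 2 * ((k : ℝ) / n)))
        = ∑ S, c S * ρ ^ S.card := by
      rw [Fin.sum_univ_eq_sum_range (fun k : ℕ => ((n.choose k : ℝ) * ((1 - ρ) / 2) ^ (k : ℕ)
        * (1 - (1 - ρ) / 2) ^ (n - (k : ℕ))) * h (1 - 2 * ((k : ℝ) / n))) (n + 1)]
      have := Finset.sum_powerset_apply_card (fun k : ℕ => ((1 - ρ) / 2) ^ (k : ℕ)
        * (1 - (1 - ρ) / 2) ^ (n - (k : ℕ)) * h (1 - 2 * ((k : ℝ) / n)))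
        (x := (Finset.univ : Finset (Fin n)))
      rw [Finset.card_univ, Fintype.card_fin, Finset.powerset_univ] at this
      have e2 : ∀ T : Finset (Fin n), 1 - 2 * ((T.card : ℝ) / n) = (∑ i, sgv T i) / n := by
        intro T; rw [sgv_sum]; field_simp
      simp only [nsmul_eq_mul] at this
      simp only [mul_assoc] at this ⊢
      rw [← this]
      simp only [← mul_assoc]
      simp only [weight_eq, e2, c]
      simp only [Finset.mul_sum, Finset.sum_mul]
      rw [Finset.sum_comm]
      refine Finset.sum_congr rfl fun i _ => Finset.sum_congr rfl fun j _ => ?_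
      ring
    rw [e1]
    simp only [Finset.sum_mul]
    refine hasSum_sum fun S _ => ?_
    have := hasSum_single (f := fun k => (if k = S.card then c S else 0) * ρ ^ k) S.card
      (fun k hk => by simp [hk])
    simpa using this

lemma ccp_forward (h : ℝ → ℝ) (hcont : ContinuousOn h (Set.Icc (-1) 1)) (hc : IsCCP h) :
    ∃ a : ℕ → ℝ, (∀ n, 0 ≤ a n) ∧ HasSum a 1 ∧
      ∀ x ∈ Set.Icc (-1 : ℝ) 1, HasSum (fun n => a n * x ^ n) (h x) := by
  have h1 : h 1 = 1 := by
    have := (hc 1 1 ⟨Matrix.PosSemidef.one, fun i => by simp⟩).2 0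
    simpa using this
  let f : C(unitInterval, ℝ) := ⟨fun t => h (1 - 2 * (t : ℝ)), by
    refine hcont.comp_continuous (by fun_prop) fun t => ?_
    have := t.2.1
    have := t.2.2
    constructor <;> linarith⟩
  have hlim := bernsteinApproximation_uniform f
  choose b hb0 hbs using fun n : ℕ => bern_expand hc (Nat.succ_ne_zero n)
  let p : ℕ → ℝ → ℝ := fun n ρ => ∑' k, b n k * ρ ^ k
  have hp : ∀ ρ ∈ Set.Icc (-1 : ℝ) 1, Tendsto (fun n => p n ρ) atTop (𝓝 (h ρ)) := by
    intro ρ hρ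
    let t : unitInterval := ⟨(1 - ρ) / 2, by constructor <;> linarith [hρ.1, hρ.2]⟩
    have hl : Tendsto (fun n => bernsteinApproximation n f t) atTop (𝓝 (f t)) :=
      ((ContinuousEvalConst.continuous_eval_const t).tendsto f).comp hlim
    have hl2 := hl.comp (tendsto_add_atTop_nat 1)
    have hft : f t = h ρ := by
      change h (1 - 2 * ((1 - ρ) / 2)) = h ρ
      congr 1; ring
    rw [hft] at hl2
    refine hl2.congr fun n => ?_
    rw [Function.comp_apply, bernsteinApproximation.apply]
    refine Eq.trans ?_ (hbs n ρ).tsum_eq.symm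
    refine Finset.sum_congr rfl fun k _ => ?_
    rw [bernstein_apply]
    rfl
  have hp1 : ∀ n, HasSum (b n) 1 := by
    intro n
    have := hbs n 1
    simp only [one_pow, mul_one] at this
    convert this using 1
    rw [Finset.sum_eq_single 0]
    · simp [h1]
    · intro k _ hk
      have : (k : ℕ) ≠ 0 := fun h => hk (Fin.ext h)
      simp [this]
    · simp
  have hb1 : ∀ n k, b n k ≤ 1 := fun n k => le_hasSum (hp1 n) k fun j _ => hb0 n j
  let F : Ultrafilter ℕ := hyperfilter ℕ
  have hF : (F : Filter ℕ) ≤ atTop := by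
    rw [← Nat.cofinite_eq_atTop]; exact hyperfilter_le_cofinite
  have hex : ∀ k, ∃ x ∈ Set.Icc (0 : ℝ) 1, Tendsto (fun n => b n k) F (𝓝 x) := by
    intro k
    obtain ⟨x, hx, hle⟩ := (isCompact_Icc (a := (0 : ℝ)) (b := 1)).ultrafilter_le_nhds
      (F.map fun n => b n k) (by
        simp only [le_principal_iff, Ultrafilter.mem_coe, Ultrafilter.mem_map]
        exact Filter.univ_mem' fun n => ⟨hb0 n k, hb1 n k⟩)
    exact ⟨x, hx, hle⟩
  choose a ha hab using hex
  have hpart : ∀ s : Finset ℕ, ∑ k ∈ s, a k ≤ 1 := by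
    intro s
    refine le_of_tendsto (tendsto_finsetSum s fun k _ => hab k) (Filter.Eventually.of_forall fun n => ?_)
    exact sum_le_hasSum s (fun j _ => hb0 n j) (hp1 n)
  have hsum : Summable a := summable_of_sum_le (fun k => (ha k).1) hpart
  have hsx : ∀ x ∈ Set.Icc (-1 : ℝ) 1, ∀ k, ‖a k * x ^ k‖ ≤ a k := by
    intro x hx k
    rw [norm_mul, norm_pow, Real.norm_of_nonneg (ha k).1]
    exact mul_le_of_le_one_right (ha k).1 (pow_le_one₀ (norm_nonneg _) (abs_le.2 hx))
  have hG : ContinuousOn (fun x : ℝ => ∑' k, a k * x ^ k) (Set.Icc (-1) 1) :=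
    continuousOn_tsum (fun k => by fun_prop) hsum (fun k x hx => hsx x hx k)
  have heq : Set.EqOn h (fun x : ℝ => ∑' k, a k * x ^ k) (Set.Ioo (-1) 1) := by
    intro x hx
    have hx' : ‖x‖ < 1 := abs_lt.2 hx
    have t1 : Tendsto (fun n => p n x) F (𝓝 (h x)) := (hp x (Set.Ioo_subset_Icc_self hx)).mono_left hF
    have t2 : Tendsto (fun n => p n x) F (𝓝 (∑' k, a k * x ^ k)) := by
      refine tendsto_tsum_of_dominated_convergence (bound := fun k => ‖x‖ ^ k)
        (summable_geometric_of_lt_one (norm_nonneg _) hx') (fun k => (hab k).mul_const _)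
        (Filter.Eventually.of_forall fun n k => ?_)
      rw [norm_mul, norm_pow, Real.norm_of_nonneg (hb0 n k)]
      exact mul_le_of_le_one_left (by positivity) (hb1 n k)
    exact tendsto_nhds_unique t1 t2
  have heq2 : Set.EqOn h (fun x : ℝ => ∑' k, a k * x ^ k) (Set.Icc (-1) 1) :=
    heq.of_subset_closure hcont hG Set.Ioo_subset_Icc_self (by
      rw [closure_Ioo (by norm_num)])
  have hfin : ∀ x ∈ Set.Icc (-1 : ℝ) 1, HasSum (fun n => a n * x ^ n) (h x) := by
    intro x hx
    rw [heq2 hx]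
    exact (Summable.of_norm_bounded hsum (hsx x hx)).hasSum
  refine ⟨a, fun k => (ha k).1, ?_, hfin⟩
  have := hfin 1 (by constructor <;> norm_num)
  simpa [h1] using this

lemma corr_entry {n : ℕ} {S : Matrix (Fin n) (Fin n) ℝ} (hS : IsCorrMat S) (i j : Fin n) :
    S i j ∈ Set.Icc (-1 : ℝ) 1 := by
  have hd := (hS.1.submatrix ![i, j]).det_nonneg
  have hsym : S j i = S i j := by simpa using hS.1.1.apply i j
  rw [Matrix.det_fin_two] at hd
  simp [hS.2, hsym] at hd
  constructor <;> nlinarith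

lemma pow_psd {n : ℕ} {S : Matrix (Fin n) (Fin n) ℝ} (hS : S.PosSemidef) (k : ℕ) :
    (Matrix.of fun i j => S i j ^ k).PosSemidef := by
  induction k with
  | zero =>
    have := Matrix.posSemidef_vecMulVec_self_star (fun _ : Fin n => (1 : ℝ))
    convert this using 1
    ext i j
    simp [Matrix.vecMulVec_apply]
  | succ k ih =>
    have e : (Matrix.of fun i j => S i j ^ (k + 1))
        = (Matrix.of fun i j => S i j ^ k).hadamard S := by
      ext i j
      simp [pow_succ]
    rw [e]
    exact ih.hadamard hS

lemma ccp_backward (h : ℝ → ℝ) (a : ℕ → ℝ) (ha : ∀ n, 0 ≤ a n) (hs : HasSum a 1)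
    (hx : ∀ x ∈ Set.Icc (-1 : ℝ) 1, HasSum (fun n => a n * x ^ n) (h x)) : IsCCP h := by
  intro n S hS
  refine ⟨?_, fun i => ?_⟩
  · refine Matrix.PosSemidef.of_dotProduct_mulVec_nonneg ?_ fun v => ?_
    · ext i j
      have hsym : S j i = S i j := by simpa using hS.1.1.apply i j
      simp [hsym]
    · have hsum : HasSum (fun k => a k * (star v ⬝ᵥ ((Matrix.of fun i j => S i j ^ k).mulVec v)))
          (star v ⬝ᵥ ((Matrix.of fun i j => h (S i j)).mulVec v)) := by
        simp only [dotProduct, Matrix.mulVec, Finset.mul_sum]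
        refine hasSum_sum fun i _ => hasSum_sum fun j _ => ?_
        have := ((hx _ (corr_entry hS i j)).mul_right (v j)).mul_left (star v i)
        refine this.congr_fun ?_
        intro k
        simp
        ring
      exact hsum.nonneg fun k => mul_nonneg (ha k) ((pow_psd hS.1 k).dotProduct_mulVec_nonneg v)
  · simp only [Matrix.of_apply, hS.2]
    have := hx 1 (by constructor <;> norm_num)
    simp only [one_pow, mul_one] at this
    exact this.unique hs

theorem ccp_schoenberg_characterisation (h : ℝ → ℝ)
    (hcont : ContinuousOn h (Set.Icc (-1) 1)) :
    IsCCP h ↔ ∃ a : ℕ → ℝ, (∀ n, 0 ≤ a n) ∧ HasSum a 1 ∧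
      ∀ x ∈ Set.Icc (-1 : ℝ) 1, HasSum (fun n => a n * x ^ n) (h x) := by
  exact ⟨ccp_forward h hcont, fun ⟨a, ha, hs, hx⟩ => ccp_backward h a ha hs hx⟩
end

section
/- Schwarz-lemma estimate for odd CCP functions: let k ≥ 1 and let f : ℝ^k → ℝ be a measurable odd function with ∫ f² dγ_k = 1, and set h := h_{f,f} on [-1,1]. If h(r) ≠ r for some r ∈ (0,1), then h(ρ) < ρ for all ρ ∈ (0,1), h(τ) > τ for all τ ∈ (-1,0), and h is differentiable at 0 with 0 ≤ h'(0) < 1. -/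
open scoped BigOperators
open MeasureTheory ProbabilityTheory

namespace OddCCP

instance (k : ℕ) : IsProbabilityMeasure (gaussK k) := by unfold gaussK; infer_instance

/-- the exponential functions -/
noncomputable def ex {k : ℕ} (ξ : Fin k → ℝ) (x : Fin k → ℝ) : ℝ := Real.exp (∑ i, ξ i * x i)

lemma ex_cont {k : ℕ} (ξ : Fin k → ℝ) : Continuous (ex ξ) := by unfold ex; fun_prop

lemma ex_mul {k : ℕ} (ξ η x : Fin k → ℝ) : ex ξ x * ex η x = ex (ξ + η) x := by
  simp [ex, ← Real.exp_add, ← Finset.sum_add_distrib, add_mul]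

lemma ex_prod {k : ℕ} (ξ x : Fin k → ℝ) : ex ξ x = ∏ i, Real.exp (ξ i * x i) := by
  simp [ex, Real.exp_sum]

lemma ex_integrable {k : ℕ} (ξ : Fin k → ℝ) : Integrable (ex ξ) (gaussK k) := by
  have : ex ξ = fun x => ∏ i, Real.exp (ξ i * x i) := funext (ex_prod ξ)
  rw [this]
  exact Integrable.fintype_prod (f := fun i (v : ℝ) => Real.exp (ξ i * v))
    (fun i => integrable_exp_mul_gaussianReal _)

lemma ex_integral {k : ℕ} (ξ : Fin k → ℝ) :
    ∫ x, ex ξ x ∂(gaussK k) = Real.exp (∑ i, ξ i ^ 2 / 2) := by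
  simp_rw [ex_prod, gaussK]
  rw [integral_fintype_prod_eq_prod (fun i (v : ℝ) => Real.exp (ξ i * v)), Real.exp_sum]
  refine Finset.prod_congr rfl fun i _ => ?_
  have := mgf_gaussianReal (p := gaussianReal 0 1) (X := id) (μ := 0) (v := 1) (by simp) (ξ i)
  simpa [mgf] using this

lemma ex_memLp {k : ℕ} (ξ : Fin k → ℝ) : MemLp (ex ξ) 2 (gaussK k) := by
  rw [memLp_two_iff_integrable_sq (ex_cont ξ).aestronglyMeasurable]
  simp_rw [sq, ex_mul]
  exact ex_integrable _

lemma ext_of_ex {k : ℕ} (μ ν : Measure (Fin k → ℝ)) [IsFiniteMeasure μ] [IsFiniteMeasure ν]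
    (h1 : ∀ ξ, Integrable (ex ξ) μ)
    (h : ∀ ξ, ∫ x, ex ξ x ∂μ = ∫ x, ex ξ x ∂ν) : μ = ν := by
  apply Measure.ext_of_charFunDual
  ext L
  have hL : ∀ (t : ℝ) (x : Fin k → ℝ),
      Real.exp (t * L x) = ex (fun i => t * L (Pi.single i 1)) x := by
    intro t x
    have : L x = ∑ i, L (Pi.single i 1) * x i := by
      conv_lhs => rw [pi_eq_sum_univ' x]
      rw [map_sum]
      refine Finset.sum_congr rfl fun i _ => ?_
      rw [map_smul, smul_eq_mul, mul_comm]
    rw [this, ex, Finset.mul_sum]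
    simp [mul_assoc]
  have hm : mgf (fun x => L x) μ = mgf (fun x => L x) ν := by
    ext t
    simp only [mgf, hL, h]
  have hz : μ = 0 ↔ ν = 0 := by
    have := congrFun hm 0
    simp only [mgf_zero', measureReal_def] at this
    rw [ENNReal.toReal_eq_toReal_iff' (measure_ne_top μ _) (measure_ne_top ν _)] at this
    rw [← Measure.measure_univ_eq_zero, ← Measure.measure_univ_eq_zero, this]
  have hs : integrableExpSet (fun x => L x) μ = Set.univ := by
    ext t
    simp only [integrableExpSet, Set.mem_ofPred_eq, Set.mem_univ, hL, h1]
  have := eqOn_complexMGF_of_mgf' hm hz (x := Complex.I) (by simp [hs])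
  rw [charFunDual_apply, charFunDual_apply]
  simpa [complexMGF, mul_comm] using this

/-- the noise map -/
noncomputable def nm {k : ℕ} (ρ : ℝ) (p : (Fin k → ℝ) × (Fin k → ℝ)) : Fin k → ℝ :=
  fun i => ρ * p.1 i + Real.sqrt (1 - ρ ^ 2) * p.2 i

lemma nm_cont {k : ℕ} (ρ : ℝ) : Continuous (nm (k := k) ρ) := by unfold nm; fun_prop

lemma ex_nm {k : ℕ} (ρ : ℝ) (ξ : Fin k → ℝ) (p) :
    ex ξ (nm ρ p) = ex (ρ • ξ) p.1 * ex (Real.sqrt (1 - ρ ^ 2) • ξ) p.2 := by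
  simp only [ex, nm, ← Real.exp_add, ← Finset.sum_add_distrib, Pi.smul_apply, smul_eq_mul]
  congr 1
  refine Finset.sum_congr rfl fun i _ => ?_
  ring

lemma key_int {k : ℕ} (ρ : ℝ) (hρ : |ρ| ≤ 1) (ξ η : Fin k → ℝ) :
    ∫ p, ex ξ p.1 * ex η (nm ρ p) ∂((gaussK k).prod (gaussK k)) =
      Real.exp (∑ i, ξ i ^ 2 / 2) * Real.exp (∑ i, η i ^ 2 / 2) *
        Real.exp (ρ * ∑ i, ξ i * η i) := by
  simp_rw [ex_nm, ← mul_assoc, ex_mul]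
  rw [integral_prod_mul, ex_integral, ex_integral, ← Real.exp_add, ← Real.exp_add,
    ← Real.exp_add, Finset.mul_sum, ← Finset.sum_add_distrib, ← Finset.sum_add_distrib,
    ← Finset.sum_add_distrib]
  congr 1
  refine Finset.sum_congr rfl fun i _ => ?_
  have : Real.sqrt (1 - ρ ^ 2) ^ 2 = 1 - ρ ^ 2 := by
    apply Real.sq_sqrt
    have := (sq_le_one_iff_abs_le_one ρ).2 hρ
    linarith
  simp only [Pi.add_apply, Pi.smul_apply, smul_eq_mul, mul_pow, this]
  ring

lemma nm_mp {k : ℕ} (ρ : ℝ) (hρ : |ρ| ≤ 1) :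
    MeasurePreserving (nm (k := k) ρ) ((gaussK k).prod (gaussK k)) (gaussK k) := by
  refine ⟨(nm_cont ρ).measurable, ?_⟩
  have : IsProbabilityMeasure (Measure.map (nm (k := k) ρ) ((gaussK k).prod (gaussK k))) :=
    Measure.isProbabilityMeasure_map (nm_cont ρ).measurable.aemeasurable
  symm
  apply ext_of_ex
  · exact ex_integrable
  · intro ξ
    rw [integral_map (nm_cont ρ).measurable.aemeasurable (ex_cont ξ).aestronglyMeasurable]
    have := key_int ρ hρ 0 ξ
    simp only [ex, Pi.zero_apply, zero_mul, Finset.sum_const_zero, Real.exp_zero, one_mul] at this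
    rw [ex_integral]
    simp only [ex, this]
    simp

lemma fst_mp {k : ℕ} :
    MeasurePreserving Prod.fst ((gaussK k).prod (gaussK k)) (gaussK k) :=
  measurePreserving_fst

lemma int_mul {k : ℕ} {f g : (Fin k → ℝ) → ℝ} (hf : MemLp f 2 (gaussK k))
    (hg : MemLp g 2 (gaussK k)) {ρ : ℝ} (hρ : |ρ| ≤ 1) :
    Integrable (fun p => f p.1 * g (nm ρ p)) ((gaussK k).prod (gaussK k)) :=
  (hf.comp_measurePreserving fst_mp).integrable_mul (hg.comp_measurePreserving (nm_mp ρ hρ))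

lemma hfg_eq {k : ℕ} {f g : (Fin k → ℝ) → ℝ} (hf : MemLp f 2 (gaussK k))
    (hg : MemLp g 2 (gaussK k)) {ρ : ℝ} (hρ : |ρ| ≤ 1) :
    hfg f g ρ = ∫ p, f p.1 * g (nm ρ p) ∂((gaussK k).prod (gaussK k)) := by
  rw [integral_prod _ (int_mul hf hg hρ)]
  rfl

lemma hfg_one {k : ℕ} (f : (Fin k → ℝ) → ℝ) :
    hfg f f 1 = ∫ x, f x ^ 2 ∂(gaussK k) := by
  simp [hfg, sq]

lemma dense {k : ℕ} {f : (Fin k → ℝ) → ℝ} (hf : MemLp f 2 (gaussK k)) {ε : ℝ} (hε : 0 < ε) :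
    ∃ c : (Fin k → ℝ) →₀ ℝ,
      ∫ x, (f x - ∑ ξ ∈ c.support, c ξ * ex ξ x) ^ 2 ∂(gaussK k) ≤ ε ^ 2 := by
  let v : (Fin k → ℝ) → Lp ℝ 2 (gaussK k) := fun ξ => (ex_memLp ξ).toLp _
  have htop : (Submodule.span ℝ (Set.range v)).topologicalClosure = ⊤ := by
    rw [Submodule.topologicalClosure_eq_top_iff, Submodule.eq_bot_iff]
    intro g hg
    rw [Submodule.mem_orthogonal] at hg
    have hg0 : ∀ ξ, ∫ x, g x * ex ξ x ∂(gaussK k) = 0 := by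
      intro ξ
      have := hg (v ξ) (Submodule.subset_span ⟨ξ, rfl⟩)
      rw [L2.inner_def] at this
      rw [← this]
      apply integral_congr_ae
      filter_upwards [(ex_memLp ξ).coeFn_toLp] with x hx
      simp [v, hx]
    have hgm : MemLp g 2 (gaussK k) := Lp.memLp g
    have hgi : Integrable g (gaussK k) := hgm.integrable (by norm_num)
    have hgs : Measurable g := (Lp.stronglyMeasurable g).measurable
    have hgn : Measurable (fun x => - g x) := hgs.neg
    have hgi' : Integrable (fun x => - g x) (gaussK k) := hgi.neg
    have := isFiniteMeasure_withDensity_ofReal hgi.2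
    have := isFiniteMeasure_withDensity_ofReal hgi'.2
    have hint : ∀ ξ, Integrable (fun x => g x * ex ξ x) (gaussK k) := fun ξ =>
      hgm.integrable_mul (ex_memLp ξ)
    have hpos : ∀ ξ, Integrable (fun x => max (g x) 0 * ex ξ x) (gaussK k) := fun ξ =>
      hgm.pos_part.integrable_mul (ex_memLp ξ)
    have hnegp : ∀ ξ, Integrable (fun x => max (-g x) 0 * ex ξ x) (gaussK k) := fun ξ =>
      hgm.neg_part.integrable_mul (ex_memLp ξ)
    have heq : (gaussK k).withDensity (fun x => ENNReal.ofReal (g x)) =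
        (gaussK k).withDensity (fun x => ENNReal.ofReal (- g x)) := by
      apply ext_of_ex
      · intro ξ
        rw [integrable_withDensity_iff hgs.ennreal_ofReal (by simp)]
        convert hpos ξ using 2 with x
        rw [ENNReal.toReal_ofReal', mul_comm]
      · intro ξ
        rw [integral_withDensity_eq_integral_toReal_smul hgs.ennreal_ofReal (by simp),
          integral_withDensity_eq_integral_toReal_smul hgn.ennreal_ofReal (by simp)]
        simp only [ENNReal.toReal_ofReal', smul_eq_mul]
        rw [← sub_eq_zero, ← integral_sub (hpos ξ) (hnegp ξ)]
        refine Eq.trans ?_ (hg0 ξ)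
        congr 1
        ext x
        rw [← sub_mul]
        congr 1
        rcases le_total (g x) 0 with h | h
        · rw [max_eq_right h, max_eq_left (by linarith)]; ring
        · rw [max_eq_left h, max_eq_right (by linarith)]; ring
    rw [withDensity_eq_iff hgs.ennreal_ofReal.aemeasurable hgn.ennreal_ofReal.aemeasurable
      hgi.lintegral_lt_top.ne] at heq
    rw [Lp.eq_zero_iff_ae_eq_zero]
    filter_upwards [heq] with x hx
    have := congrArg ENNReal.toReal hx
    simp only [ENNReal.toReal_ofReal'] at this
    rcases le_total (g x) 0 with h | h
    · rw [max_eq_right h, max_eq_left (by linarith)] at this; simp; linarith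
    · rw [max_eq_left h, max_eq_right (by linarith)] at this; simp; linarith
  have hmem : hf.toLp f ∈ (Submodule.span ℝ (Set.range v)).topologicalClosure := by
    rw [htop]; trivial
  rw [← SetLike.mem_coe, Submodule.topologicalClosure_coe, Metric.mem_closure_iff] at hmem
  obtain ⟨g, hg, hd⟩ := hmem ε hε
  rw [SetLike.mem_coe, Finsupp.mem_span_range_iff_exists_finsupp] at hg
  obtain ⟨c, hc⟩ := hg
  refine ⟨c, ?_⟩
  rw [dist_eq_norm] at hd
  have h2 : ‖hf.toLp f - g‖ ^ 2 ≤ ε ^ 2 := by gcongr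
  rw [← real_inner_self_eq_norm_sq, L2.inner_def] at h2
  refine le_trans (le_of_eq ?_) h2
  apply integral_congr_ae
  have hgx : g =ᵐ[gaussK k] fun x => ∑ ξ ∈ c.support, c ξ * ex ξ x := by
    rw [← hc, Finsupp.sum]
    refine (Lp.coeFn_finsetSum _ _).trans ?_
    have : ∀ᵐ x ∂(gaussK k), ∀ ξ ∈ c.support, (c ξ • v ξ : Lp ℝ 2 (gaussK k)) x = c ξ * ex ξ x := by
      rw [Filter.eventually_all_finset]
      intro ξ _
      filter_upwards [Lp.coeFn_smul (c ξ) (v ξ), (ex_memLp ξ).coeFn_toLp] with x h1 h2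
      rw [h1]; simp [v, h2]
    filter_upwards [this] with x hx
    rw [Finset.sum_apply]
    exact Finset.sum_congr rfl hx
  filter_upwards [hgx, hf.coeFn_toLp, Lp.coeFn_sub (hf.toLp f) g] with x h1 h2 h3
  rw [h3]
  simp [h1, h2, sq]


lemma cs {k : ℕ} {u v : (Fin k → ℝ) → ℝ} (hu : MemLp u 2 (gaussK k))
    (hv : MemLp v 2 (gaussK k)) {ρ : ℝ} (hρ : |ρ| ≤ 1) {t : ℝ} (ht : 0 < t) :
    |∫ p, u p.1 * v (nm ρ p) ∂((gaussK k).prod (gaussK k))| ≤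
      (t * ∫ x, u x ^ 2 ∂(gaussK k) + t⁻¹ * ∫ x, v x ^ 2 ∂(gaussK k)) / 2 := by
  have h1 : ∫ p, u p.1 ^ 2 ∂((gaussK k).prod (gaussK k)) = ∫ x, u x ^ 2 ∂(gaussK k) := by
    have := integral_map (μ := (gaussK k).prod (gaussK k)) (φ := Prod.fst)
      (f := fun x => u x ^ 2) fst_mp.measurable.aemeasurable
      (by rw [fst_mp.map_eq]; exact hu.integrable_sq.1)
    rw [← this, fst_mp.map_eq]
  have h2 : ∫ p, v (nm ρ p) ^ 2 ∂((gaussK k).prod (gaussK k)) = ∫ x, v x ^ 2 ∂(gaussK k) := by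
    have := integral_map (μ := (gaussK k).prod (gaussK k)) (φ := nm ρ)
      (f := fun x => v x ^ 2) (nm_mp ρ hρ).measurable.aemeasurable
      (by rw [(nm_mp ρ hρ).map_eq]; exact hv.integrable_sq.1)
    rw [← this, (nm_mp ρ hρ).map_eq]
  have i1 := (hu.comp_measurePreserving fst_mp).integrable_sq
  have i2 := (hv.comp_measurePreserving (nm_mp ρ hρ)).integrable_sq
  simp only [Function.comp_apply] at i1 i2
  rw [← h1, ← h2, ← integral_const_mul, ← integral_const_mul,
    ← integral_add (i1.const_mul _) (i2.const_mul _), ← integral_div]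
  refine (abs_integral_le_integral_abs).trans ?_
  refine integral_mono (int_mul hu hv hρ).abs
    (((i1.const_mul _).add (i2.const_mul _)).div_const _) fun p => ?_
  simp only [abs_mul]
  have := sq_nonneg (t * |u p.1| - |v (nm ρ p)|)
  rw [← sq_abs (u p.1), ← sq_abs (v (nm ρ p)), le_div_iff₀ two_pos, ← mul_le_mul_iff_right₀ ht]
  have h3 : t * (t * |u p.1| ^ 2 + t⁻¹ * |v (nm ρ p)| ^ 2) =
    t ^ 2 * |u p.1| ^ 2 + |v (nm ρ p)| ^ 2 := by field_simp
  rw [h3]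
  nlinarith

lemma approx {k : ℕ} {f g : (Fin k → ℝ) → ℝ} (hf : MemLp f 2 (gaussK k))
    (hg : MemLp g 2 (gaussK k)) (h1 : ∫ x, f x ^ 2 ∂(gaussK k) = 1) {δ : ℝ} (hδ : 0 < δ)
    (hδ1 : δ ≤ 1) (hd : ∫ x, (f x - g x) ^ 2 ∂(gaussK k) ≤ δ ^ 2) {ρ : ℝ} (hρ : |ρ| ≤ 1) :
    |hfg g g ρ - hfg f f ρ| ≤ 4 * δ := by
  have hw : MemLp (fun x => f x - g x) 2 (gaussK k) := hf.sub hg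
  have hg2 : ∫ x, g x ^ 2 ∂(gaussK k) ≤ 4 := by
    have : ∫ x, g x ^ 2 ∂(gaussK k) ≤ ∫ x, (2 * f x ^ 2 + 2 * (f x - g x) ^ 2) ∂(gaussK k) := by
      refine integral_mono hg.integrable_sq
        ((hf.integrable_sq.const_mul _).add (hw.integrable_sq.const_mul _)) fun x => ?_
      simp only []
      nlinarith [sq_nonneg (2 * f x - g x)]
    rw [integral_add (hf.integrable_sq.const_mul _) (hw.integrable_sq.const_mul _),
      integral_const_mul, integral_const_mul, h1] at this
    nlinarith
  have e : hfg f f ρ - hfg g g ρ =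
      ∫ p, f p.1 * (f (nm ρ p) - g (nm ρ p)) ∂((gaussK k).prod (gaussK k)) +
      ∫ p, (f p.1 - g p.1) * g (nm ρ p) ∂((gaussK k).prod (gaussK k)) := by
    rw [hfg_eq hf hf hρ, hfg_eq hg hg hρ, ← integral_sub (int_mul hf hf hρ) (int_mul hg hg hρ),
      ← integral_add (int_mul hf hw hρ) (int_mul hw hg hρ)]
    congr 1
    ext p
    ring
  have c1 := cs hf hw hρ hδ
  have c2 := cs hw hg hρ (inv_pos.2 hδ)
  rw [h1] at c1
  rw [inv_inv] at c2
  have h3 : δ⁻¹ * ∫ x, (f x - g x) ^ 2 ∂(gaussK k) ≤ δ := by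
    rw [inv_mul_le_iff₀ hδ]; nlinarith
  have h4 : δ * ∫ x, g x ^ 2 ∂(gaussK k) ≤ δ * 4 := by gcongr
  rw [abs_sub_comm, e]
  refine (abs_add_le _ _).trans ?_
  linarith

lemma span_series {k : ℕ} (c : (Fin k → ℝ) → ℝ) (s : Finset (Fin k → ℝ)) :
    ∃ a : ℕ → ℝ, (∀ n, 0 ≤ a n) ∧ ∀ ρ : ℝ, |ρ| ≤ 1 →
      HasSum (fun n => a n * ρ ^ n)
        (hfg (fun x => ∑ ξ ∈ s, c ξ * ex ξ x) (fun x => ∑ ξ ∈ s, c ξ * ex ξ x) ρ) := by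
  let d : (Fin k → ℝ) → ℝ := fun ξ => c ξ * Real.exp (∑ i, ξ i ^ 2 / 2)
  refine ⟨fun n => ∑ ξ ∈ s, ∑ η ∈ s, d ξ * d η * ((∑ i, ξ i * η i) ^ n / n.factorial), ?_, ?_⟩
  · intro n
    have : ∑ ξ ∈ s, ∑ η ∈ s, d ξ * d η * ((∑ i, ξ i * η i) ^ n / n.factorial) =
        (∑ w : Fin n → Fin k, (∑ ξ ∈ s, d ξ * ∏ j, ξ (w j)) ^ 2) / n.factorial := by
      simp_rw [sq, Finset.sum_mul_sum]
      symm
      rw [Finset.sum_comm, Finset.sum_div]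
      refine Finset.sum_congr rfl fun ξ _ => ?_
      rw [Finset.sum_comm, Finset.sum_div]
      refine Finset.sum_congr rfl fun η _ => ?_
      rw [← mul_div_assoc]
      congr 1
      symm
      rw [← Fin.prod_const, Finset.prod_univ_sum, Finset.mul_sum, Fintype.piFinset_univ]
      refine Finset.sum_congr rfl fun w _ => ?_
      rw [Finset.prod_mul_distrib]
      ring
    simp only [this]
    positivity
  · intro ρ hρ
    have hm : MemLp (fun x => ∑ ξ ∈ s, c ξ * ex ξ x) 2 (gaussK k) :=
      memLp_finsetSum s fun ξ _ => (ex_memLp ξ).const_mul (c ξ)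
    have : hfg (fun x => ∑ ξ ∈ s, c ξ * ex ξ x) (fun x => ∑ ξ ∈ s, c ξ * ex ξ x) ρ =
        ∑ ξ ∈ s, ∑ η ∈ s, d ξ * d η * Real.exp (ρ * ∑ i, ξ i * η i) := by
      rw [hfg_eq hm hm hρ]
      have hi : ∀ ξ η : Fin k → ℝ, Integrable (fun p => c ξ * ex ξ p.1 * (c η * ex η (nm ρ p)))
          ((gaussK k).prod (gaussK k)) := fun ξ η =>
        int_mul ((ex_memLp ξ).const_mul (c ξ)) ((ex_memLp η).const_mul (c η)) hρ
      simp_rw [Finset.sum_mul_sum]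
      rw [integral_finsetSum _ fun ξ _ => integrable_finsetSum _ fun η _ => hi ξ η]
      refine Finset.sum_congr rfl fun ξ _ => ?_
      rw [integral_finsetSum _ fun η _ => hi ξ η]
      refine Finset.sum_congr rfl fun η _ => ?_
      have e : ∀ p : (Fin k → ℝ) × (Fin k → ℝ), c ξ * ex ξ p.1 * (c η * ex η (nm ρ p)) =
        (c ξ * c η) * (ex ξ p.1 * ex η (nm ρ p)) := fun p => by ring
      simp_rw [e]
      rw [integral_const_mul, key_int ρ hρ]
      simp only [d]
      ring
    rw [this]
    simp_rw [Finset.sum_mul]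
    refine hasSum_sum fun ξ _ => hasSum_sum fun η _ => ?_
    have := (NormedSpace.expSeries_div_hasSum_exp (𝔸 := ℝ) (ρ * ∑ i, ξ i * η i)).mul_left (d ξ * d η)
    rw [← Real.exp_eq_exp_ℝ] at this
    convert! this using 2 with n
    rw [mul_pow]
    ring

lemma series {k : ℕ} {f : (Fin k → ℝ) → ℝ} (hf : MemLp f 2 (gaussK k))
    (h1 : ∫ x, f x ^ 2 ∂(gaussK k) = 1) :
    ∃ a : ℕ → ℝ, (∀ n, 0 ≤ a n) ∧ (∀ s : Finset ℕ, ∑ n ∈ s, a n ≤ 1) ∧ ∀ ρ : ℝ, |ρ| < 1 →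
      HasSum (fun n => a n * ρ ^ n) (hfg f f ρ) := by
  have hδ : ∀ m : ℕ, 0 < 1 / ((m : ℝ) + 1) := fun m => Nat.one_div_pos_of_nat
  have hδ1 : ∀ m : ℕ, 1 / ((m : ℝ) + 1) ≤ 1 := fun m => by
    rw [div_le_one (by positivity)]; linarith [(Nat.cast_nonneg m : (0 : ℝ) ≤ m)]
  have hδt : Filter.Tendsto (fun m : ℕ => 4 * (1 / ((m : ℝ) + 1))) Filter.atTop (nhds 0) := by
    simpa using (tendsto_one_div_add_atTop_nhds_zero_nat (𝕜 := ℝ)).const_mul 4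
  choose c hc using fun m : ℕ => dense hf (hδ m)
  let g : ℕ → (Fin k → ℝ) → ℝ := fun m x => ∑ ξ ∈ (c m).support, c m ξ * ex ξ x
  have hgm : ∀ m, MemLp (g m) 2 (gaussK k) := fun m =>
      memLp_finsetSum _ fun ξ _ => (ex_memLp ξ).const_mul (c m ξ)
  have happ : ∀ m (ρ : ℝ), |ρ| ≤ 1 → |hfg (g m) (g m) ρ - hfg f f ρ| ≤ 4 * (1 / ((m : ℝ) + 1)) :=
    fun m ρ hρ => approx hf (hgm m) h1 (hδ m) (hδ1 m) (hc m) hρ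
  choose A hA0 hA using fun m => span_series (c m) (c m).support
  change ∀ m (ρ : ℝ), |ρ| ≤ 1 → HasSum (fun n => A m n * ρ ^ n) (hfg (g m) (g m) ρ) at hA
  have hsum : ∀ m (s : Finset ℕ), ∑ n ∈ s, A m n ≤ 1 + 4 * (1 / ((m : ℝ) + 1)) := by
    intro m s
    have h := hA m 1 (by simp)
    have h' := happ m 1 (by simp)
    rw [hfg_one f, h1] at h'
    simp only [one_pow, mul_one] at h
    have := sum_le_hasSum s (fun n _ => hA0 m n) h
    linarith [(abs_le.1 h').2]
  have h5 : ∀ m n, A m n ≤ 5 := by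
    intro m n
    have := hsum m {n}
    rw [Finset.sum_singleton] at this
    linarith [hδ1 m]
  have hcomp : IsCompact (Set.pi Set.univ fun _ : ℕ => Set.Icc (0 : ℝ) 5) :=
    isCompact_univ_pi fun _ => isCompact_Icc
  obtain ⟨a, ha, φ, hφ, hlim⟩ := hcomp.tendsto_subseq (x := A)
    (fun m n _ => ⟨hA0 m n, h5 m n⟩)
  rw [tendsto_pi_nhds] at hlim
  refine ⟨a, fun n => (ha n trivial).1, ?_, ?_⟩
  · intro s
    have t1 : Filter.Tendsto (fun m => ∑ n ∈ s, A (φ m) n) Filter.atTop (nhds (∑ n ∈ s, a n)) :=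
      tendsto_finsetSum _ fun n _ => hlim n
    have t2 := (hδt.comp hφ.tendsto_atTop).const_add 1
    rw [add_zero] at t2
    exact le_of_tendsto_of_tendsto' t1 t2 fun m => hsum (φ m) s
  · intro ρ hρ
    have hgeo : Summable fun n : ℕ => 5 * |ρ| ^ n :=
      (summable_geometric_of_lt_one (abs_nonneg _) hρ).mul_left 5
    have hs : Summable fun n => a n * ρ ^ n := by
      refine Summable.of_norm_bounded hgeo fun n => ?_
      rw [Real.norm_eq_abs, abs_mul, abs_pow, abs_of_nonneg (ha n trivial).1]
      gcongr
      exact (ha n trivial).2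
    have t1 : Filter.Tendsto (fun m => ∑' n, A (φ m) n * ρ ^ n) Filter.atTop
        (nhds (∑' n, a n * ρ ^ n)) := by
      refine tendsto_tsum_of_dominated_convergence hgeo (fun n => (hlim n).mul_const _) ?_
      refine Filter.Eventually.of_forall fun m n => ?_
      rw [Real.norm_eq_abs, abs_mul, abs_pow, abs_of_nonneg (hA0 _ n)]
      gcongr
      exact h5 _ n
    have t2 : Filter.Tendsto (fun m => ∑' n, A (φ m) n * ρ ^ n) Filter.atTop
        (nhds (hfg f f ρ)) := by
      rw [tendsto_iff_norm_sub_tendsto_zero]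
      refine squeeze_zero (fun _ => norm_nonneg _) (fun m => ?_) (hδt.comp hφ.tendsto_atTop)
      rw [(hA (φ m) ρ hρ.le).tsum_eq]
      exact happ (φ m) ρ hρ.le
    rw [tendsto_nhds_unique t2 t1]
    exact hs.hasSum

lemma hfg_neg {k : ℕ} {f : (Fin k → ℝ) → ℝ}
    (hodd : ∀ x, f (-x) = - f x) {ρ : ℝ} : hfg f f (-ρ) = - hfg f f ρ := by
  have hmp : MeasurePreserving (fun x : Fin k → ℝ => -x) (gaussK k) (gaussK k) := by
    refine ⟨measurable_neg, ?_⟩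
    have h := (nm_mp (k := k) (-1) (by simp)).map_eq
    have e : nm (k := k) (-1) = (fun x => -x) ∘ Prod.fst := by
      ext p i; simp [nm]
    rw [e, ← Measure.map_map measurable_neg measurable_fst, fst_mp.map_eq] at h
    exact h
  have hemb : MeasurableEmbedding (fun x : Fin k → ℝ => -x) :=
    (MeasurableEquiv.neg (Fin k → ℝ)).measurableEmbedding
  unfold hfg
  rw [← hmp.integral_comp hemb, ← integral_neg]
  congr 1
  ext x
  rw [← integral_neg]
  congr 1
  ext y
  rw [hodd]
  simp

lemma final (h : ℝ → ℝ) (a : ℕ → ℝ) (ha : ∀ n, 0 ≤ a n) (hs : ∀ s : Finset ℕ, ∑ n ∈ s, a n ≤ 1)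
    (hsum : ∀ ρ : ℝ, |ρ| < 1 → HasSum (fun n => a n * ρ ^ n) (h ρ))
    (hneg : ∀ ρ, h (-ρ) = - h ρ) (r : ℝ) (hr : r ∈ Set.Ioo (0 : ℝ) 1) (hne : h r ≠ r) :
    (∀ ρ ∈ Set.Ioo (0 : ℝ) 1, h ρ < ρ) ∧
    (∀ τ ∈ Set.Ioo (-1 : ℝ) 0, h τ > τ) ∧
    ∃ L : ℝ, HasDerivAt h L 0 ∧ 0 ≤ L ∧ L < 1 := by
  have hsa : Summable a := summable_of_sum_le ha hs
  have hta : ∑' n, a n ≤ 1 := hsa.tsum_le_of_sum_le hs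
  have hodd : ∀ ρ : ℝ, |ρ| < 1 → HasSum (fun n => (if Odd n then a n else 0) * ρ ^ n) (h ρ) := by
    intro ρ hρ
    have h1 := hsum ρ hρ
    have h2 := hsum (-ρ) (by rwa [abs_neg])
    rw [hneg] at h2
    have h3 := (h1.sub h2).div_const 2
    have e : (h ρ - -h ρ) / 2 = h ρ := by ring
    rw [e] at h3
    convert! h3 using 2 with n
    · split_ifs with hn
      · rw [hn.neg_pow]; ring
      · rw [(Nat.not_odd_iff_even.1 hn).neg_pow]; ring
  have hL1 : a 1 ≤ 1 := by simpa using hs {1}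
  have hrest : HasSum (fun n => if n = 1 then 0 else a n) (∑' n, a n - a 1) := by
    have h1 := hsa.hasSum.sub (hasSum_ite_eq 1 (a 1))
    convert! h1 using 2 with n
    split_ifs with hn
    · simp [hn]
    · simp
  have hterm : ∀ ρ : ℝ, HasSum (fun n => if n = 1 then a 1 * ρ else 0) (a 1 * ρ) := fun ρ =>
    hasSum_ite_eq 1 (a 1 * ρ)
  have hlow : ∀ ρ ∈ Set.Ioo (0 : ℝ) 1, a 1 * ρ ≤ h ρ := by
    intro ρ hρ
    refine hasSum_le (fun n => ?_) (hterm ρ) (hodd ρ (abs_lt.2 ⟨by linarith [hρ.1], hρ.2⟩))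
    have := ha n
    have := hρ.1
    split_ifs with h1 h2 h3
    · simp [h1]
    · subst h1; simp at h2
    · positivity
    · simp
  have hup : ∀ ρ ∈ Set.Ioo (0 : ℝ) 1, h ρ ≤ a 1 * ρ + (1 - a 1) * ρ ^ 3 := by
    intro ρ hρ
    have h3 := (hterm ρ).add (hrest.mul_right (ρ ^ 3))
    have h0 := hρ.1
    have : h ρ ≤ a 1 * ρ + (∑' n, a n - a 1) * ρ ^ 3 := by
      refine hasSum_le (fun n => ?_) (hodd ρ (abs_lt.2 ⟨by linarith [hρ.1], hρ.2⟩)) h3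
      have hn := ha n
      by_cases h1 : n = 1
      · subst h1; simp
      · simp only [h1, if_false, zero_add]
        split_ifs with h2
        · have : 3 ≤ n := by
            obtain ⟨j, rfl⟩ := h2
            omega
          exact mul_le_mul_of_nonneg_left (pow_le_pow_of_le_one h0.le hρ.2.le this) hn
        · simp; positivity
    have h4 : 0 ≤ ρ ^ 3 := by positivity
    nlinarith
  have hL : a 1 < 1 := by
    refine lt_of_le_of_ne hL1 fun h1 => hne ?_
    have := hlow r hr
    have := hup r hr
    rw [h1] at *
    linarith
  have hlt : ∀ ρ ∈ Set.Ioo (0 : ℝ) 1, h ρ < ρ := by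
    intro ρ hρ
    have h1 := hup ρ hρ
    have h2 : ρ ^ 3 < ρ := by
      have := pow_lt_pow_right_of_lt_one₀ hρ.1 hρ.2 (show 1 < 3 by norm_num)
      simpa using this
    nlinarith
  refine ⟨hlt, ?_, a 1, ?_, ha 1, hL⟩
  · intro τ hτ
    have := hlt (-τ) ⟨by linarith [hτ.2], by linarith [hτ.1]⟩
    rw [hneg] at this
    linarith
  · have h0 : h 0 = 0 := by
      have := hneg 0
      rw [neg_zero] at this
      linarith
    have hb : ∀ ρ : ℝ, |ρ| < 1 → |h ρ - a 1 * ρ| ≤ |ρ| ^ 3 := by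
      have hp : ∀ ρ ∈ Set.Ioo (0 : ℝ) 1, |h ρ - a 1 * ρ| ≤ ρ ^ 3 := by
        intro ρ hρ
        have h1 := hup ρ hρ
        have h2 := hlow ρ hρ
        have h3 : 0 < ρ ^ 3 := pow_pos hρ.1 3
        rw [abs_le]
        constructor
        · linarith
        · nlinarith [ha 1]
      intro ρ hρ
      rcases lt_trichotomy ρ 0 with hn | hn | hn
      · rw [abs_of_neg hn] at hρ ⊢
        have := hp (-ρ) ⟨by linarith, hρ⟩
        rw [hneg] at this
        rw [← abs_neg]
        convert this using 2
        ring
      · simp [hn, h0]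
      · rw [abs_of_pos hn] at hρ ⊢
        exact hp ρ ⟨hn, hρ⟩
    rw [hasDerivAt_iff_isLittleO_nhds_zero]
    have hO : (fun x : ℝ => h (0 + x) - h 0 - x • a 1) =O[nhds 0] fun x : ℝ => x ^ 3 := by
      refine Asymptotics.IsBigO.of_bound 1 ?_
      have : ∀ᶠ x : ℝ in nhds 0, |x| < 1 := by
        have := Metric.ball_mem_nhds (0 : ℝ) one_pos
        filter_upwards [this] with x hx
        simpa using hx
      filter_upwards [this] with x hx
      have := hb x hx
      simpa [h0, mul_comm] using this
    refine hO.trans_isLittleO ?_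
    simpa using Asymptotics.isLittleO_pow_id (𝕜 := ℝ) (n := 3) (by norm_num)

end OddCCP

/-- Schwarz-lemma estimate for odd CCP functions `h = h_{f,f}`: if `h(r) ≠ r` for
some `r ∈ (0,1)`, then `h(ρ) < ρ` on `(0,1)`, `h(τ) > τ` on `(-1,0)`, and `h` is
differentiable at `0` with `0 ≤ h'(0) < 1`. -/
theorem odd_ccp_schwarz_lemma (k : ℕ) (hk : 1 ≤ k) (f : (Fin k → ℝ) → ℝ)
    (hmeas : Measurable f) (hodd : ∀ x, f (-x) = - f x)
    (hnorm : ∫ x, (f x) ^ 2 ∂(gaussK k) = 1)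
    (r : ℝ) (hr : r ∈ Set.Ioo (0 : ℝ) 1) (hne : hfg f f r ≠ r) :
    (∀ ρ ∈ Set.Ioo (0 : ℝ) 1, hfg f f ρ < ρ) ∧
    (∀ τ ∈ Set.Ioo (-1 : ℝ) 0, hfg f f τ > τ) ∧
    ∃ L : ℝ, HasDerivAt (hfg f f) L 0 ∧ 0 ≤ L ∧ L < 1 := by
  have hint : Integrable (fun x => f x ^ 2) (gaussK k) := by
    by_contra hc
    rw [integral_undef hc] at hnorm
    exact zero_ne_one hnorm
  have hf : MemLp f 2 (gaussK k) :=
    (memLp_two_iff_integrable_sq hmeas.aestronglyMeasurable).2 hint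
  obtain ⟨a, ha, hs, hsum⟩ := OddCCP.series hf hnorm
  exact OddCCP.final (hfg f f) a ha hs hsum (fun ρ => OddCCP.hfg_neg hodd) r hr hne
end
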